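/- arXiv:2308.11388 — 3 statements merged into one kernel-verified Lean document; each statement's English description precedes it below -/
import Mathlib

section
/- Let n ≥ 2 be an even integer and let u be a normal solution on ℝ^n with Q-curvature Q, where Q satisfies the s-cone condition for some s ∈ ℝ. Suppose there exist s₁ < s, C₀ > 0 and R₀ > 0 such that either Q⁺(x) ≤ C₀·|x|^{s₁} for all |x| ≥ R₀ or Q⁻(x) ≤ C₀·|x|^{s₁} for all |x| ≥ R₀ (where Q⁺ and Q⁻ are the positive and negative parts of Q). Then there exist C > 0 and R₁ > 0 such that |Q(x)|·e^{n u(x)} ≤ C·|x|^{−n} for all |x| ≥ R₁. -/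
open MeasureTheory Real Filter RealInnerProductSpace

/-- Volume of the standard unit n-sphere in ℝ^{n+1}: |Sⁿ| = 2 π^{(n+1)/2} / Γ((n+1)/2). -/
noncomputable def sphereVol (n : ℕ) : ℝ :=
  2 * Real.pi ^ ((n + 1 : ℝ) / 2) / Real.Gamma ((n + 1 : ℝ) / 2)

/-- `u` is a normal solution on ℝⁿ with Q-curvature `Q`: both are smooth, `Q·e^{nu} ∈ L¹`,
and `u(x) = (2/((n−1)!·|Sⁿ|)) ∫ log(|y|/|x−y|)·Q(y)·e^{n·u(y)} dy + C` for some constant `C`. -/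
def IsNormalSolution (n : ℕ) (u Q : EuclideanSpace ℝ (Fin n) → ℝ) : Prop :=
  ContDiff ℝ (⊤ : ℕ∞) u ∧ ContDiff ℝ (⊤ : ℕ∞) Q ∧
  Integrable (fun x => Q x * Real.exp (n * u x)) ∧
  ∃ C : ℝ, ∀ x, u x =
    (2 / ((Nat.factorial (n - 1) : ℝ) * sphereVol n)) *
      ∫ y, Real.log (‖y‖ / ‖x - y‖) * (Q y * Real.exp (n * u y)) + C

/-- The s-cone condition: `|ψ(x)| ≤ C(|x|+1)^s` globally, and along a sequence `x_i` with
`|x_i| ≥ 1`, `|x_i| → ∞`, one has `|ψ(x)| ≥ c₁|x|^s` on the balls `B_{r₀|x_i|}(x_i)`. -/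
def SCone (n : ℕ) (ψ : EuclideanSpace ℝ (Fin n) → ℝ) (s : ℝ) : Prop :=
  ∃ (C c₁ r₀ : ℝ) (xs : ℕ → EuclideanSpace ℝ (Fin n)),
    0 < C ∧ 0 < c₁ ∧ 0 < r₀ ∧ r₀ < 1 ∧
    (∀ i, 1 ≤ ‖xs i‖) ∧ Filter.Tendsto (fun i => ‖xs i‖) Filter.atTop Filter.atTop ∧
    (∀ x, |ψ x| ≤ C * (‖x‖ + 1) ^ s) ∧
    (∀ i, ∀ x ∈ Metric.ball (xs i) (r₀ * ‖xs i‖), c₁ * ‖x‖ ^ s ≤ |ψ x|)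

/-!
Put `φ = Q e^{nu}`. Outside the unit ball the logarithmic potential of `φ` is, up to a bounded
error, the sum of a radial part (the logarithmic moment of `φ` truncated at `‖x‖`, minus `log ‖x‖`
times the mass of `φ`) and a near part, the integral of `log⁺ (‖x‖ / ‖x - y‖) φ y`. The near part
has bounded average on the balls of the cone condition, so by Jensen's inequality integrability of
`φ` bounds the radial growth of `‖x‖^(n + s) e^{nu}` along the centres of these balls. Since the
truncated moment is `o(log ‖x‖)`, the mass must be at least `n + s` in the normalisation of `u`. As
`s₁ < s`, a Brezis–Merle estimate then gives the lighter of `φ⁺` and `φ⁻` a finite logarithmic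
moment; so the truncated moment is almost monotone or bounded above, and the bound on the radial
growth holds at all large radii. This leaves `|φ x| ≤ A ‖x‖^(-n) e^p`, where `p` is the near part
of the potential of the tail of `φ⁺`. The mass of that tail being small, `e^{2p}` is integrable at
the right scale by Brezis–Merle again, and inserting the bound on `φ` into the integral defining
`p` shows that `p` is bounded.
-/

namespace NormalSolution

open Module Metric Topology

section Balls

variable {E : Type*} [NormedAddCommGroup E] [MeasurableSpace E] [BorelSpace E] [NormedSpace ℝ E]
  [FiniteDimensional ℝ E] (μ : Measure E) [μ.IsAddHaarMeasure]

omit [BorelSpace E] in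
lemma measureReal_ball_pos (x : E) {r : ℝ} (hr : 0 < r) : 0 < μ.real (ball x r) :=
  ENNReal.toReal_pos (measure_ball_pos μ x hr).ne' measure_ball_lt_top.ne

lemma measureReal_ball (x : E) {r : ℝ} (hr : 0 < r) :
    μ.real (ball x r) = r ^ finrank ℝ E * μ.real (ball 0 1) := by
  rw [measureReal_def, Measure.addHaar_ball_of_pos μ x hr, ENNReal.toReal_mul,
    ENNReal.toReal_ofReal (by positivity), measureReal_def]

end Balls

section SingularKernel

variable {E : Type*} [NormedAddCommGroup E]

/-- A power-type majorant of the truncated logarithm `log⁺ (ρ / ‖z‖)` and of its square. It is the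
integrand that the tangent line form of Jensen's inequality produces from the logarithm, and it
vanishes for `ρ ≤ ‖z‖`. -/
noncomputable def singKer (ρ : ℝ) (z : E) : ℝ :=
  exp (log⁺ (ρ / ‖z‖) / 2) - 1

lemma posLog_sq_le_singKer (ρ : ℝ) (z : E) : log⁺ (ρ / ‖z‖) ^ 2 ≤ 8 * singKer ρ z := by
  have h := quadratic_le_exp_of_nonneg (div_nonneg (posLog_nonneg (x := ρ / ‖z‖)) zero_le_two)
  have := posLog_nonneg (x := ρ / ‖z‖)
  rw [singKer]
  nlinarith

lemma posLog_le_singKer (ρ : ℝ) (z : E) : log⁺ (ρ / ‖z‖) ≤ 2 * singKer ρ z := by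
  have h := add_one_le_exp (log⁺ (ρ / ‖z‖) / 2)
  rw [singKer]
  linarith

lemma singKer_nonneg (ρ : ℝ) (z : E) : 0 ≤ singKer ρ z := by
  have h := posLog_le_singKer ρ z
  have := posLog_nonneg (x := ρ / ‖z‖)
  linarith

lemma singKer_eq_zero {ρ : ℝ} (hρ : 0 ≤ ρ) {z : E} (hz : ρ ≤ ‖z‖) : singKer ρ z = 0 := by
  have h : log⁺ (ρ / ‖z‖) = 0 :=
    posLog_eq_zero_iff _ |>.2 <| by
      rw [abs_of_nonneg (by positivity)]
      exact div_le_one_of_le₀ hz (norm_nonneg z)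
  simp [singKer, h]

lemma singKer_le_rpow {ρ : ℝ} (hρ : 0 ≤ ρ) (z : E) :
    singKer ρ z ≤ ρ ^ (1 / 2 : ℝ) * ‖z‖ ^ (-(1 / 2) : ℝ) := by
  have hnn : 0 ≤ ρ ^ (1 / 2 : ℝ) * ‖z‖ ^ (-(1 / 2) : ℝ) := by positivity
  rcases le_or_gt ρ ‖z‖ with hz | hz
  · rwa [singKer_eq_zero hρ hz]
  rcases (norm_nonneg z).eq_or_lt with h0 | h0
  · simp [singKer, ← h0]
  have h1 : 1 ≤ ρ / ‖z‖ := (one_le_div h0).2 hz.le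
  have hpos : 0 < ρ / ‖z‖ := zero_lt_one.trans_le h1
  calc singKer ρ z = (ρ / ‖z‖) ^ (1 / 2 : ℝ) - 1 := by
        rw [singKer, posLog_eq_log (by rwa [abs_of_pos hpos]), rpow_def_of_pos hpos]
        ring_nf
    _ ≤ (ρ / ‖z‖) ^ (1 / 2 : ℝ) := by linarith
    _ = ρ ^ (1 / 2 : ℝ) * ‖z‖ ^ (-(1 / 2) : ℝ) := by
        rw [div_rpow hρ h0.le, rpow_neg h0.le, div_eq_mul_inv]

variable [MeasurableSpace E] [BorelSpace E]

lemma measurable_singKer (ρ : ℝ) : Measurable (singKer ρ : E → ℝ) := by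
  have := continuous_posLog.measurable
  unfold singKer
  fun_prop

variable [NormedSpace ℝ E] [FiniteDimensional ℝ E] {μ : Measure E} [μ.IsAddHaarMeasure]

lemma integrable_singKer [Nontrivial E] {ρ : ℝ} (hρ : 0 ≤ ρ) : Integrable (singKer ρ) μ := by
  have hd : 1 ≤ finrank ℝ E := finrank_pos
  have hsupp : Function.support (singKer ρ : E → ℝ) ⊆ ball 0 ρ := fun z hz => by
    by_contra h
    exact hz (singKer_eq_zero hρ (by simpa using h))
  rw [← integrableOn_iff_integrable_of_support_subset hsupp]
  refine integrableOn_ball_of_norm_le_rpow hd (C := ρ ^ (1 / 2 : ℝ)) (α := 1 / 2) ?_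
    (.of_forall fun z => ?_) (measurable_singKer ρ).aestronglyMeasurable
  · have : (1 : ℝ) ≤ finrank ℝ E := mod_cast hd
    linarith
  · rw [norm_of_nonneg (singKer_nonneg ρ z)]
    exact singKer_le_rpow hρ z

lemma integral_singKer (μ : Measure E) [μ.IsAddHaarMeasure] {ρ : ℝ} (hρ : 0 < ρ) :
    ∫ z, singKer ρ z ∂μ = ρ ^ finrank ℝ E * ∫ z, singKer 1 z ∂μ := by
  have hscale (z : E) : singKer 1 (ρ⁻¹ • z) = singKer ρ z := by
    have : 1 / (ρ⁻¹ * ‖z‖) = ρ / ‖z‖ := by rw [one_div, mul_inv, inv_inv, div_eq_mul_inv]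
    rw [singKer, singKer, norm_smul, norm_of_nonneg (inv_nonneg.2 hρ.le), this]
  simpa only [hscale, smul_eq_mul]
    using Measure.integral_comp_inv_smul_of_nonneg μ (singKer 1) hρ.le

variable [Nontrivial E] {ψ : E → ℝ} {ρ : ℝ}

lemma ae_integrable_singKer_mul (hψ : Integrable ψ μ) (hρ : 0 ≤ ρ) :
    ∀ᵐ x ∂μ, Integrable (fun y => singKer ρ (x - y) * ψ y) μ :=
  hψ.ae_convolution_exists (ContinuousLinearMap.mul ℝ ℝ).flip (integrable_singKer hρ)

lemma integrable_integral_singKer_mul (hψ : Integrable ψ μ) (hρ : 0 ≤ ρ) :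
    Integrable (fun x => ∫ y, singKer ρ (x - y) * ψ y ∂μ) μ :=
  hψ.integrable_convolution (ContinuousLinearMap.mul ℝ ℝ).flip (integrable_singKer hρ)

lemma integral_integral_singKer_mul (hψ : Integrable ψ μ) (hρ : 0 < ρ) :
    ∫ x, ∫ y, singKer ρ (x - y) * ψ y ∂μ ∂μ =
      ρ ^ finrank ℝ E * (∫ z, singKer 1 z ∂μ) * ∫ y, ψ y ∂μ := by
  rw [← integral_singKer μ hρ]
  exact integral_convolution (ContinuousLinearMap.mul ℝ ℝ).flip hψ (integrable_singKer hρ.le)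

end SingularKernel

section Jensen

variable {α : Type*} [MeasurableSpace α] {ν : Measure α} {l ψ : α → ℝ} {c : ℝ}

/- The logarithm sits below its tangent line at `exp (c ∫ lψ)`; unlike Jensen's inequality for the
normalised measure, this form does not require a lower bound for the mass of `ψ`. -/
lemma exp_mul_integral_le (hψ0 : 0 ≤ ψ) (hψ : Integrable ψ ν)
    (hl : Integrable (fun y => l y * ψ y) ν)
    (he : Integrable (fun y => (exp (l y / 2) - 1) * ψ y) ν)
    (hc : 0 ≤ c) (hcψ : 2 * c * ∫ y, ψ y ∂ν ≤ 1) :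
    exp (c * ∫ y, l y * ψ y ∂ν) ≤ 1 + 2 * c * ∫ y, (exp (l y / 2) - 1) * ψ y ∂ν := by
  set a := c * ∫ y, l y * ψ y ∂ν with ha
  have htangent (y : α) : (exp a * (1 - a) - 1) * ψ y + exp a / 2 * (l y * ψ y)
      ≤ (exp (l y / 2) - 1) * ψ y := by
    have h : exp a * (l y / 2 - a + 1) ≤ exp (l y / 2) := by
      calc exp a * (l y / 2 - a + 1) ≤ exp a * exp (l y / 2 - a) := by
            gcongr
            exact add_one_le_exp _
        _ = exp (l y / 2) := by rw [← exp_add]; ring_nf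
    nlinarith [hψ0 y, mul_le_mul_of_nonneg_right h (hψ0 y)]
  have hint : (exp a * (1 - a) - 1) * (∫ y, ψ y ∂ν) + exp a / 2 * ∫ y, l y * ψ y ∂ν
      ≤ ∫ y, (exp (l y / 2) - 1) * ψ y ∂ν := by
    rw [← integral_const_mul, ← integral_const_mul,
      ← integral_add (hψ.const_mul _) (hl.const_mul _)]
    exact integral_mono ((hψ.const_mul _).add (hl.const_mul _)) he htangent
  have hexp : exp a * (1 - a) ≤ 1 := by
    calc exp a * (1 - a) ≤ exp a * exp (-a) := by
          gcongr
          linarith [add_one_le_exp (-a)]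
      _ = 1 := by rw [← exp_add, add_neg_cancel, exp_zero]
  calc exp a ≤ 1 + (exp a * (1 - a) - 1) * (2 * c * ∫ y, ψ y ∂ν) + exp a * a := by
        nlinarith
    _ = 1 + 2 * c * ((exp a * (1 - a) - 1) * (∫ y, ψ y ∂ν)
          + exp a / 2 * ∫ y, l y * ψ y ∂ν) := by rw [ha]; ring
    _ ≤ 1 + 2 * c * ∫ y, (exp (l y / 2) - 1) * ψ y ∂ν := by gcongr

end Jensen

section NearPotential

variable {E : Type*} [NormedAddCommGroup E] [MeasurableSpace E]

/-- The contribution of the points `y` with `‖x - y‖ ≤ ‖x‖` to the logarithmic potential of `ψ`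
at `x`, normalised to vanish for `‖x - y‖ = ‖x‖`. -/
noncomputable def nearPot (μ : Measure E) (ψ : E → ℝ) (x : E) : ℝ :=
  ∫ y, log⁺ (‖x‖ / ‖x - y‖) * ψ y ∂μ

lemma nearPot_nonneg {μ : Measure E} {ψ : E → ℝ} (hψ : 0 ≤ ψ) (x : E) : 0 ≤ nearPot μ ψ x :=
  integral_nonneg fun y => mul_nonneg posLog_nonneg (hψ y)

lemma nearPot_le_of_norm_le {μ : Measure E} {ψ : E → ℝ} {ρ : ℝ} (hψ0 : 0 ≤ ψ)
    {x : E} (hx : ‖x‖ ≤ ρ)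
    (hint : Integrable (fun y => log⁺ (ρ / ‖x - y‖) * ψ y) μ) :
    nearPot μ ψ x ≤ ∫ y, log⁺ (ρ / ‖x - y‖) * ψ y ∂μ := by
  refine integral_mono_of_nonneg (.of_forall fun y => mul_nonneg posLog_nonneg (hψ0 y)) hint
    (.of_forall fun y => ?_)
  have : 0 ≤ ψ y := hψ0 y
  dsimp only
  gcongr

variable [BorelSpace E] [NormedSpace ℝ E] [FiniteDimensional ℝ E] {μ : Measure E}
  [μ.IsAddHaarMeasure] {ψ : E → ℝ}

lemma aestronglyMeasurable_nearPot (hψ : AEStronglyMeasurable ψ μ) :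
    AEStronglyMeasurable (nearPot μ ψ) μ := by
  have := continuous_posLog.measurable
  have hker : Measurable fun p : E × E => log⁺ (‖p.1‖ / ‖p.1 - p.2‖) := by fun_prop
  exact (hker.aestronglyMeasurable.mul hψ.comp_snd).integral_prod_right'

variable [Nontrivial E] {ρ : ℝ}

lemma integrable_posLog_div (hρ : 0 ≤ ρ) (x : E) :
    Integrable (fun y => log⁺ (ρ / ‖x - y‖)) μ := by
  have := continuous_posLog.measurable
  refine (((integrable_singKer hρ).comp_sub_left x).const_mul 2).mono'
    (Measurable.aestronglyMeasurable (by fun_prop)) (.of_forall fun y => ?_)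
  rw [norm_of_nonneg posLog_nonneg]
  exact posLog_le_singKer ρ (x - y)

lemma integrable_posLog_div_mul {φ : E → ℝ} (hφ : Continuous φ) (hρ : 0 ≤ ρ) (x : E) :
    Integrable (fun y => log⁺ (ρ / ‖x - y‖) * φ y) μ := by
  have hsupp : Function.support (fun y => log⁺ (ρ / ‖x - y‖) * φ y) ⊆ closedBall x ρ := by
    refine fun y hy => ?_
    by_contra h
    rw [mem_closedBall', dist_eq_norm, not_le] at h
    refine hy (mul_eq_zero_of_left (posLog_eq_zero_iff _ |>.2 ?_) _)
    rw [abs_of_nonneg (by positivity)]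
    exact div_le_one_of_le₀ h.le (norm_nonneg _)
  rw [← integrableOn_iff_integrable_of_support_subset hsupp]
  exact (integrable_posLog_div hρ x).integrableOn.mul_continuousOn hφ.continuousOn
    (isCompact_closedBall x ρ)

lemma setIntegral_ball_le_of_le_integral_singKer {f : E → ℝ} {a b : ℝ} (hψ0 : 0 ≤ ψ)
    (hψ : Integrable ψ μ) (hρ : 0 < ρ) (hb : 0 ≤ b) (hf : AEStronglyMeasurable f μ) (hf0 : 0 ≤ f)
    (h : ∀ᵐ x ∂μ, x ∈ ball 0 ρ → f x ≤ a + b * ∫ y, singKer ρ (x - y) * ψ y ∂μ) :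
    IntegrableOn f (ball 0 ρ) μ ∧ ∫ x in ball 0 ρ, f x ∂μ ≤
      (a * μ.real (ball 0 1) + b * (∫ z, singKer 1 z ∂μ) * ∫ y, ψ y ∂μ) * ρ ^ finrank ℝ E := by
  have hS := (integrable_integral_singKer_mul hψ hρ.le).const_mul b
  have hconst : IntegrableOn (fun _ : E => a) (ball 0 ρ) μ :=
    integrableOn_const measure_ball_lt_top.ne
  have hmaj := hconst.add hS.integrableOn
  have hle := (ae_restrict_iff' measurableSet_ball).2 h
  refine ⟨hmaj.mono' hf.restrict ?_, ?_⟩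
  · filter_upwards [hle] with x hx
    rwa [norm_of_nonneg (hf0 x)]
  have hSnn (x : E) : 0 ≤ b * ∫ y, singKer ρ (x - y) * ψ y ∂μ :=
    mul_nonneg hb (integral_nonneg fun y => mul_nonneg (singKer_nonneg _ _) (hψ0 y))
  calc ∫ x in ball 0 ρ, f x ∂μ
      ≤ ∫ x in ball 0 ρ, (a + b * ∫ y, singKer ρ (x - y) * ψ y ∂μ) ∂μ :=
        integral_mono_of_nonneg (.of_forall hf0) hmaj hle
    _ ≤ a * μ.real (ball 0 ρ) + ∫ x, b * ∫ y, singKer ρ (x - y) * ψ y ∂μ ∂μ := by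
        rw [integral_add hconst hS.integrableOn, setIntegral_const, smul_eq_mul, mul_comm a]
        refine add_le_add_right ?_ _
        exact setIntegral_le_integral (s := ball 0 ρ) hS (.of_forall hSnn)
    _ = _ := by
        rw [integral_const_mul, integral_integral_singKer_mul hψ hρ, measureReal_ball μ 0 hρ]
        ring

lemma ae_integrable_posLog_div_mul (hψ : Integrable ψ μ) (hρ : 0 ≤ ρ) :
    ∀ᵐ x ∂μ, Integrable (fun y => log⁺ (ρ / ‖x - y‖) * ψ y) μ := by
  have := continuous_posLog.measurable
  filter_upwards [ae_integrable_singKer_mul hψ hρ] with x hx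
  have hker : Measurable fun y => log⁺ (ρ / ‖x - y‖) := by fun_prop
  refine (hx.norm.const_mul 2).mono' (hker.aestronglyMeasurable.mul hψ.1) (.of_forall fun y => ?_)
  rw [norm_mul, norm_mul, norm_of_nonneg posLog_nonneg, norm_of_nonneg (singKer_nonneg _ _),
    ← mul_assoc]
  gcongr
  exact posLog_le_singKer ρ (x - y)

lemma setIntegral_nearPot_le (hψ0 : 0 ≤ ψ) (hψ : Integrable ψ μ) (hρ : 0 < ρ) :
    IntegrableOn (nearPot μ ψ) (ball 0 ρ) μ ∧ ∫ x in ball 0 ρ, nearPot μ ψ x ∂μ ≤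
      2 * (∫ z, singKer 1 z ∂μ) * (∫ y, ψ y ∂μ) * ρ ^ finrank ℝ E := by
  have h := setIntegral_ball_le_of_le_integral_singKer (a := 0) hψ0 hψ hρ zero_le_two
    (aestronglyMeasurable_nearPot hψ.1) (nearPot_nonneg hψ0) ?_
  · simpa only [zero_mul, zero_add] using h
  filter_upwards [ae_integrable_singKer_mul hψ hρ.le, ae_integrable_posLog_div_mul hψ hρ.le]
    with x hsing hlog hx
  refine (nearPot_le_of_norm_le hψ0 (mem_ball_zero_iff.1 hx).le hlog).trans ?_
  rw [zero_add, ← integral_const_mul]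
  refine integral_mono hlog (hsing.const_mul 2) fun y => ?_
  rw [← mul_assoc]
  exact mul_le_mul_of_nonneg_right (posLog_le_singKer ρ (x - y)) (hψ0 y)

/- A Brezis–Merle inequality: the exponential of the potential of a small mass is integrable. -/
lemma setIntegral_exp_nearPot_le (hψ0 : 0 ≤ ψ) (hψ : Integrable ψ μ) (hρ : 0 < ρ) {c : ℝ}
    (hc : 0 ≤ c) (hcψ : 2 * c * ∫ y, ψ y ∂μ ≤ 1) :
    IntegrableOn (fun x => exp (c * nearPot μ ψ x)) (ball 0 ρ) μ ∧
      ∫ x in ball 0 ρ, exp (c * nearPot μ ψ x) ∂μ ≤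
        (μ.real (ball 0 1) + ∫ z, singKer 1 z ∂μ) * ρ ^ finrank ℝ E := by
  have hmeas : AEStronglyMeasurable (fun x => exp (c * nearPot μ ψ x)) μ :=
    continuous_exp.comp_aestronglyMeasurable ((aestronglyMeasurable_nearPot hψ.1).const_mul c)
  obtain ⟨hint, hle⟩ := setIntegral_ball_le_of_le_integral_singKer (a := 1) (b := 2 * c) hψ0 hψ hρ
    (by positivity) hmeas (fun x => (exp_pos _).le) <| by
      filter_upwards [ae_integrable_singKer_mul hψ hρ.le, ae_integrable_posLog_div_mul hψ hρ.le]
        with x hsing hlog hx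
      calc exp (c * nearPot μ ψ x) ≤ exp (c * ∫ y, log⁺ (ρ / ‖x - y‖) * ψ y ∂μ) := by
            gcongr
            exact nearPot_le_of_norm_le hψ0 (mem_ball_zero_iff.1 hx).le hlog
        _ ≤ _ := exp_mul_integral_le hψ0 hψ hlog hsing hc hcψ
  refine ⟨hint, hle.trans ?_⟩
  have hK : 0 ≤ ∫ z, singKer 1 z ∂μ := integral_nonneg (singKer_nonneg 1)
  rw [one_mul]
  gcongr
  calc 2 * c * (∫ z, singKer 1 z ∂μ) * ∫ y, ψ y ∂μ
      = (2 * c * ∫ y, ψ y ∂μ) * ∫ z, singKer 1 z ∂μ := by ring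
    _ ≤ ∫ z, singKer 1 z ∂μ := mul_le_of_le_one_left hK hcψ

end NearPotential

section Splitting

variable {E : Type*} [NormedAddCommGroup E]

lemma log_norm_add_le {x : E} (hx : 1 ≤ ‖x‖) (y : E) :
    log ‖x + y‖ ≤ log 2 + max (log ‖x‖) (log ‖y‖) := by
  have hX : 0 ≤ log ‖x‖ := log_nonneg hx
  rcases eq_or_ne (x + y) 0 with h0 | h0
  · rw [h0, norm_zero, log_zero]
    positivity
  have hxy := norm_add_le x y
  have hpos : 0 < max ‖x‖ ‖y‖ := zero_lt_one.trans_le (hx.trans (le_max_left _ _))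
  calc log ‖x + y‖ ≤ log (2 * max ‖x‖ ‖y‖) := by
        refine log_le_log (norm_pos_iff.2 h0) ?_
        linarith [le_max_left ‖x‖ ‖y‖, le_max_right ‖x‖ ‖y‖]
    _ = log 2 + log (max ‖x‖ ‖y‖) := log_mul two_ne_zero hpos.ne'
    _ ≤ log 2 + max (log ‖x‖) (log ‖y‖) := by
        rcases max_cases ‖x‖ ‖y‖ with ⟨h, -⟩ | ⟨h, -⟩ <;> rw [h] <;> gcongr
        exacts [le_max_left _ _, le_max_right _ _]

lemma abs_max_log_norm_sub_le {x : E} (hx : 1 ≤ ‖x‖) (y : E) :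
    |max (log ‖x‖) (log ‖y‖) - max (log ‖x‖) (log ‖x - y‖)| ≤ log 2 := by
  have h1 := log_norm_add_le hx (y - x)
  have h2 := log_norm_add_le hx (-y)
  rw [add_sub_cancel, norm_sub_rev] at h1
  rw [← sub_eq_add_neg, norm_neg] at h2
  have h0 : 0 ≤ log 2 := log_nonneg one_le_two
  rw [abs_sub_le_iff, sub_le_iff_le_add, sub_le_iff_le_add]
  exact ⟨max_le (by linarith [le_max_left (log ‖x‖) (log ‖x - y‖)]) h1,
    max_le (by linarith [le_max_left (log ‖x‖) (log ‖y‖)]) h2⟩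

lemma log_norm_div_norm_sub_eq {x y : E} (hx : 1 ≤ ‖x‖) (hy : y ≠ 0) (hxy : y ≠ x) :
    log (‖y‖ / ‖x - y‖) = min (log ‖x‖) (log⁺ ‖y‖) - log ‖x‖ + log⁺ (‖x‖ / ‖x - y‖)
      - log⁺ (1 / ‖0 - y‖) + (max (log ‖x‖) (log ‖y‖) - max (log ‖x‖) (log ‖x - y‖)) := by
  have hX : 0 ≤ log ‖x‖ := log_nonneg hx
  have hx0 : ‖x‖ ≠ 0 := (zero_lt_one.trans_le hx).ne'
  have hd0 : ‖x - y‖ ≠ 0 := norm_ne_zero_iff.2 (sub_ne_zero.2 hxy.symm)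
  simp only [posLog, zero_sub, norm_neg, one_div, log_inv,
    log_div (norm_ne_zero_iff.2 hy) hd0, log_div hx0 hd0]
  grind

variable [MeasurableSpace E]

/-- The logarithmic moment of `φ`, with the logarithm truncated at the radius `r`. -/
noncomputable def truncMoment (μ : Measure E) (φ : E → ℝ) (r : ℝ) : ℝ :=
  ∫ y, min (log r) (log⁺ ‖y‖) * φ y ∂μ

/-- `v` is, up to an error bounded by `B` outside the unit ball, the logarithmic potential
`κ ∫ log (‖y‖ / ‖x - y‖) φ y` split into a radial and a near part. -/
def IsLogPotential (μ : Measure E) (κ B : ℝ) (φ v : E → ℝ) : Prop :=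
  ∀ x, 1 ≤ ‖x‖ →
    |v x - κ * (truncMoment μ φ ‖x‖ - log ‖x‖ * ∫ y, φ y ∂μ + nearPot μ φ x)| ≤ B

variable [BorelSpace E] {μ : Measure E} {φ : E → ℝ}

lemma integrable_min_log_posLog_mul (hφ : Integrable φ μ) (r : ℝ) :
    Integrable (fun y => min (log r) (log⁺ ‖y‖) * φ y) μ := by
  have := continuous_posLog.measurable
  refine hφ.bdd_mul (c := |log r|) (Measurable.aestronglyMeasurable (by fun_prop))
    (.of_forall fun y => ?_)
  have := posLog_nonneg (x := ‖y‖)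
  grind [Real.norm_eq_abs]

variable [NormedSpace ℝ E] [FiniteDimensional ℝ E] [Nontrivial E] [μ.IsAddHaarMeasure]

lemma abs_integral_log_sub_le (hφc : Continuous φ) (hφ : Integrable φ μ) {x : E}
    (hx : 1 ≤ ‖x‖) :
    Integrable (fun y => log (‖y‖ / ‖x - y‖) * φ y) μ ∧
      |∫ y, log (‖y‖ / ‖x - y‖) * φ y ∂μ
        - (truncMoment μ φ ‖x‖ - log ‖x‖ * ∫ y, φ y ∂μ + nearPot μ φ x)|
      ≤ |∫ y, log⁺ (1 / ‖0 - y‖) * φ y ∂μ| + log 2 * ∫ y, |φ y| ∂μ := by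
  let err (y : E) := max (log ‖x‖) (log ‖y‖) - max (log ‖x‖) (log ‖x - y‖)
  have herr (y : E) : |err y| ≤ log 2 := abs_max_log_norm_sub_le hx y
  have htrunc := integrable_min_log_posLog_mul hφ ‖x‖
  have hmass := hφ.const_mul (log ‖x‖)
  have hnear := integrable_posLog_div_mul (μ := μ) hφc (norm_nonneg x) x
  have horigin := integrable_posLog_div_mul (μ := μ) hφc zero_le_one 0
  have herrint : Integrable (fun y => err y * φ y) μ :=
    hφ.bdd_mul (Measurable.aestronglyMeasurable (by fun_prop)) (.of_forall herr)
  have hsplit : (fun y => log (‖y‖ / ‖x - y‖) * φ y) =ᵐ[μ] fun y =>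
      min (log ‖x‖) (log⁺ ‖y‖) * φ y - log ‖x‖ * φ y + log⁺ (‖x‖ / ‖x - y‖) * φ y
        - log⁺ (1 / ‖0 - y‖) * φ y + err y * φ y := by
    filter_upwards [Measure.ae_ne μ 0, Measure.ae_ne μ x] with y hy hxy
    rw [log_norm_div_norm_sub_eq hx hy hxy]
    ring
  have hrad := htrunc.sub hmass
  have hmain := (hrad.add hnear).sub horigin
  have hsum : ∫ y, log (‖y‖ / ‖x - y‖) * φ y ∂μ
      = truncMoment μ φ ‖x‖ - log ‖x‖ * (∫ y, φ y ∂μ) + nearPot μ φ x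
        - (∫ y, log⁺ (1 / ‖0 - y‖) * φ y ∂μ) + ∫ y, err y * φ y ∂μ := by
    rw [truncMoment, nearPot, ← integral_const_mul, ← integral_sub' htrunc hmass,
      ← integral_add' hrad hnear, ← integral_sub' (hrad.add hnear) horigin,
      ← integral_add' hmain herrint]
    exact integral_congr_ae hsplit
  have herrle : |∫ y, err y * φ y ∂μ| ≤ log 2 * ∫ y, |φ y| ∂μ := by
    rw [← integral_const_mul]
    refine abs_integral_le_integral_abs.trans
      (integral_mono herrint.abs (hφ.abs.const_mul _) fun y => ?_)
    rw [abs_mul]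
    exact mul_le_mul_of_nonneg_right (herr y) (abs_nonneg _)
  refine ⟨(hmain.add herrint).congr hsplit.symm, ?_⟩
  rw [hsum, add_sub_right_comm, sub_sub_cancel_left]
  exact (abs_add_le _ _).trans (add_le_add (abs_neg _).le herrle)

end Splitting

section TruncMoment

variable {E : Type*} [NormedAddCommGroup E] [MeasurableSpace E] [BorelSpace E] {μ : Measure E}
  {φ : E → ℝ}

lemma abs_truncMoment_sub_le (hφ : Integrable φ μ) (r R : ℝ) :
    |truncMoment μ φ r - truncMoment μ φ R| ≤ |log r - log R| * ∫ y, |φ y| ∂μ := by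
  have hr := integrable_min_log_posLog_mul hφ r
  have hR := integrable_min_log_posLog_mul hφ R
  rw [truncMoment, truncMoment, ← integral_sub hr hR, ← integral_const_mul]
  refine abs_integral_le_integral_abs.trans
    (integral_mono (hr.sub hR).abs (hφ.abs.const_mul _) fun y => ?_)
  dsimp only
  rw [← sub_mul, abs_mul]
  exact mul_le_mul_of_nonneg_right ((abs_min_sub_min_le_max _ _ _ _).trans (by simp)) (abs_nonneg _)

lemma tendsto_truncMoment_div_log (hφ : Integrable φ μ) :
    Tendsto (fun r => truncMoment μ φ r / log r) atTop (𝓝 0) := by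
  have := continuous_posLog.measurable
  have hlim := tendsto_integral_filter_of_dominated_convergence (μ := μ) (l := atTop)
    (F := fun r y => min (log r) (log⁺ ‖y‖) / log r * φ y) (f := fun _ => 0) (fun y => |φ y|)
    (.of_forall fun r => (Measurable.aestronglyMeasurable (by fun_prop)).mul hφ.1) ?_ hφ.abs
    (.of_forall fun y => ?_)
  · rw [integral_zero] at hlim
    refine hlim.congr fun r => ?_
    rw [truncMoment, ← integral_div]
    exact integral_congr_ae (.of_forall fun y => by ring)
  · filter_upwards [eventually_ge_atTop 1] with r hr
    refine .of_forall fun y => ?_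
    have hlog : 0 ≤ log r := log_nonneg hr
    have hmin : 0 ≤ min (log r) (log⁺ ‖y‖) := le_min hlog posLog_nonneg
    rw [norm_mul, norm_of_nonneg (div_nonneg hmin hlog)]
    exact mul_le_of_le_one_left (norm_nonneg _) (div_le_one_of_le₀ (min_le_left _ _) hlog)
  · rw [← zero_mul (φ y)]
    refine (squeeze_zero' ?_ ?_ (tendsto_log_atTop.const_div_atTop (log⁺ ‖y‖))).mul_const (φ y)
    all_goals
      filter_upwards [eventually_ge_atTop 1] with r hr
      have hlog : 0 ≤ log r := log_nonneg hr
    · exact div_nonneg (le_min hlog posLog_nonneg) hlog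
    · exact div_le_div_of_nonneg_right (min_le_right _ _) hlog

lemma tendsto_mul_log_add_truncMoment_atTop (hφ : Integrable φ μ) {θ : ℝ} (hθ : 0 < θ) (κ : ℝ) :
    Tendsto (fun r => θ * log r + κ * truncMoment μ φ r) atTop atTop := by
  have hfactor : Tendsto (fun r => θ + κ * (truncMoment μ φ r / log r)) atTop (𝓝 θ) := by
    simpa using ((tendsto_truncMoment_div_log hφ).const_mul κ).const_add θ
  refine (tendsto_log_atTop.atTop_mul_pos hθ hfactor).congr' ?_
  filter_upwards [eventually_gt_atTop 1] with r hr
  have := (log_pos hr).ne'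
  field_simp

lemma truncMoment_le_integral_posPart (hφ : Integrable φ μ) {r : ℝ} (hr : 1 ≤ r)
    (hlog : Integrable (fun y => log⁺ ‖y‖ * max (φ y) 0) μ) :
    truncMoment μ φ r ≤ ∫ y, log⁺ ‖y‖ * max (φ y) 0 ∂μ := by
  refine integral_mono (integrable_min_log_posLog_mul hφ r) hlog fun y => ?_
  have hmin : 0 ≤ min (log r) (log⁺ ‖y‖) := le_min (log_nonneg hr) posLog_nonneg
  exact (mul_le_mul_of_nonneg_left (le_max_left _ _) hmin).trans
    (mul_le_mul_of_nonneg_right (min_le_right _ _) (le_max_right _ _))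

lemma truncMoment_le_add_integral_negPart (hφ : Integrable φ μ) {r R : ℝ} (hr : 1 ≤ r)
    (hrR : r ≤ R) (hlog : Integrable (fun y => log⁺ ‖y‖ * max (-φ y) 0) μ) :
    truncMoment μ φ r ≤ truncMoment μ φ R + ∫ y, log⁺ ‖y‖ * max (-φ y) 0 ∂μ := by
  have hR := integrable_min_log_posLog_mul hφ R
  rw [truncMoment, truncMoment, ← integral_add hR hlog]
  refine integral_mono (integrable_min_log_posLog_mul hφ r) (hR.add hlog) fun y => ?_
  have hmin : 0 ≤ min (log r) (log⁺ ‖y‖) := le_min (log_nonneg hr) posLog_nonneg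
  have hmono : min (log r) (log⁺ ‖y‖) ≤ min (log R) (log⁺ ‖y‖) := by gcongr
  have hle : min (log R) (log⁺ ‖y‖) ≤ log⁺ ‖y‖ := min_le_right _ _
  dsimp only
  nlinarith [le_max_left (-φ y) 0, le_max_right (-φ y) 0]

variable {θ κ M : ℝ} {τ : ℕ → ℝ}

lemma nonpos_of_mul_log_add_truncMoment_le (hφ : Integrable φ μ) (hτ : Tendsto τ atTop atTop)
    (hM : ∀ i, θ * log (τ i) + κ * truncMoment μ φ (τ i) ≤ M) : θ ≤ 0 := by
  by_contra! hθ
  obtain ⟨i, hi⟩ := (((tendsto_mul_log_add_truncMoment_atTop hφ hθ κ).comp hτ).eventually_gt_atTop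
    M).exists
  exact hi.not_ge (hM i)

lemma exists_eventually_mul_log_add_truncMoment_le (hφ : Integrable φ μ) (hκ : 0 ≤ κ)
    (hτ : Tendsto τ atTop atTop)
    (hM : ∀ i, θ * log (τ i) + κ * truncMoment μ φ (τ i) ≤ M)
    (hlog : Integrable (fun y => log⁺ ‖y‖ * max (φ y) 0) μ ∨
      Integrable (fun y => log⁺ ‖y‖ * max (-φ y) 0) μ) :
    ∃ M', ∀ᶠ r in atTop, θ * log r + κ * truncMoment μ φ r ≤ M' := by
  rcases (nonpos_of_mul_log_add_truncMoment_le hφ hτ hM).lt_or_eq with hθ | rfl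
  · refine ⟨0, ?_⟩
    filter_upwards [(tendsto_mul_log_add_truncMoment_atTop hφ (neg_pos.2 hθ)
      (-κ)).eventually_ge_atTop 0] with r hr
    linarith
  simp only [zero_mul, zero_add] at hM ⊢
  rcases hlog with hpos | hneg
  · refine ⟨κ * ∫ y, log⁺ ‖y‖ * max (φ y) 0 ∂μ, ?_⟩
    filter_upwards [eventually_ge_atTop 1] with r hr
    gcongr
    exact truncMoment_le_integral_posPart hφ hr hpos
  · refine ⟨M + κ * ∫ y, log⁺ ‖y‖ * max (-φ y) 0 ∂μ, ?_⟩
    filter_upwards [eventually_ge_atTop 1] with r hr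
    obtain ⟨i, hi⟩ := (hτ.eventually_ge_atTop r).exists
    calc κ * truncMoment μ φ r
        ≤ κ * (truncMoment μ φ (τ i) + ∫ y, log⁺ ‖y‖ * max (-φ y) 0 ∂μ) := by
          gcongr
          exact truncMoment_le_add_integral_negPart hφ hr hi hneg
      _ ≤ M + κ * ∫ y, log⁺ ‖y‖ * max (-φ y) 0 ∂μ := by
          rw [mul_add]
          gcongr
          exact hM i

end TruncMoment

section DyadicShells

variable {E : Type*} [NormedAddCommGroup E] [MeasurableSpace E] [BorelSpace E] {μ : Measure E}

lemma setIntegral_shell_rpow_norm_mul_le {g : E → ℝ} {e δ K ρ : ℝ} (he : 0 ≤ e) (hδ : 0 < δ)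
    (hg0 : 0 ≤ g) (hρ : 0 < ρ) (hg : IntegrableOn g (ball 0 (2 * ρ)) μ)
    (hgK : ∫ x in ball 0 (2 * ρ), g x ∂μ ≤ K * (2 * ρ) ^ e) :
    IntegrableOn (fun x => ‖x‖ ^ (-(e + δ)) * g x) ({x | ρ ≤ ‖x‖} ∩ ball 0 (2 * ρ)) μ ∧
      ∫ x in {x | ρ ≤ ‖x‖} ∩ ball 0 (2 * ρ), ‖‖x‖ ^ (-(e + δ)) * g x‖ ∂μ
        ≤ 2 ^ e * K * ρ ^ (-δ) := by
  set shell : Set E := {x | ρ ≤ ‖x‖} ∩ ball 0 (2 * ρ)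
  have hshell : MeasurableSet shell :=
    (measurableSet_le measurable_const measurable_norm).inter measurableSet_ball
  have hsub : shell ⊆ ball 0 (2 * ρ) := Set.inter_subset_right
  have hle (x : E) (hx : x ∈ shell) : ‖‖x‖ ^ (-(e + δ)) * g x‖ ≤ ρ ^ (-(e + δ)) * g x := by
    rw [norm_mul, norm_of_nonneg (hg0 x), norm_of_nonneg (by positivity)]
    exact mul_le_mul_of_nonneg_right (rpow_le_rpow_of_nonpos hρ hx.1 (by linarith)) (hg0 x)
  have hmaj : IntegrableOn (fun x => ρ ^ (-(e + δ)) * g x) (ball 0 (2 * ρ)) μ := hg.const_mul _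
  have hweight : Measurable fun x : E => ‖x‖ ^ (-(e + δ)) := by fun_prop
  have hint : IntegrableOn (fun x => ‖x‖ ^ (-(e + δ)) * g x) shell μ :=
    (hmaj.mono_set hsub).mono' (hweight.aestronglyMeasurable.mul (hg.mono_set hsub).1)
      (ae_restrict_of_forall_mem hshell hle)
  refine ⟨hint, ?_⟩
  calc ∫ x in shell, ‖‖x‖ ^ (-(e + δ)) * g x‖ ∂μ
      ≤ ∫ x in shell, ρ ^ (-(e + δ)) * g x ∂μ :=
        setIntegral_mono_on hint.norm (hmaj.mono_set hsub) hshell hle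
    _ ≤ ∫ x in ball 0 (2 * ρ), ρ ^ (-(e + δ)) * g x ∂μ :=
        setIntegral_mono_set hmaj (.of_forall fun x => mul_nonneg (by positivity) (hg0 x))
          hsub.eventuallyLE
    _ ≤ ρ ^ (-(e + δ)) * (K * (2 * ρ) ^ e) := by
        rw [integral_const_mul]
        gcongr
    _ = 2 ^ e * K * ρ ^ (-δ) := by
        rw [neg_add, rpow_add hρ, rpow_neg hρ.le e, mul_rpow zero_le_two hρ.le]
        field_simp

lemma integrableOn_rpow_norm_mul {g : E → ℝ} {e δ K : ℝ} (he : 0 ≤ e) (hδ : 0 < δ) (hg0 : 0 ≤ g)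
    (hg : ∀ ρ > 0, IntegrableOn g (ball 0 ρ) μ ∧ ∫ x in ball 0 ρ, g x ∂μ ≤ K * ρ ^ e) :
    IntegrableOn (fun x => ‖x‖ ^ (-(e + δ)) * g x) {x | 1 ≤ ‖x‖} μ := by
  have hshell (k : ℕ) :=
    have hpos : (0 : ℝ) < 2 ^ k := by positivity
    setIntegral_shell_rpow_norm_mul_le he hδ hg0 hpos (hg _ (by positivity)).1
      (hg _ (by positivity)).2
  have hcover : {x : E | 1 ≤ ‖x‖} ⊆ ⋃ k : ℕ, {x | 2 ^ k ≤ ‖x‖} ∩ ball 0 (2 * 2 ^ k) := by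
    intro x hx
    obtain ⟨k, hk, hk'⟩ := exists_nat_pow_near (show 1 ≤ ‖x‖ from hx) one_lt_two
    exact Set.mem_iUnion.2 ⟨k, hk, mem_ball_zero_iff.2 (by rwa [← pow_succ'])⟩
  refine (integrableOn_iUnion_of_summable_integral_norm (fun k => (hshell k).1) ?_).mono_set hcover
  refine .of_nonneg_of_le (fun k => integral_nonneg fun x => norm_nonneg _)
    (fun k => (hshell k).2) (.mul_left _ ?_)
  simp_rw [← rpow_natCast, ← rpow_mul zero_le_two, mul_comm _ (-δ), rpow_mul zero_le_two,
    rpow_natCast]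
  exact summable_geometric_of_lt_one (by positivity)
    (rpow_lt_one_of_one_lt_of_neg one_lt_two (neg_lt_zero.2 hδ))

end DyadicShells

section PositiveTail

variable {E : Type*} [NormedAddCommGroup E]

lemma posLog_div_le_log_two {r d : ℝ} (hr : 0 ≤ r) (hd : 0 ≤ d) (h : r ≤ 2 * d) :
    log⁺ (r / d) ≤ log 2 := by
  rw [← posLog_eq_log (x := 2) (by norm_num)]
  exact posLog_le_posLog (by positivity) (div_le_of_le_mul₀ hd zero_le_two h)

/-- The positive part of `φ` outside the ball of radius `R`. Its mass is small for large `R`, and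
far out it determines the near part of the potential of `φ` up to a bounded amount from above. -/
noncomputable def posTail (R : ℝ) (φ : E → ℝ) : E → ℝ :=
  {y | R ≤ ‖y‖}.indicator fun y => max (φ y) 0

lemma posTail_nonneg (R : ℝ) (φ : E → ℝ) : 0 ≤ posTail R φ :=
  Set.indicator_nonneg fun _ _ => le_max_right _ _

lemma posTail_le_abs (R : ℝ) (φ : E → ℝ) (y : E) : posTail R φ y ≤ |φ y| :=
  Set.indicator_apply_le' (fun _ => max_le (le_abs_self _) (abs_nonneg _)) fun _ => abs_nonneg _

variable [MeasurableSpace E] [BorelSpace E] {μ : Measure E} {φ : E → ℝ}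

lemma integrable_posTail (hφ : Integrable φ μ) (R : ℝ) : Integrable (posTail R φ) μ :=
  hφ.pos_part.indicator (measurableSet_le measurable_const measurable_norm)

lemma tendsto_integral_posTail (hφ : Integrable φ μ) :
    Tendsto (fun R => ∫ y, posTail R φ y ∂μ) atTop (𝓝 0) := by
  rw [← integral_zero E ℝ (μ := μ)]
  refine tendsto_integral_filter_of_dominated_convergence (fun y => |φ y|)
    (.of_forall fun R => (integrable_posTail hφ R).1) (.of_forall fun R => .of_forall fun y => ?_)
    hφ.abs (.of_forall fun y => ?_)
  · rw [norm_of_nonneg (posTail_nonneg R φ y)]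
    exact posTail_le_abs R φ y
  · refine tendsto_const_nhds.congr' ?_
    filter_upwards [eventually_gt_atTop ‖y‖] with R hR
    exact (Set.indicator_of_notMem (by simpa using hR) _).symm

variable [NormedSpace ℝ E] [FiniteDimensional ℝ E] [Nontrivial E] [μ.IsAddHaarMeasure]

lemma nearPot_le_nearPot_posTail_add (hφc : Continuous φ) (hφ : Integrable φ μ) {R : ℝ} {x : E}
    (hx : 2 * R ≤ ‖x‖) :
    nearPot μ φ x ≤ nearPot μ (posTail R φ) x + log 2 * ∫ y, |φ y| ∂μ := by
  have htail : Integrable (fun y => log⁺ (‖x‖ / ‖x - y‖) * posTail R φ y) μ := by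
    have hpos := integrable_posLog_div_mul (μ := μ) (hφc.max continuous_zero) (norm_nonneg x) x
    refine (hpos.indicator (measurableSet_le measurable_const measurable_norm)).congr
      (.of_forall fun y => Set.indicator_mul_right {y | R ≤ ‖y‖} _ _)
  rw [nearPot, nearPot, ← integral_const_mul, ← integral_add htail (hφ.abs.const_mul _)]
  refine integral_mono (integrable_posLog_div_mul hφc (norm_nonneg x) x)
    (htail.add (hφ.abs.const_mul _)) fun y => ?_
  have hk : 0 ≤ log⁺ (‖x‖ / ‖x - y‖) := posLog_nonneg
  dsimp only
  rcases le_or_gt R ‖y‖ with hy | hy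
  · rw [posTail, Set.indicator_of_mem (by exact hy)]
    exact le_add_of_le_of_nonneg (mul_le_mul_of_nonneg_left (le_max_left _ _) hk) (by positivity)
  · rw [posTail, Set.indicator_of_notMem (by simpa using hy), mul_zero, zero_add]
    have hxy : ‖x‖ ≤ 2 * ‖x - y‖ := by linarith [norm_sub_norm_le x y]
    calc log⁺ (‖x‖ / ‖x - y‖) * φ y ≤ log⁺ (‖x‖ / ‖x - y‖) * |φ y| := by
          gcongr
          exact le_abs_self _
      _ ≤ log 2 * |φ y| := by
          gcongr
          exact posLog_div_le_log_two (norm_nonneg _) (norm_nonneg _) hxy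

lemma IsLogPotential.exists_posTail_bound {κ B : ℝ} {v : E → ℝ} (hv : IsLogPotential μ κ B φ v)
    (hφc : Continuous φ) (hφ : Integrable φ μ) (hκ : 0 ≤ κ) {δ : ℝ} (hδ : 0 < δ) :
    ∃ R A, 1 ≤ R ∧ κ * ∫ y, posTail R φ y ∂μ ≤ δ ∧ ∀ x, 2 * R ≤ ‖x‖ → v x ≤
      κ * (truncMoment μ φ ‖x‖ - log ‖x‖ * ∫ y, φ y ∂μ + nearPot μ (posTail R φ) x) + A := by
  have hlim : Tendsto (fun R => κ * ∫ y, posTail R φ y ∂μ) atTop (𝓝 0) := by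
    simpa using (tendsto_integral_posTail hφ).const_mul κ
  obtain ⟨R, hR1, hRδ⟩ := ((eventually_ge_atTop 1).and (hlim.eventually_le_const hδ)).exists
  refine ⟨R, κ * (log 2 * ∫ y, |φ y| ∂μ) + B, hR1, hRδ, fun x hx => ?_⟩
  have hnear := mul_le_mul_of_nonneg_left (nearPot_le_nearPot_posTail_add (μ := μ) hφc hφ hx) hκ
  have := (abs_sub_le_iff.1 (hv x (by linarith))).1
  linarith

end PositiveTail

section LightPart

variable {E : Type*} [NormedAddCommGroup E] [MeasurableSpace E] [BorelSpace E] [NormedSpace ℝ E]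
  [FiniteDimensional ℝ E] [Nontrivial E] {μ : Measure E} [μ.IsAddHaarMeasure]
  {φ v f : E → ℝ} {κ B : ℝ}

omit [Nontrivial E] in
lemma integrable_of_eventually_norm_le {g : E → ℝ} (hf : Continuous f)
    (hg : IntegrableOn g {x | 1 ≤ ‖x‖} μ)
    (hfg : ∀ᶠ r in atTop, ∀ x, ‖x‖ = r → ‖f x‖ ≤ g x) : Integrable f μ := by
  obtain ⟨R, hR⟩ := (hfg.and (eventually_ge_atTop 1)).exists_forall_of_atTop
  refine integrable_iff_integrableAtFilter_cocompact.2 ⟨⟨{x | R ≤ ‖x‖}, ?_, ?_⟩,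
    hf.locallyIntegrable⟩
  · rw [← cobounded_eq_cocompact]
    exact hasBasis_cobounded_norm.mem_of_mem trivial
  · exact (hg.mono_set fun x (hx : R ≤ ‖x‖) => (hR _ hx).2).mono' hf.aestronglyMeasurable
      (ae_restrict_of_forall_mem (measurableSet_le measurable_const measurable_norm)
        fun x hx => (hR _ hx).1 x rfl)

lemma IsLogPotential.exists_eventually_exp_le (hv : IsLogPotential μ κ B φ v)
    (hφc : Continuous φ) (hφ : Integrable φ μ) (hκ : 0 ≤ κ) {ε : ℝ} (hε : 0 < ε) :
    ∃ R A, κ * ∫ y, posTail R φ y ∂μ ≤ 1 / 2 ∧ ∀ᶠ r in atTop, ∀ x, ‖x‖ = r →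
      exp (v x) ≤ exp A * (‖x‖ ^ (ε - κ * ∫ y, φ y ∂μ) *
        exp (κ * nearPot μ (posTail R φ) x)) := by
  obtain ⟨R, A, hR, hmass, hbound⟩ := hv.exists_posTail_bound hφc hφ hκ one_half_pos
  refine ⟨R, A, hmass, ?_⟩
  filter_upwards [eventually_ge_atTop (2 * R),
    (tendsto_mul_log_add_truncMoment_atTop hφ hε (-κ)).eventually_ge_atTop 0]
  rintro _ hxR hmoment x rfl
  rw [rpow_def_of_pos (by linarith), ← exp_add, ← exp_add]
  gcongr
  linarith [hbound x hxR]

lemma IsLogPotential.integrable_posLog_mul (hv : IsLogPotential μ κ B φ v)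
    (hφc : Continuous φ) (hφ : Integrable φ μ) (hκ : 0 ≤ κ) {s₁ C₀ R₀ : ℝ}
    (hs₁ : finrank ℝ E + s₁ < κ * ∫ y, φ y ∂μ) (hfc : Continuous f) (hf0 : 0 ≤ f) (hC₀ : 0 ≤ C₀)
    (hf : ∀ x, R₀ ≤ ‖x‖ → f x ≤ C₀ * ‖x‖ ^ s₁ * exp (v x)) :
    Integrable (fun x => log⁺ ‖x‖ * f x) μ := by
  obtain ⟨δ, hδ, hδs⟩ : ∃ δ > 0, κ * ∫ y, φ y ∂μ = finrank ℝ E + s₁ + 3 * δ :=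
    ⟨(κ * (∫ y, φ y ∂μ) - (finrank ℝ E + s₁)) / 3, by linarith, by ring⟩
  obtain ⟨R, A, hmass, hexp⟩ := hv.exists_eventually_exp_le hφc hφ hκ hδ
  have hbound : ∀ᶠ r in atTop, ∀ x, ‖x‖ = r → ‖log⁺ ‖x‖ * f x‖ ≤ C₀ / δ * exp A *
      (‖x‖ ^ (-(finrank ℝ E + δ)) * exp (κ * nearPot μ (posTail R φ) x)) := by
    filter_upwards [eventually_ge_atTop 1, eventually_ge_atTop R₀, hexp]
    rintro _ hx1 hxR₀ hvx x rfl
    have hpos : 0 < ‖x‖ := by linarith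
    rw [norm_mul, norm_of_nonneg posLog_nonneg, norm_of_nonneg (hf0 x),
      posLog_eq_log (by rwa [abs_norm])]
    calc log ‖x‖ * f x ≤ ‖x‖ ^ δ / δ * (C₀ * ‖x‖ ^ s₁ * (exp A *
          (‖x‖ ^ (δ - κ * ∫ y, φ y ∂μ) * exp (κ * nearPot μ (posTail R φ) x)))) := by
          gcongr
          · exact hf0 x
          · exact log_le_rpow_div hpos.le hδ
          · exact (hf x hxR₀).trans (by gcongr; exact hvx x rfl)
      _ = _ := by
          rw [hδs, show -(finrank ℝ E + δ) = δ + s₁ + (δ - (finrank ℝ E + s₁ + 3 * δ)) by ring,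
            rpow_add hpos, rpow_add hpos]
          ring
  refine integrable_of_eventually_norm_le (by fun_prop) (.const_mul ?_ _) hbound
  refine integrableOn_rpow_norm_mul (K := μ.real (ball 0 1) + ∫ z, singKer 1 z ∂μ)
    (Nat.cast_nonneg _) hδ (fun x => (exp_pos _).le) fun ρ hρ => ?_
  simpa only [rpow_natCast] using setIntegral_exp_nearPot_le (posTail_nonneg R φ)
    (integrable_posTail hφ R) hρ hκ (by linarith)

end LightPart

section Cone

variable {E : Type*} [NormedAddCommGroup E] {r₀ : ℝ}

lemma abs_log_norm_sub_log_norm_le (hr₁ : r₀ < 1) {p x : E} (hp : p ≠ 0)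
    (hx : x ∈ ball p (r₀ * ‖p‖)) : |log ‖x‖ - log ‖p‖| ≤ log 2 - log (1 - r₀) := by
  have hp0 : 0 < ‖p‖ := norm_pos_iff.2 hp
  rw [mem_ball, dist_eq_norm] at hx
  have hlow : (1 - r₀) * ‖p‖ ≤ ‖x‖ := by
    rw [norm_sub_rev] at hx
    linarith [norm_sub_norm_le p x]
  have hup : ‖x‖ ≤ 2 * ‖p‖ := by nlinarith [norm_sub_norm_le x p]
  have hx0 : 0 < ‖x‖ := (mul_pos (sub_pos.2 hr₁) hp0).trans_le hlow
  have hloglow := log_le_log (mul_pos (sub_pos.2 hr₁) hp0) hlow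
  have hlogup := log_le_log hx0 hup
  rw [log_mul (sub_pos.2 hr₁).ne' hp0.ne'] at hloglow
  rw [log_mul two_ne_zero hp0.ne'] at hlogup
  have h2 : 0 ≤ log 2 := log_nonneg one_le_two
  have hr₀ : 0 < r₀ := pos_of_mul_pos_left ((norm_nonneg _).trans_lt hx) hp0.le
  have hlogr : log (1 - r₀) ≤ 0 := log_nonpos (sub_pos.2 hr₁).le (by linarith)
  rw [abs_sub_le_iff]
  constructor <;> linarith

variable [MeasurableSpace E] [BorelSpace E] {μ : Measure E} {φ ψ v : E → ℝ} {κ B : ℝ}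

lemma IsLogPotential.exists_cone_lower_bound (hv : IsLogPotential μ κ B φ v)
    (hφ : Integrable φ μ) (hκ : 0 ≤ κ) (s : ℝ) (hr₁ : r₀ < 1) :
    ∃ K, ∀ p x : E, 1 ≤ (1 - r₀) * ‖p‖ → x ∈ ball p (r₀ * ‖p‖) →
      (s - κ * ∫ y, φ y ∂μ) * log ‖p‖ + κ * truncMoment μ φ ‖p‖ - K
        + -(κ * nearPot μ (fun y => |φ y|) x) ≤ s * log ‖x‖ + v x := by
  set m := ∫ y, φ y ∂μ
  set L := log 2 - log (1 - r₀)
  refine ⟨|s - κ * m| * L + κ * (L * ∫ y, |φ y| ∂μ) + B, fun p x hp hx => ?_⟩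
  have hp0 : p ≠ 0 := by
    rintro rfl
    norm_num at hp
  have hx1 : 1 ≤ ‖x‖ := by
    rw [mem_ball, dist_eq_norm, norm_sub_rev] at hx
    linarith [norm_sub_norm_le p x]
  have hlog : |log ‖x‖ - log ‖p‖| ≤ L := abs_log_norm_sub_log_norm_le hr₁ hp0 hx
  have hradial : (s - κ * m) * (log ‖p‖ - log ‖x‖) ≤ |s - κ * m| * L := by
    rw [abs_sub_comm] at hlog
    exact (le_abs_self _).trans ((abs_mul _ _).trans_le (by gcongr))
  have hmoment : κ * (truncMoment μ φ ‖p‖ - truncMoment μ φ ‖x‖) ≤ κ * (L * ∫ y, |φ y| ∂μ) := by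
    gcongr
    refine (le_abs_self _).trans ((abs_truncMoment_sub_le hφ _ _).trans ?_)
    rw [abs_sub_comm] at hlog
    gcongr
  have hnear : κ * -nearPot μ (fun y => |φ y|) x ≤ κ * nearPot μ φ x := by
    gcongr
    refine neg_le_of_abs_le (abs_integral_le_integral_abs.trans_eq (integral_congr_ae
      (.of_forall fun y => ?_)))
    simp only [abs_mul, abs_of_nonneg posLog_nonneg]
  have := (abs_sub_le_iff.1 (hv x hx1)).2
  linarith

variable [NormedSpace ℝ E] [FiniteDimensional ℝ E] [Nontrivial E] [μ.IsAddHaarMeasure]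

lemma average_nearPot_ball_le (hψ0 : 0 ≤ ψ) (hψ : Integrable ψ μ) (hr₀ : 0 < r₀) (hr₁ : r₀ < 1)
    {p : E} (hp : p ≠ 0) :
    IntegrableOn (nearPot μ ψ) (ball p (r₀ * ‖p‖)) μ ∧
      ⨍ x in ball p (r₀ * ‖p‖), nearPot μ ψ x ∂μ ≤
        2 * (∫ z, singKer 1 z ∂μ) * (∫ y, ψ y ∂μ) * (2 / r₀) ^ finrank ℝ E / μ.real (ball 0 1) := by
  have hp0 : 0 < ‖p‖ := norm_pos_iff.2 hp
  have hsub : ball p (r₀ * ‖p‖) ⊆ ball 0 (2 * ‖p‖) :=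
    ball_subset_ball' (by rw [dist_zero_right]; nlinarith)
  have hvol := measureReal_ball_pos μ (0 : E) one_pos
  obtain ⟨hint, hle⟩ := setIntegral_nearPot_le hψ0 hψ (by positivity : 0 < 2 * ‖p‖)
  refine ⟨hint.mono_set hsub, ?_⟩
  rw [setAverage_eq, smul_eq_mul, measureReal_ball μ p (by positivity),
    inv_mul_le_iff₀ (by positivity)]
  calc ∫ x in ball p (r₀ * ‖p‖), nearPot μ ψ x ∂μ ≤ ∫ x in ball 0 (2 * ‖p‖), nearPot μ ψ x ∂μ :=
        setIntegral_mono_set hint (.of_forall (nearPot_nonneg hψ0)) hsub.eventuallyLE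
    _ ≤ _ := hle
    _ = _ := by
      rw [mul_pow, mul_pow, div_pow]
      field_simp

lemma exists_mul_pow_norm_le_setIntegral_exp_neg_nearPot (hψ0 : 0 ≤ ψ) (hψ : Integrable ψ μ)
    (hκ : 0 ≤ κ) (hr₀ : 0 < r₀) (hr₁ : r₀ < 1) :
    ∃ c > 0, ∀ p : E, p ≠ 0 →
      IntegrableOn (fun x => exp (-(κ * nearPot μ ψ x))) (ball p (r₀ * ‖p‖)) μ ∧
      c * ‖p‖ ^ finrank ℝ E ≤ ∫ x in ball p (r₀ * ‖p‖), exp (-(κ * nearPot μ ψ x)) ∂μ := by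
  set N := 2 * (∫ z, singKer 1 z ∂μ) * (∫ y, ψ y ∂μ) * (2 / r₀) ^ finrank ℝ E / μ.real (ball 0 1)
  have hvol := measureReal_ball_pos μ (0 : E) one_pos
  refine ⟨r₀ ^ finrank ℝ E * μ.real (ball 0 1) * exp (-(κ * N)), by positivity, fun p hp => ?_⟩
  obtain ⟨hint, hN⟩ := average_nearPot_ball_le hψ0 hψ hr₀ hr₁ hp
  set S := ball p (r₀ * ‖p‖)
  have hS0 : μ S ≠ 0 := (measure_ball_pos μ p (by positivity)).ne'
  have hStop : μ S ≠ ⊤ := measure_ball_lt_top.ne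
  have hκint : IntegrableOn (fun x => -(κ * nearPot μ ψ x)) S μ := (hint.const_mul κ).neg
  have hexp : IntegrableOn (fun x => exp (-(κ * nearPot μ ψ x))) S μ := by
    refine (integrableOn_const (C := (1 : ℝ)) hStop).mono'
      (continuous_exp.comp_aestronglyMeasurable hκint.1) (.of_forall fun x => ?_)
    rw [norm_of_nonneg (exp_pos _).le, exp_le_one_iff, neg_nonpos]
    exact mul_nonneg hκ (nearPot_nonneg hψ0 x)
  refine ⟨hexp, ?_⟩
  have hjensen : exp (⨍ x in S, -(κ * nearPot μ ψ x) ∂μ)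
      ≤ ⨍ x in S, exp (-(κ * nearPot μ ψ x)) ∂μ :=
    convexOn_exp.map_set_average_le continuous_exp.continuousOn isClosed_univ hS0 hStop
      (.of_forall fun _ => trivial) hκint hexp
  have havg : ⨍ x in S, -(κ * nearPot μ ψ x) ∂μ = -(κ * ⨍ x in S, nearPot μ ψ x ∂μ) := by
    rw [average_neg, setAverage_eq, setAverage_eq, integral_const_mul, smul_eq_mul, smul_eq_mul,
      mul_left_comm]
  calc r₀ ^ finrank ℝ E * μ.real (ball 0 1) * exp (-(κ * N)) * ‖p‖ ^ finrank ℝ E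
      = μ.real S * exp (-(κ * N)) := by
        rw [measureReal_ball μ p (by positivity), mul_pow]
        ring
    _ ≤ μ.real S * exp (-(κ * ⨍ x in S, nearPot μ ψ x ∂μ)) := by gcongr
    _ ≤ μ.real S * ⨍ x in S, exp (-(κ * nearPot μ ψ x)) ∂μ := by
        rw [← havg]
        gcongr
    _ = ∫ x in S, exp (-(κ * nearPot μ ψ x)) ∂μ := measure_smul_setAverage _ hStop

lemma IsLogPotential.exists_mul_log_add_truncMoment_le (hv : IsLogPotential μ κ B φ v)
    (hφ : Integrable φ μ) (hκ : 0 ≤ κ) {s c₁ : ℝ} (hc₁ : 0 < c₁) (hr₀ : 0 < r₀) (hr₁ : r₀ < 1) :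
    ∃ M, ∀ p : E, 1 ≤ (1 - r₀) * ‖p‖ →
      (∀ x ∈ ball p (r₀ * ‖p‖), c₁ * (‖x‖ ^ s * exp (v x)) ≤ |φ x|) →
      (finrank ℝ E + s - κ * ∫ y, φ y ∂μ) * log ‖p‖ + κ * truncMoment μ φ ‖p‖ ≤ M := by
  obtain ⟨K, hK⟩ := hv.exists_cone_lower_bound hφ hκ s hr₁
  obtain ⟨c, hc, hJ⟩ := exists_mul_pow_norm_le_setIntegral_exp_neg_nearPot
    (ψ := fun y => |φ y|) (fun y => abs_nonneg _) hφ.abs hκ hr₀ hr₁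
  refine ⟨exp K * (∫ y, |φ y| ∂μ) / (c₁ * c), fun p hp hcone => ?_⟩
  have hp0 : 0 < ‖p‖ := pos_of_mul_pos_right (one_pos.trans_le hp) (sub_pos.2 hr₁).le
  obtain ⟨hint, hle⟩ := hJ p (norm_pos_iff.1 hp0)
  set G := (s - κ * ∫ y, φ y ∂μ) * log ‖p‖ + κ * truncMoment μ φ ‖p‖
  have hpoint (x : E) (hx : x ∈ ball p (r₀ * ‖p‖)) :
      c₁ * exp (G - K) * exp (-(κ * nearPot μ (fun y => |φ y|) x)) ≤ |φ x| := by
    have hx0 : 0 < ‖x‖ := by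
      rw [mem_ball, dist_eq_norm, norm_sub_rev] at hx
      linarith [norm_sub_norm_le p x]
    refine le_trans ?_ (hcone x hx)
    rw [mul_assoc, ← exp_add, rpow_def_of_pos hx0, ← exp_add, mul_comm (log _)]
    exact mul_le_mul_of_nonneg_left (exp_le_exp.2 (hK p x hp hx)) hc₁.le
  have hmass : c₁ * exp (G - K) * (c * ‖p‖ ^ finrank ℝ E) ≤ ∫ y, |φ y| ∂μ :=
    calc c₁ * exp (G - K) * (c * ‖p‖ ^ finrank ℝ E)
        ≤ ∫ x in ball p (r₀ * ‖p‖), c₁ * exp (G - K) *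
            exp (-(κ * nearPot μ (fun y => |φ y|) x)) ∂μ := by
          rw [integral_const_mul]
          gcongr
      _ ≤ ∫ x in ball p (r₀ * ‖p‖), |φ x| ∂μ :=
          setIntegral_mono_on (hint.const_mul _) hφ.abs.integrableOn measurableSet_ball hpoint
      _ ≤ ∫ y, |φ y| ∂μ := setIntegral_le_integral hφ.abs (.of_forall fun y => abs_nonneg _)
  calc (finrank ℝ E + s - κ * ∫ y, φ y ∂μ) * log ‖p‖ + κ * truncMoment μ φ ‖p‖
      = log ‖p‖ * finrank ℝ E + G := by ring
    _ ≤ exp (log ‖p‖ * finrank ℝ E + G) := by linarith [add_one_le_exp (log ‖p‖ * finrank ℝ E + G)]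
    _ = exp K * (c₁ * exp (G - K) * (c * ‖p‖ ^ finrank ℝ E)) / (c₁ * c) := by
        rw [exp_add, ← rpow_def_of_pos hp0, rpow_natCast, exp_sub]
        field_simp
    _ ≤ exp K * (∫ y, |φ y| ∂μ) / (c₁ * c) := by gcongr

end Cone

section Decay

variable {E : Type*} [NormedAddCommGroup E] [NormedSpace ℝ E] [MeasurableSpace E] {μ : Measure E}
  {φ ψ v : E → ℝ} {κ B c A R : ℝ}

lemma posLog_mul_le_of_le_rpow_mul_exp (hψ0 : 0 ≤ ψ) (hA : 0 ≤ A) (hR : 0 < R)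
    (hψA : ∀ y, R ≤ ‖y‖ → ψ y ≤ A * (‖y‖ ^ (-(finrank ℝ E : ℝ)) * exp (c * nearPot μ ψ y)))
    {x : E} (hx : 2 * R ≤ ‖x‖) (y : E) :
    log⁺ (‖x‖ / ‖x - y‖) * ψ y ≤ log 2 * ψ y + A * (‖x‖ / 2) ^ (-(finrank ℝ E : ℝ)) *
      (8 * singKer ‖x‖ (x - y) +
        (ball 0 (2 * ‖x‖)).indicator (fun y => exp (2 * c * nearPot μ ψ y)) y) := by
  have hind : 0 ≤ (ball 0 (2 * ‖x‖)).indicator (fun y => exp (2 * c * nearPot μ ψ y)) y :=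
    Set.indicator_nonneg (fun _ _ => (exp_pos _).le) y
  have hker := singKer_nonneg ‖x‖ (x - y)
  rcases le_or_gt ‖x‖ (2 * ‖x - y‖) with hfar | hclose
  · refine le_add_of_le_of_nonneg (mul_le_mul_of_nonneg_right ?_ (hψ0 y)) (by positivity)
    exact posLog_div_le_log_two (norm_nonneg _) (norm_nonneg _) hfar
  have hxy := norm_sub_norm_le x y
  have hyx := norm_sub_norm_le y x
  rw [norm_sub_rev y x] at hyx
  rw [Set.indicator_of_mem (mem_ball_zero_iff.2 (by linarith))]
  refine le_add_of_nonneg_of_le (mul_nonneg (log_nonneg one_le_two) (hψ0 y)) ?_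
  have hsq := posLog_sq_le_singKer ‖x‖ (x - y)
  set l := log⁺ (‖x‖ / ‖x - y‖)
  set e := exp (c * nearPot μ ψ y) with he
  have hl : 0 ≤ l := posLog_nonneg
  calc l * ψ y ≤ l * (A * ((‖x‖ / 2) ^ (-(finrank ℝ E : ℝ)) * e)) := by
        gcongr
        refine (hψA y (by linarith)).trans ?_
        gcongr A * (?_ * _)
        exact rpow_le_rpow_of_nonpos (by linarith) (by linarith) (by simp)
    _ = A * (‖x‖ / 2) ^ (-(finrank ℝ E : ℝ)) * (l * e) := by ring
    _ ≤ A * (‖x‖ / 2) ^ (-(finrank ℝ E : ℝ)) *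
          (8 * singKer ‖x‖ (x - y) + exp (2 * c * nearPot μ ψ y)) := by
        have : exp (2 * c * nearPot μ ψ y) = e ^ 2 := by
          rw [he, ← exp_nat_mul]
          ring_nf
        gcongr
        nlinarith [sq_nonneg (l - e)]

variable [BorelSpace E] [FiniteDimensional ℝ E] [Nontrivial E] [μ.IsAddHaarMeasure]

lemma exists_nearPot_le_of_le_rpow_mul_exp (hψ0 : 0 ≤ ψ) (hψ : Integrable ψ μ)
    (hc : 0 ≤ c) (hcψ : 4 * c * ∫ y, ψ y ∂μ ≤ 1) (hA : 0 ≤ A) (hR : 0 < R)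
    (hψA : ∀ y, R ≤ ‖y‖ → ψ y ≤ A * (‖y‖ ^ (-(finrank ℝ E : ℝ)) * exp (c * nearPot μ ψ y))) :
    ∃ D, ∀ x, 2 * R ≤ ‖x‖ → nearPot μ ψ x ≤ D := by
  refine ⟨log 2 * (∫ y, ψ y ∂μ) + A * 2 ^ finrank ℝ E * (8 * (∫ z, singKer 1 z ∂μ) +
    (μ.real (ball 0 1) + ∫ z, singKer 1 z ∂μ) * 2 ^ finrank ℝ E), fun x hx => ?_⟩
  have hx0 : 0 < ‖x‖ := by linarith
  obtain ⟨hexp, hexple⟩ := setIntegral_exp_nearPot_le hψ0 hψ (by positivity : 0 < 2 * ‖x‖)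
    (by positivity : 0 ≤ 2 * c) (by linarith)
  have hker : Integrable (fun y => 8 * singKer ‖x‖ (x - y)) μ :=
    ((integrable_singKer hx0.le).comp_sub_left x).const_mul 8
  have hind := (integrable_indicator_iff measurableSet_ball).2 hexp
  have hloc : Integrable (fun y => A * (‖x‖ / 2) ^ (-(finrank ℝ E : ℝ)) *
      (8 * singKer ‖x‖ (x - y) +
        (ball 0 (2 * ‖x‖)).indicator (fun y => exp (2 * c * nearPot μ ψ y)) y)) μ :=
    (hker.add hind).const_mul _
  calc nearPot μ ψ x
      ≤ ∫ y, (log 2 * ψ y + A * (‖x‖ / 2) ^ (-(finrank ℝ E : ℝ)) * (8 * singKer ‖x‖ (x - y) +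
          (ball 0 (2 * ‖x‖)).indicator (fun y => exp (2 * c * nearPot μ ψ y)) y)) ∂μ :=
        integral_mono_of_nonneg (.of_forall fun y => mul_nonneg posLog_nonneg (hψ0 y))
          ((hψ.const_mul _).add hloc)
          (.of_forall (posLog_mul_le_of_le_rpow_mul_exp hψ0 hA hR hψA hx))
    _ = log 2 * (∫ y, ψ y ∂μ) + A * (‖x‖ / 2) ^ (-(finrank ℝ E : ℝ)) *
          (8 * (‖x‖ ^ finrank ℝ E * ∫ z, singKer 1 z ∂μ) +
            ∫ y in ball 0 (2 * ‖x‖), exp (2 * c * nearPot μ ψ y) ∂μ) := by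
        rw [integral_add (hψ.const_mul _) hloc, integral_const_mul, integral_const_mul,
          integral_add hker hind, integral_const_mul, integral_indicator measurableSet_ball,
          integral_sub_left_eq_self (singKer ‖x‖) μ x, integral_singKer μ hx0]
    _ ≤ log 2 * (∫ y, ψ y ∂μ) + A * (‖x‖ / 2) ^ (-(finrank ℝ E : ℝ)) *
          (8 * (‖x‖ ^ finrank ℝ E * ∫ z, singKer 1 z ∂μ) +
            (μ.real (ball 0 1) + ∫ z, singKer 1 z ∂μ) * (2 * ‖x‖) ^ finrank ℝ E) := by gcongr
    _ = _ := by
        rw [rpow_neg (by positivity), rpow_natCast, div_pow, mul_pow]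
        field_simp

lemma IsLogPotential.exists_abs_le_rpow_neg_finrank (hv : IsLogPotential μ κ B φ v)
    (hφc : Continuous φ) (hφ : Integrable φ μ) (hκ : 0 ≤ κ) {s C M : ℝ} (hC : 0 ≤ C)
    (hφs : ∀ x, 1 ≤ ‖x‖ → |φ x| ≤ C * (‖x‖ ^ s * exp (v x)))
    (hM : ∀ᶠ r in atTop,
      (finrank ℝ E + s - κ * ∫ y, φ y ∂μ) * log r + κ * truncMoment μ φ r ≤ M) :
    ∃ C' > 0, ∃ R > 0, ∀ x, R ≤ ‖x‖ → |φ x| ≤ C' * ‖x‖ ^ (-(finrank ℝ E : ℝ)) := by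
  obtain ⟨R, A, -, hmass, hbound⟩ :=
    hv.exists_posTail_bound hφc hφ hκ (by norm_num : (0 : ℝ) < 1 / 4)
  obtain ⟨R', hR'⟩ := (hM.and (eventually_ge_atTop (2 * R))).exists_forall_of_atTop
  have hR0 : 0 < max R' 1 := lt_max_of_lt_right one_pos
  have hdecay (x : E) (hx : max R' 1 ≤ ‖x‖) : |φ x| ≤
      C * exp (M + A) * (‖x‖ ^ (-(finrank ℝ E : ℝ)) * exp (κ * nearPot μ (posTail R φ) x)) := by
    obtain ⟨hgrowth, hxR⟩ := hR' ‖x‖ (le_of_max_le_left hx)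
    refine (hφs x (le_of_max_le_right hx)).trans ?_
    rw [mul_assoc, rpow_def_of_pos (hR0.trans_le hx), rpow_def_of_pos (hR0.trans_le hx),
      ← exp_add, ← exp_add, ← exp_add]
    exact mul_le_mul_of_nonneg_left (exp_le_exp.2 (by linarith [hbound x hxR])) hC
  obtain ⟨D, hD⟩ := exists_nearPot_le_of_le_rpow_mul_exp (posTail_nonneg R φ)
    (integrable_posTail hφ R) hκ (by linarith) (by positivity) hR0
    fun y hy => (posTail_le_abs R φ y).trans (hdecay y hy)
  refine ⟨C * exp (M + A) * exp (κ * D) + 1, by positivity, 2 * max R' 1, by positivity,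
    fun x hx => (hdecay x (by linarith)).trans ?_⟩
  rw [mul_left_comm, mul_comm _ (‖x‖ ^ _)]
  gcongr
  refine le_add_of_le_of_nonneg ?_ zero_le_one
  gcongr
  exact hD x hx

end Decay

section ConeCondition

variable {E : Type*} [NormedAddCommGroup E]

/-- The `s`-cone condition on an arbitrary normed space: `ψ` has growth at most `‖x‖ ^ s`, and
attains it on a sequence of balls whose radii are proportional to the norms of their centres. -/
def ConeCondition (ψ : E → ℝ) (s : ℝ) : Prop :=
  ∃ (C c₁ r₀ : ℝ) (p : ℕ → E), 0 < C ∧ 0 < c₁ ∧ 0 < r₀ ∧ r₀ < 1 ∧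
    (∀ i, 1 ≤ ‖p i‖) ∧ Tendsto (fun i => ‖p i‖) atTop atTop ∧
    (∀ x, |ψ x| ≤ C * (‖x‖ + 1) ^ s) ∧
    ∀ i, ∀ x ∈ ball (p i) (r₀ * ‖p i‖), c₁ * ‖x‖ ^ s ≤ |ψ x|

lemma add_one_rpow_le_two_rpow_abs_mul {t : ℝ} (ht : 1 ≤ t) (s : ℝ) :
    (t + 1) ^ s ≤ 2 ^ |s| * t ^ s := by
  have ht0 : 0 < t := one_pos.trans_le ht
  rcases le_total 0 s with hs | hs
  · rw [abs_of_nonneg hs, ← mul_rpow zero_le_two ht0.le]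
    exact rpow_le_rpow (by positivity) (by linarith) hs
  · calc (t + 1) ^ s ≤ t ^ s := rpow_le_rpow_of_nonpos ht0 (by linarith) hs
      _ ≤ 2 ^ |s| * t ^ s := le_mul_of_one_le_left (by positivity)
        (one_le_rpow one_le_two (abs_nonneg s))

lemma ConeCondition.neg {ψ : E → ℝ} {s : ℝ} (hψ : ConeCondition ψ s) : ConeCondition (-ψ) s := by
  simpa only [ConeCondition, Pi.neg_apply, abs_neg] using hψ

lemma ConeCondition.nontrivial {ψ : E → ℝ} {s : ℝ} (hψ : ConeCondition ψ s) : Nontrivial E := by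
  obtain ⟨_, _, _, p, _, _, _, _, hp, _⟩ := hψ
  exact nontrivial_of_ne (p 0) 0 (norm_pos_iff.1 (one_pos.trans_le (hp 0)))

variable [MeasurableSpace E] [BorelSpace E] [NormedSpace ℝ E] [FiniteDimensional ℝ E]
  {μ : Measure E} [μ.IsAddHaarMeasure] {φ v Q : E → ℝ} {κ : ℝ}

lemma exists_isLogPotential [Nontrivial E] (hφc : Continuous φ) (hφ : Integrable φ μ) {C : ℝ}
    (hv : ∀ x, 1 ≤ ‖x‖ → v x = κ * (∫ y, log (‖y‖ / ‖x - y‖) * φ y ∂μ) + C) :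
    ∃ B, IsLogPotential μ κ B φ v := by
  refine ⟨|κ| * (|∫ y, log⁺ (1 / ‖0 - y‖) * φ y ∂μ| + log 2 * ∫ y, |φ y| ∂μ) + |C|,
    fun x hx => ?_⟩
  rw [hv x hx, add_sub_right_comm, ← mul_sub]
  refine (abs_add_le _ _).trans (add_le_add_left ?_ _)
  rw [abs_mul]
  gcongr
  exact (abs_integral_log_sub_le hφc hφ hx).2

lemma IsLogPotential.exists_decay_of_coneCondition {B s s₁ C₀ R₀ : ℝ} (hQc : Continuous Q)
    (hvc : Continuous v) (hφ : Integrable (fun x => Q x * exp (v x)) μ)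
    (hv : IsLogPotential μ κ B (fun x => Q x * exp (v x)) v) (hκ : 0 ≤ κ)
    (hQ : ConeCondition Q s) (hs₁ : s₁ < s) (hC₀ : 0 ≤ C₀)
    (hpart : (∀ x, R₀ ≤ ‖x‖ → max (Q x) 0 ≤ C₀ * ‖x‖ ^ s₁) ∨
      ∀ x, R₀ ≤ ‖x‖ → max (-Q x) 0 ≤ C₀ * ‖x‖ ^ s₁) :
    ∃ C > 0, ∃ R > 0, ∀ x, R ≤ ‖x‖ → |Q x| * exp (v x) ≤ C * ‖x‖ ^ (-(finrank ℝ E : ℝ)) := by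
  have := hQ.nontrivial
  obtain ⟨C, c₁, r₀, p, hC, hc₁, hr₀, hr₁, -, hp, hup, hlow⟩ := hQ
  have hφc : Continuous fun x => Q x * exp (v x) := by fun_prop
  have habs (x : E) : |Q x * exp (v x)| = |Q x| * exp (v x) := by rw [abs_mul, abs_exp]
  obtain ⟨M, hM⟩ := hv.exists_mul_log_add_truncMoment_le hφ hκ (s := s) hc₁ hr₀ hr₁
  obtain ⟨N, hN⟩ := eventually_atTop.1
    ((hp.const_mul_atTop (sub_pos.2 hr₁)).eventually_ge_atTop 1)
  have hτ : Tendsto (fun i => ‖p (i + N)‖) atTop atTop :=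
    hp.comp (tendsto_add_atTop_nat N)
  have hMτ (i : ℕ) := hM (p (i + N)) (hN _ (Nat.le_add_left N i)) fun x hx => by
    rw [habs, ← mul_assoc]
    exact mul_le_mul_of_nonneg_right (hlow _ x hx) (exp_pos _).le
  have hθ := nonpos_of_mul_log_add_truncMoment_le hφ hτ hMτ
  have hmass : finrank ℝ E + s₁ < κ * ∫ y, Q y * exp (v y) ∂μ := by linarith
  have hlight {F : E → ℝ} (hFc : Continuous F)
      (hF : ∀ x, R₀ ≤ ‖x‖ → max (F x) 0 ≤ C₀ * ‖x‖ ^ s₁) :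
      Integrable (fun x => log⁺ ‖x‖ * max (F x * exp (v x)) 0) μ := by
    refine hv.integrable_posLog_mul hφc hφ hκ hmass (by fun_prop) (fun x => le_max_right _ _) hC₀
      (R₀ := R₀) fun x hx => ?_
    rw [← zero_mul (exp (v x)), ← max_mul_of_nonneg _ _ (exp_pos _).le]
    gcongr
    exact hF x hx
  obtain ⟨M', hM'⟩ := exists_eventually_mul_log_add_truncMoment_le hφ hκ hτ hMτ <|
    hpart.imp (hlight hQc) fun h => by simpa only [Pi.neg_apply, neg_mul] using hlight hQc.neg h
  simp only [← habs]
  refine hv.exists_abs_le_rpow_neg_finrank hφc hφ hκ (C := C * 2 ^ |s|) (by positivity)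
    (fun x hx => ?_) hM'
  rw [habs, ← mul_assoc, mul_assoc C]
  gcongr
  exact (hup x).trans (by gcongr; exact add_one_rpow_le_two_rpow_abs_mul hx s)

end ConeCondition

lemma exists_mul_integral_add_const_eq {ι α : Type*} [MeasurableSpace α] (ν : Measure α)
    (κ C : ℝ) {f : ι → α → ℝ} (hf : ∀ i, Integrable (f i) ν) :
    ∃ κ' C', ∀ i, κ * ∫ y, (f i y + C) ∂ν = κ' * (∫ y, f i y ∂ν) + C' := by
  by_cases hC : Integrable (fun _ => C) ν
  · exact ⟨κ, κ * ∫ _, C ∂ν, fun i => by rw [integral_add (hf i) hC, mul_add]⟩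
  · refine ⟨0, 0, fun i => ?_⟩
    rw [integral_undef fun h => hC <| by simpa [Pi.sub_def] using h.sub (hf i)]
    ring

end NormalSolution

/- The integral sign in `IsNormalSolution` extends over the additive constant, so that for a
nonzero constant the integrand is not integrable and `u` vanishes. Both readings of the formula are
covered by allowing an arbitrary factor `κ`. -/
open NormalSolution in
lemma IsNormalSolution.exists_eq_mul_integral_log_add {n : ℕ} {u Q : EuclideanSpace ℝ (Fin n) → ℝ}
    (h : IsNormalSolution n u Q) : ∃ κ C : ℝ, ∀ x, 1 ≤ ‖x‖ →
      u x = κ * (∫ y, log (‖y‖ / ‖x - y‖) * (Q y * exp (n * u y))) + C := by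
  obtain ⟨hu, hQ, hint, C, hC⟩ := h
  have huc := hu.continuous
  have hQc := hQ.continuous
  obtain ⟨κ, C', h⟩ := exists_mul_integral_add_const_eq volume
    (2 / (Nat.factorial (n - 1) * sphereVol n)) C
    (f := fun (x : {x : EuclideanSpace ℝ (Fin n) // 1 ≤ ‖x‖}) y =>
      log (‖y‖ / ‖x.1 - y‖) * (Q y * exp (n * u y))) fun x => by
    have : Nontrivial (EuclideanSpace ℝ (Fin n)) :=
      nontrivial_of_ne x.1 0 (norm_pos_iff.1 (one_pos.trans_le x.2))
    exact (abs_integral_log_sub_le (by fun_prop) hint x.2).1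
  exact ⟨κ, C', fun x hx => (hC x).trans (h ⟨x, hx⟩)⟩

open NormalSolution Module in
theorem Qenu_decay_of_scone_general {E : Type*} [NormedAddCommGroup E] [NormedSpace ℝ E]
    [FiniteDimensional ℝ E] [MeasurableSpace E] [BorelSpace E] {μ : Measure E}
    [μ.IsAddHaarMeasure] {u Q : E → ℝ} {a κ b : ℝ} (hu : Continuous u) (hQ : Continuous Q)
    (hint : Integrable (fun x => Q x * exp (a * u x)) μ)
    (hrep : ∀ x, 1 ≤ ‖x‖ →
      u x = κ * (∫ y, log (‖y‖ / ‖x - y‖) * (Q y * exp (a * u y)) ∂μ) + b)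
    {s s₁ C₀ R₀ : ℝ} (hcone : ConeCondition Q s) (hs₁ : s₁ < s) (hC₀ : 0 ≤ C₀)
    (hpart : (∀ x, R₀ ≤ ‖x‖ → max (Q x) 0 ≤ C₀ * ‖x‖ ^ s₁) ∨
      ∀ x, R₀ ≤ ‖x‖ → max (-Q x) 0 ≤ C₀ * ‖x‖ ^ s₁) :
    ∃ C > 0, ∃ R > 0, ∀ x, R ≤ ‖x‖ →
      |Q x| * exp (a * u x) ≤ C * ‖x‖ ^ (-(finrank ℝ E : ℝ)) := by
  have := hcone.nontrivial
  have hrep_mul (x : E) (hx : 1 ≤ ‖x‖) : a * u x =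
      a * κ * (∫ y, log (‖y‖ / ‖x - y‖) * (Q y * exp (a * u y)) ∂μ) + a * b := by
    rw [hrep x hx]
    ring
  rcases le_total 0 (a * κ) with hκ | hκ
  · obtain ⟨B, hB⟩ := exists_isLogPotential (by fun_prop) hint hrep_mul
    exact hB.exists_decay_of_coneCondition hQ (by fun_prop) hint hκ hcone hs₁ hC₀ hpart
  · have hint_neg : Integrable (fun x => -Q x * exp (a * u x)) μ := by
      simpa only [neg_mul] using! hint.neg
    obtain ⟨B, hB⟩ := exists_isLogPotential (κ := -(a * κ)) (v := fun x => a * u x)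
        (C := a * b) (by fun_prop) hint_neg fun x hx => by
      rw [hrep_mul x hx]
      simp only [neg_mul, mul_neg, integral_neg, neg_neg]
    simpa only [Pi.neg_apply, abs_neg] using hB.exists_decay_of_coneCondition hQ.neg
      (by fun_prop) hint_neg (neg_nonneg.2 hκ) hcone.neg hs₁ hC₀ (by simpa using hpart.symm)

theorem Qenu_decay_of_scone (n : ℕ) (hn : 2 ≤ n) (heven : Even n)
    (u Q : EuclideanSpace ℝ (Fin n) → ℝ)
    (hnormal : IsNormalSolution n u Q)
    (s : ℝ) (hcone : SCone n Q s)
    (hpart : ∃ s₁ C₀ R₀ : ℝ, s₁ < s ∧ 0 < C₀ ∧ 0 < R₀ ∧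
      ((∀ x : EuclideanSpace ℝ (Fin n), R₀ ≤ ‖x‖ → max (Q x) 0 ≤ C₀ * ‖x‖ ^ s₁) ∨
       (∀ x : EuclideanSpace ℝ (Fin n), R₀ ≤ ‖x‖ → max (-Q x) 0 ≤ C₀ * ‖x‖ ^ s₁))) :
    ∃ C R₁ : ℝ, 0 < C ∧ 0 < R₁ ∧
      ∀ x : EuclideanSpace ℝ (Fin n), R₁ ≤ ‖x‖ →
        |Q x| * Real.exp (n * u x) ≤ C * ‖x‖ ^ (-(n : ℝ)) := by
  obtain ⟨κ, b, hrep⟩ := hnormal.exists_eq_mul_integral_log_add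
  obtain ⟨hu, hQ, hint, -⟩ := hnormal
  obtain ⟨s₁, C₀, R₀, hs₁, hC₀, -, hpart⟩ := hpart
  obtain ⟨C, hC, R, hR, hdecay⟩ := Qenu_decay_of_scone_general hu.continuous hQ.continuous hint
    hrep hcone hs₁ hC₀.le hpart
  exact ⟨C, R, hC, hR, by simpa only [finrank_euclideanSpace_fin] using hdecay⟩
end

section
/- Let u and f be smooth functions on ℝ² with −Δu(x) = f(x)·e^{2u(x)} for all x ∈ ℝ² and f(x) ≤ 1 for all x. Then ∫_{ℝ²} e^{2u(x)} dx ≥ 4π (the integral may be +∞), and if equality holds then f(x) = 1 for all x. -/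
open MeasureTheory Real Filter RealInnerProductSpace

/-- The Euclidean Laplacian on ℝ²: `Δf(x) = ∑ᵢ D²f(x)[eᵢ, eᵢ]`. -/
noncomputable def laplacian (f : EuclideanSpace ℝ (Fin 2) → ℝ)
    (x : EuclideanSpace ℝ (Fin 2)) : ℝ :=
  ∑ i : Fin 2, iteratedFDeriv ℝ 2 f x (fun _ => EuclideanSpace.single i 1)

/-!
The substitution `v = e⁻ᵘ` turns the curvature equation into `v Δv = f + |∇v|²`, hence
`v Δv ≤ (n / 2) (1 + |∇v|²)` with `n = 2`, and the conformal area becomes `∫ v⁻ⁿ`. Where the tangent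
plane of `v` lies below its graph, the Hessian is positive and AM-GM gives `det D²v ≤ (Δv / n)ⁿ`;
times the density `(2 / (1 + |p|²))ⁿ` of the spherical area at `p = ∇v`, this is at most `v⁻ⁿ`. So,
by the area formula, `∫ v⁻ⁿ` dominates the spherical area of the slopes of supporting planes, which
is that of the whole sphere as soon as `v` grows superlinearly.

Superlinear growth follows from finite area by the same method: if `r ≤ v z ≤ K r`, adding to `v` a
paraboloid of height `2 v z` over the ball of radius `r` at `z` forces every slope of length less
than `1` to occur inside that ball, so the ball carries an area bounded below in terms of `K`, which
is impossible far out. If the areas are equal, the pointwise inequalities are equalities almost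
everywhere, and everywhere by continuity.
-/

open Set Metric Module
open scoped ENNReal NNReal Topology Gradient Laplacian InnerProductSpace

section DetTrace

variable {E : Type*} [NormedAddCommGroup E] [InnerProductSpace ℝ E] [FiniteDimensional ℝ E]

theorem det_le_trace_div_finrank_pow_of_isPositive {T : E →ₗ[ℝ] E} (hT : T.IsPositive) :
    T.det ≤ (LinearMap.trace ℝ E T / finrank ℝ E) ^ finrank ℝ E := by
  rcases Nat.eq_zero_or_pos (finrank ℝ E) with hE | hE
  · simp [hE, LinearMap.det_eq_one_of_finrank_eq_zero hE]
  have hamgm := geom_mean_le_arith_mean Finset.univ (fun _ => 1)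
    (hT.isSymmetric.eigenvalues rfl) (by simp) (by simpa) fun i _ => hT.nonneg_eigenvalues rfl i
  rw [hT.isSymmetric.det_eq_prod_eigenvalues rfl, hT.isSymmetric.trace_eq_sum_eigenvalues rfl]
  have hprod : 0 ≤ ∏ i, hT.isSymmetric.eigenvalues rfl i :=
    Finset.prod_nonneg fun i _ => hT.nonneg_eigenvalues rfl i
  simpa [Real.rpow_inv_natCast_pow, hprod, hE.ne'] using
    pow_le_pow_left₀ (by simpa using rpow_nonneg hprod _) hamgm (finrank ℝ E)

end DetTrace

section SecondOrderCondition

theorem deriv_deriv_nonneg_of_isLocalMin {φ : ℝ → ℝ} {t : ℝ} (hφ : ContinuousAt φ t)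
    (hmin : IsLocalMin φ t) : 0 ≤ deriv (deriv φ) t := by
  by_contra! hneg
  have hmax : IsLocalMax φ t := isLocalMax_of_deriv_deriv_neg hneg hmin.deriv_eq_zero hφ
  have hconst : φ =ᶠ[𝓝 t] fun _ => φ t := by
    filter_upwards [hmin, hmax] with s hs hs' using le_antisymm hs' hs
  exact hneg.ne (by simpa using hconst.deriv.deriv_eq)

theorem fderiv_fderiv_apply_self_nonneg_of_isLocalMin {E : Type*} [NormedAddCommGroup E]
    [NormedSpace ℝ E] {w : E → ℝ} {x : E} (hw : ContDiffAt ℝ 2 w x) (hmin : IsLocalMin w x)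
    (h : E) : 0 ≤ fderiv ℝ (fderiv ℝ w) x h h := by
  have hline (t : ℝ) : HasDerivAt (fun s : ℝ => x + s • h) h t := by
    simpa using ((hasDerivAt_id t).smul_const h).const_add x
  have htendsto : Tendsto (fun s : ℝ => x + s • h) (𝓝 0) (𝓝 x) := by
    simpa using (hline 0).continuousAt.tendsto
  have hdiff : ∀ᶠ y in 𝓝 x, DifferentiableAt ℝ w y :=
    (hw.eventually (by simp)).mono fun y hy => hy.differentiableAt two_ne_zero
  have hderiv : deriv (fun s : ℝ => w (x + s • h)) =ᶠ[𝓝 0] fun s => fderiv ℝ w (x + s • h) h := by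
    filter_upwards [htendsto.eventually hdiff] with s hs
    exact (hs.hasFDerivAt.comp_hasDerivAt s (hline s)).deriv
  have hdiff₂ : DifferentiableAt ℝ (fderiv ℝ w) x :=
    (hw.fderiv_right (m := 1) le_rfl).differentiableAt one_ne_zero
  have hderiv₂ : HasDerivAt (fun s : ℝ => fderiv ℝ w (x + s • h) h)
      (fderiv ℝ (fderiv ℝ w) x h h) 0 := by
    simpa using (hdiff₂.hasFDerivAt.comp_hasDerivAt_of_eq 0 (hline 0) (by simp)).clm_apply
      (hasDerivAt_const 0 h)
  rw [← hderiv₂.deriv, ← hderiv.deriv_eq]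
  refine deriv_deriv_nonneg_of_isLocalMin (ContinuousAt.comp ?_ (hline 0).continuousAt) ?_
  · simpa using hw.continuousAt
  · simpa [IsLocalMin, IsMinFilter] using htendsto.eventually hmin

end SecondOrderCondition

section Gradient

theorem differentiable_fderiv_of_contDiff_two {E : Type*} [NormedAddCommGroup E]
    [NormedSpace ℝ E] {v : E → ℝ} (hv : ContDiff ℝ 2 v) : Differentiable ℝ (fderiv ℝ v) :=
  (hv.fderiv_right (m := 1) le_rfl).differentiable one_ne_zero

variable {E : Type*} [NormedAddCommGroup E] [InnerProductSpace ℝ E]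

theorem contDiff_gradient [CompleteSpace E] {v : E → ℝ} {k : WithTop ℕ∞}
    (hv : ContDiff ℝ (k + 1) v) : ContDiff ℝ k (∇ v) :=
  (InnerProductSpace.toDual ℝ E).symm.contDiff.comp (hv.fderiv_right le_rfl)

theorem inner_fderiv_gradient_left [CompleteSpace E] {v : E → ℝ} {x : E}
    (hv : DifferentiableAt ℝ (fderiv ℝ v) x) (h k : E) :
    ⟪fderiv ℝ (∇ v) x h, k⟫ = fderiv ℝ (fderiv ℝ v) x h k := by
  have hgrad : HasFDerivAt (∇ v) _ x :=
    (InnerProductSpace.toDual ℝ E).symm.toContinuousLinearEquiv.hasFDerivAt.comp x hv.hasFDerivAt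
  simp [hgrad.fderiv]

variable [FiniteDimensional ℝ E]

theorem trace_fderiv_gradient {v : E → ℝ} {x : E} (hv : DifferentiableAt ℝ (fderiv ℝ v) x) :
    LinearMap.trace ℝ E (fderiv ℝ (∇ v) x) = Δ v x := by
  simp [LinearMap.trace_eq_sum_inner _ (stdOrthonormalBasis ℝ E), ← inner_fderiv_gradient_left hv,
    iteratedFDeriv_two_apply, real_inner_comm (fderiv ℝ (∇ v) x _),
    InnerProductSpace.laplacian_eq_iteratedFDeriv_stdOrthonormalBasis]

theorem continuous_laplacian {v : E → ℝ} (hv : ContDiff ℝ 2 v) : Continuous (Δ v) := by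
  have := hv.continuous_iteratedFDeriv'
  rw [InnerProductSpace.laplacian_eq_iteratedFDeriv_stdOrthonormalBasis]
  fun_prop

end Gradient

section Paraboloid

variable {E : Type*} [NormedAddCommGroup E] [InnerProductSpace ℝ E]

theorem contDiff_add_mul_norm_sub_sq {v : E → ℝ} {k : WithTop ℕ∞} (hv : ContDiff ℝ k v) (a : ℝ)
    (z : E) : ContDiff ℝ k fun y => v y + a * ‖y - z‖ ^ 2 :=
  hv.add (contDiff_const.mul ((contDiff_id.sub contDiff_const).norm_sq ℝ))

theorem gradient_add_mul_norm_sub_sq [CompleteSpace E] {v : E → ℝ} {x : E}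
    (hv : DifferentiableAt ℝ v x) (a : ℝ) (z : E) :
    ∇ (fun y => v y + a * ‖y - z‖ ^ 2) x = ∇ v x + (2 * a) • (x - z) := by
  have hderiv : HasFDerivAt (fun y => v y + a * ‖y - z‖ ^ 2) _ x :=
    hv.hasFDerivAt.add (((hasFDerivAt_id x).sub_const z).norm_sq.const_mul a)
  refine ext_inner_right ℝ fun k => ?_
  simp [inner_gradient_left, hderiv.fderiv, inner_add_left, inner_sub_left, real_inner_smul_left]
  ring

variable [FiniteDimensional ℝ E]

theorem laplacian_add_mul_norm_sub_sq {v : E → ℝ} (hv : ContDiff ℝ 2 v) (a : ℝ) (x z : E) :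
    Δ (fun y => v y + a * ‖y - z‖ ^ 2) x = Δ v x + 2 * a * finrank ℝ E := by
  have hw : ContDiff ℝ 2 fun y => v y + a * ‖y - z‖ ^ 2 := contDiff_add_mul_norm_sub_sq hv a z
  have hgrad : ∇ (fun y => v y + a * ‖y - z‖ ^ 2) = fun y => ∇ v y + (2 * a) • (y - z) :=
    funext fun y => gradient_add_mul_norm_sub_sq (hv.differentiable two_ne_zero y) a z
  have hderiv : HasFDerivAt (fun y => ∇ v y + (2 * a) • (y - z)) _ x :=
    ((contDiff_gradient (k := 1) hv).differentiable one_ne_zero x).hasFDerivAt.add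
      (((hasFDerivAt_id x).sub_const z).const_smul (2 * a))
  rw [← trace_fderiv_gradient (differentiable_fderiv_of_contDiff_two hw x),
    ← trace_fderiv_gradient (differentiable_fderiv_of_contDiff_two hv x), hgrad, hderiv.fderiv]
  simp

end Paraboloid

section Composition

variable {E : Type*} [NormedAddCommGroup E] [InnerProductSpace ℝ E]

theorem gradient_comp [CompleteSpace E] {φ : ℝ → ℝ} {u : E → ℝ} {x : E}
    (hφ : DifferentiableAt ℝ φ (u x)) (hu : DifferentiableAt ℝ u x) :
    ∇ (fun y => φ (u y)) x = deriv φ (u x) • ∇ u x := by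
  have hderiv : HasFDerivAt (fun y => φ (u y)) _ x :=
    hφ.hasDerivAt.comp_hasFDerivAt x hu.hasFDerivAt
  refine ext_inner_right ℝ fun k => ?_
  simp [inner_gradient_left, hderiv.fderiv, real_inner_smul_left]

theorem laplacian_comp [FiniteDimensional ℝ E] {φ : ℝ → ℝ} {u : E → ℝ} (hφ : ContDiff ℝ 2 φ)
    (hu : ContDiff ℝ 2 u) (x : E) :
    Δ (fun y => φ (u y)) x =
      deriv φ (u x) * Δ u x + deriv (deriv φ) (u x) * ‖∇ u x‖ ^ 2 := by
  have hu₁ : Differentiable ℝ u := hu.differentiable two_ne_zero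
  have hφ₁ : Differentiable ℝ (deriv φ) := hφ.differentiable_deriv_two
  have hgrad : ∇ (fun y => φ (u y)) = fun y => deriv φ (u y) • ∇ u y :=
    funext fun y => gradient_comp (hφ.differentiable two_ne_zero (u y)) (hu₁ y)
  have hderiv : HasFDerivAt (fun y => deriv φ (u y) • ∇ u y) _ x :=
    ((hφ₁ (u x)).hasDerivAt.comp_hasFDerivAt x (hu₁ x).hasFDerivAt).smul
      ((contDiff_gradient (k := 1) hu).differentiable one_ne_zero x).hasFDerivAt
  rw [← trace_fderiv_gradient (differentiable_fderiv_of_contDiff_two (hφ.fun_comp hu) x),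
    ← trace_fderiv_gradient (differentiable_fderiv_of_contDiff_two hu x), hgrad, hderiv.fderiv,
    ← real_inner_self_eq_norm_sq, inner_gradient_left]
  simp

theorem exp_neg_mul_laplacian_exp_neg [FiniteDimensional ℝ E] {u : E → ℝ} (hu : ContDiff ℝ 2 u)
    (x : E) : exp (-u x) * Δ (fun y => exp (-u y)) x =
      -Δ u x * exp (-(2 * u x)) + ‖∇ (fun y => exp (-u y)) x‖ ^ 2 := by
  have hderiv : deriv (fun t => exp (-t)) = fun t => -exp (-t) := by
    ext t
    simp [(hasDerivAt_neg t).exp.deriv]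
  have hφ : ContDiff ℝ 2 fun t => exp (-t) := by fun_prop
  have hsq : exp (-(2 * u x)) = exp (-u x) ^ 2 := by
    rw [← exp_nat_mul]
    ring_nf
  rw [laplacian_comp hφ hu, gradient_comp (hφ.differentiable two_ne_zero (u x))
    (hu.differentiable two_ne_zero x), norm_smul, hsq]
  simp [hderiv]
  ring

end Composition

section LowerContactSet

variable {E : Type*} [NormedAddCommGroup E] [InnerProductSpace ℝ E]

/-- The lower contact set of `v` in `U`: the points of `U` at which the tangent plane of `v` lies
below the graph of `v` over `U`. For a function which is not differentiable, the tangent plane is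
computed with the junk value `∇ v x = 0`. -/
def lowerContactSet [CompleteSpace E] (v : E → ℝ) (U : Set E) : Set E :=
  {x ∈ U | ∀ y ∈ U, v x + ⟪∇ v x, y - x⟫ ≤ v y}

theorem measurableSet_lowerContactSet [CompleteSpace E] [MeasurableSpace E] [BorelSpace E]
    {v : E → ℝ} {U : Set E} (hv : ContDiff ℝ 1 v) (hU : MeasurableSet U) :
    MeasurableSet (lowerContactSet v U) := by
  have hgrad : Continuous (∇ v) := (contDiff_gradient (k := 0) (by simpa using hv)).continuous
  have hclosed : IsClosed (⋂ y ∈ U, {x | v x + ⟪∇ v x, y - x⟫ ≤ v y}) :=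
    isClosed_biInter fun y _ =>
      isClosed_le (hv.continuous.add (hgrad.inner (by fun_prop))) continuous_const
  have heq : lowerContactSet v U = U ∩ ⋂ y ∈ U, {x | v x + ⟪∇ v x, y - x⟫ ≤ v y} := by
    ext x
    simp [lowerContactSet]
  exact heq ▸ hU.inter hclosed.measurableSet

theorem mem_image_gradient_lowerContactSet [CompleteSpace E] {v : E → ℝ} {U : Set E} {p x : E}
    (hv : DifferentiableAt ℝ v x) (hU : U ∈ 𝓝 x)
    (hmin : IsMinOn (fun y => v y - ⟪p, y⟫) U x) : p ∈ ∇ v '' lowerContactSet v U := by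
  have hderiv : HasFDerivAt (fun y => v y - ⟪p, y⟫) (fderiv ℝ v x - innerSL ℝ p) x :=
    hv.hasFDerivAt.sub (innerSL ℝ p).hasFDerivAt
  have hp : ∇ v x = p := ext_inner_right ℝ fun k => by
    have := congrArg (fun L => L k) ((hmin.isLocalMin hU).hasFDerivAt_eq_zero hderiv)
    simpa [sub_eq_zero] using this
  refine ⟨x, ⟨mem_of_mem_nhds hU, fun y hy => ?_⟩, hp⟩
  have := isMinOn_iff.1 hmin y hy
  rw [hp, inner_sub_right]
  linarith

theorem isPositive_fderiv_gradient_of_mem_lowerContactSet [CompleteSpace E] {v : E → ℝ}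
    {U : Set E} {x : E} (hv : ContDiff ℝ 2 v) (hU : IsOpen U) (hx : x ∈ lowerContactSet v U) :
    (fderiv ℝ (∇ v) x).IsPositive := by
  have hd : Differentiable ℝ (fderiv ℝ v) := differentiable_fderiv_of_contDiff_two hv
  have hw : ContDiffAt ℝ 2 (fun y => v y - ⟪∇ v x, y⟫) x :=
    hv.contDiffAt.sub (innerSL ℝ (∇ v x)).contDiff.contDiffAt
  have hmin : IsLocalMin (fun y => v y - ⟪∇ v x, y⟫) x := by
    filter_upwards [hU.mem_nhds hx.1] with y hy
    have := hx.2 y hy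
    rw [inner_sub_right] at this
    linarith
  have hfderiv : fderiv ℝ (fun y => v y - ⟪∇ v x, y⟫) =
      fun y => fderiv ℝ v y - innerSL ℝ (∇ v x) :=
    funext fun y => ((hv.differentiable two_ne_zero y).hasFDerivAt.sub
      (innerSL ℝ (∇ v x)).hasFDerivAt).fderiv
  refine (ContinuousLinearMap.isPositive_iff _).2 ⟨fun h k => ?_, fun h => ?_⟩
  · change ⟪fderiv ℝ (∇ v) x h, k⟫ = ⟪h, fderiv ℝ (∇ v) x k⟫
    rw [real_inner_comm _ h, inner_fderiv_gradient_left (hd x), inner_fderiv_gradient_left (hd x)]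
    exact (hv.contDiffAt (x := x)).isSymmSndFDerivAt (by simp) h k
  · have hnonneg := fderiv_fderiv_apply_self_nonneg_of_isLocalMin hw hmin h
    rwa [hfderiv, fderiv_sub_const, ← inner_fderiv_gradient_left (hd x)] at hnonneg

variable [FiniteDimensional ℝ E]

theorem laplacian_nonneg_of_mem_lowerContactSet {v : E → ℝ} {U : Set E} {x : E}
    (hv : ContDiff ℝ 2 v) (hU : IsOpen U) (hx : x ∈ lowerContactSet v U) : 0 ≤ Δ v x := by
  rw [← trace_fderiv_gradient (differentiable_fderiv_of_contDiff_two hv x)]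
  exact (isPositive_fderiv_gradient_of_mem_lowerContactSet hv hU hx).toLinearMap.trace_nonneg

theorem ball_subset_image_gradient_lowerContactSet {v : E → ℝ} {z : E} {r M : ℝ} (hr : 0 < r)
    (hv : Differentiable ℝ v) (hM : ∀ y ∈ sphere z r, v z + M * r ≤ v y) :
    ball 0 M ⊆ ∇ v '' lowerContactSet v (ball z r) := by
  intro p hp
  rw [mem_ball_zero_iff] at hp
  have hcont : Continuous fun y => v y - ⟪p, y⟫ := hv.continuous.sub (innerSL ℝ p).continuous
  obtain ⟨x, hxball, hmin⟩ := (isCompact_closedBall z r).exists_isMinOn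
    (nonempty_closedBall.2 hr.le) hcont.continuousOn
  have hxsphere : x ∉ sphere z r := fun hx => by
    have hxz : v x - ⟪p, x⟫ ≤ v z - ⟪p, z⟫ := hmin (mem_closedBall_self hr.le)
    have hinner : ⟪p, x - z⟫ ≤ ‖p‖ * r := by
      simpa [mem_sphere_iff_norm.1 hx] using real_inner_le_norm p (x - z)
    rw [inner_sub_right] at hinner
    nlinarith [hM x hx]
  have hxint : x ∈ ball z r := by
    rw [← closedBall_sdiff_sphere]
    exact ⟨hxball, hxsphere⟩
  exact mem_image_gradient_lowerContactSet (hv x) (isOpen_ball.mem_nhds hxint)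
    (hmin.on_subset ball_subset_closedBall)

theorem image_gradient_lowerContactSet_univ_eq_univ {v : E → ℝ} (hv : Differentiable ℝ v)
    (hgrowth : ∀ K : ℝ, ∀ᶠ x in cocompact E, K * ‖x‖ ≤ v x) :
    ∇ v '' lowerContactSet v univ = univ := by
  refine eq_univ_of_forall fun p => ?_
  have hcont : Continuous fun y => v y - ⟪p, y⟫ := hv.continuous.sub (innerSL ℝ p).continuous
  obtain ⟨x, hx⟩ := hcont.exists_forall_le' 0 <| by
    filter_upwards [hgrowth (‖p‖ + 1), tendsto_norm_cocompact_atTop.eventually_ge_atTop (v 0)]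
      with y hy hy'
    have := real_inner_le_norm p y
    simp only [inner_zero_right]
    linarith
  exact mem_image_gradient_lowerContactSet (hv x) univ_mem fun y _ => hx y

end LowerContactSet

section AreaFormula

variable {E : Type*} [NormedAddCommGroup E] [NormedSpace ℝ E] [FiniteDimensional ℝ E]
  [MeasurableSpace E] [BorelSpace E] (μ : Measure E) [μ.IsAddHaarMeasure]

theorem setLIntegral_image_le_setLIntegral_abs_det_fderiv_mul {F : E → E} {s : Set E}
    (hs : MeasurableSet s) (hF : ContDiff ℝ 1 F) {g : E → ℝ≥0∞} (hg : Measurable g) :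
    ∫⁻ p in F '' s, g p ∂μ ≤ ∫⁻ x in s, ENNReal.ofReal |(fderiv ℝ F x).det| * g (F x) ∂μ := by
  have hF_meas : Measurable F := hF.continuous.measurable
  have hdet : Measurable fun x => ENNReal.ofReal |(fderiv ℝ F x).det| :=
    (ContinuousLinearMap.continuous_det.comp
      (hF.continuous_fderiv one_ne_zero)).abs.measurable.ennreal_ofReal
  have hle : μ.restrict (F '' s) ≤
      ((μ.restrict s).withDensity fun x => ENNReal.ofReal |(fderiv ℝ F x).det|).map F := by
    refine Measure.le_iff.2 fun B hB => ?_
    rw [Measure.restrict_apply hB, Measure.map_apply hF_meas hB, withDensity_apply _ (hF_meas hB),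
      Measure.restrict_restrict (hF_meas hB), inter_comm B, ← image_inter_preimage, inter_comm s]
    exact addHaar_image_le_lintegral_abs_det_fderiv μ ((hF_meas hB).inter hs)
      fun x _ => (hF.differentiable one_ne_zero x).hasFDerivAt.hasFDerivWithinAt
  calc ∫⁻ p in F '' s, g p ∂μ
      ≤ ∫⁻ p, g p
          ∂((μ.restrict s).withDensity fun x => ENNReal.ofReal |(fderiv ℝ F x).det|).map F :=
        lintegral_mono' hle le_rfl
    _ = ∫⁻ x in s, ENNReal.ofReal |(fderiv ℝ F x).det| * g (F x) ∂μ := by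
        rw [lintegral_map hg hF_meas]
        exact lintegral_withDensity_eq_lintegral_mul _ hdet (hg.comp hF_meas)

end AreaFormula

section GradientImage

variable {E : Type*} [NormedAddCommGroup E] [InnerProductSpace ℝ E] [FiniteDimensional ℝ E]
  [MeasurableSpace E] [BorelSpace E] (μ : Measure E) [μ.IsAddHaarMeasure]

theorem setLIntegral_image_gradient_le_setLIntegral_laplacian_pow {v : E → ℝ} {s : Set E}
    (hv : ContDiff ℝ 2 v) (hs : MeasurableSet s)
    (hpos : ∀ x ∈ s, (fderiv ℝ (∇ v) x).IsPositive) {g : E → ℝ≥0∞} (hg : Measurable g) :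
    ∫⁻ p in ∇ v '' s, g p ∂μ ≤
      ∫⁻ x in s, ENNReal.ofReal ((Δ v x / finrank ℝ E) ^ finrank ℝ E) * g (∇ v x) ∂μ := by
  refine (setLIntegral_image_le_setLIntegral_abs_det_fderiv_mul μ hs
    (contDiff_gradient (k := 1) hv) hg).trans (setLIntegral_mono' hs fun x hx => ?_)
  gcongr
  have hpos' : (fderiv ℝ (∇ v) x).toLinearMap.IsPositive := hpos x hx
  rw [ContinuousLinearMap.det, abs_of_nonneg,
    ← trace_fderiv_gradient (differentiable_fderiv_of_contDiff_two hv x)]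
  · exact det_le_trace_div_finrank_pow_of_isPositive hpos'
  · rw [hpos'.isSymmetric.det_eq_prod_eigenvalues rfl]
    exact Finset.prod_nonneg fun i _ => hpos'.nonneg_eigenvalues rfl i

theorem measure_ball_le_setLIntegral_laplacian_pow {v : E → ℝ} {z : E} {r M : ℝ} (hr : 0 < r)
    (hv : ContDiff ℝ 2 v) (hM : ∀ y ∈ sphere z r, v z + M * r ≤ v y) :
    μ (ball 0 M) ≤ ∫⁻ x in lowerContactSet v (ball z r) ∩ ∇ v ⁻¹' ball 0 M,
      ENNReal.ofReal ((Δ v x / finrank ℝ E) ^ finrank ℝ E) ∂μ := by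
  set s := lowerContactSet v (ball z r) ∩ ∇ v ⁻¹' ball 0 M
  have hs : MeasurableSet s :=
    (measurableSet_lowerContactSet (hv.of_le one_le_two) measurableSet_ball).inter
      ((contDiff_gradient (k := 1) hv).continuous.measurable measurableSet_ball)
  have hball : ball 0 M ⊆ ∇ v '' s := by
    rw [image_inter_preimage, subset_inter_iff]
    exact ⟨ball_subset_image_gradient_lowerContactSet hr (hv.differentiable two_ne_zero) hM,
      subset_rfl⟩
  calc μ (ball 0 M) ≤ ∫⁻ _ in ∇ v '' s, 1 ∂μ := by simpa using measure_mono hball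
    _ ≤ ∫⁻ x in s, ENNReal.ofReal ((Δ v x / finrank ℝ E) ^ finrank ℝ E) * 1 ∂μ :=
      setLIntegral_image_gradient_le_setLIntegral_laplacian_pow μ hv hs
        (fun x hx => isPositive_fderiv_gradient_of_mem_lowerContactSet hv isOpen_ball hx.1)
        measurable_const
    _ = _ := by simp only [mul_one]

end GradientImage

section Supersolution

variable {E : Type*} [NormedAddCommGroup E] [InnerProductSpace ℝ E] [FiniteDimensional ℝ E]
  {v : E → ℝ} {A K : ℝ}

theorem mul_laplacian_le_of_mem_lowerContactSet_add_mul_norm_sub_sq {a r : ℝ} {x z : E}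
    (hv : ContDiff ℝ 2 v) (hA : 0 ≤ A) (hsuper : v x * Δ v x ≤ A * (1 + ‖∇ v x‖ ^ 2))
    (hr : 0 < r) (hrv : r ≤ v z) (hvr : v z ≤ K * r) (ha : a * r ^ 2 = 2 * v z)
    (hx : x ∈ lowerContactSet (fun y => v y + a * ‖y - z‖ ^ 2) (ball z r))
    (hgrad : ‖∇ (fun y => v y + a * ‖y - z‖ ^ 2) x‖ ≤ 1) :
    v x * Δ (fun y => v y + a * ‖y - z‖ ^ 2) x ≤
      A * (1 + (5 * K) ^ 2) + 8 * finrank ℝ E * K ^ 2 := by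
  have hxz : ‖x - z‖ ≤ r := (mem_ball_iff_norm.1 hx.1).le
  have ha0 : 0 ≤ a := le_of_mul_le_mul_right (by linarith : 0 * r ^ 2 ≤ a * r ^ 2) (by positivity)
  have har : a * r ≤ 2 * K := le_of_mul_le_mul_right (by linarith : a * r * r ≤ 2 * K * r) hr
  have hK : 1 ≤ K := le_of_mul_le_mul_right (by linarith) hr
  have hvx : v x ≤ 2 * v z := by
    have hcontact := hx.2 z (mem_ball_self hr)
    have hinner := neg_le_of_abs_le (abs_real_inner_le_norm
      (∇ (fun y => v y + a * ‖y - z‖ ^ 2) x) (z - x))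
    rw [norm_sub_rev z x] at hinner
    have := mul_le_of_le_one_left (norm_nonneg (x - z)) hgrad
    have : 0 ≤ a * ‖x - z‖ ^ 2 := by positivity
    simp only [sub_self, norm_zero] at hcontact
    linarith
  have hgradv : ‖∇ v x‖ ≤ 5 * K := by
    have heq := gradient_add_mul_norm_sub_sq (hv.differentiable two_ne_zero x) a z
    calc ‖∇ v x‖ = ‖∇ (fun y => v y + a * ‖y - z‖ ^ 2) x - (2 * a) • (x - z)‖ := by simp [heq]
      _ ≤ 1 + 2 * a * r := by
        refine (norm_sub_le _ _).trans ?_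
        rw [norm_smul, norm_of_nonneg (by positivity)]
        gcongr
      _ ≤ 5 * K := by linarith
  have hav : a * v x ≤ 4 * K ^ 2 :=
    calc a * v x ≤ a * (2 * (K * r)) := by gcongr; linarith
      _ = 2 * K * (a * r) := by ring
      _ ≤ 2 * K * (2 * K) := by gcongr
      _ = 4 * K ^ 2 := by ring
  rw [laplacian_add_mul_norm_sub_sq hv]
  calc v x * (Δ v x + 2 * a * finrank ℝ E)
      = v x * Δ v x + 2 * finrank ℝ E * (a * v x) := by ring
    _ ≤ A * (1 + (5 * K) ^ 2) + 2 * finrank ℝ E * (4 * K ^ 2) := by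
      refine add_le_add (hsuper.trans ?_) ?_ <;> gcongr
    _ = A * (1 + (5 * K) ^ 2) + 8 * finrank ℝ E * K ^ 2 := by ring

variable [MeasurableSpace E] [BorelSpace E] (μ : Measure E) [μ.IsAddHaarMeasure]

theorem exists_measure_ball_le_mul_setLIntegral_inv_pow (hv : ContDiff ℝ 2 v)
    (hpos : ∀ x, 0 < v x) (hA : 0 ≤ A) (hsuper : ∀ x, v x * Δ v x ≤ A * (1 + ‖∇ v x‖ ^ 2))
    (K : ℝ) : ∃ C : ℝ≥0, ∀ (z : E) (r : ℝ), 0 < r → r ≤ v z → v z ≤ K * r →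
      μ (ball 0 1) ≤ C * ∫⁻ x in ball z r, ENNReal.ofReal ((v x)⁻¹ ^ finrank ℝ E) ∂μ := by
  set n := finrank ℝ E
  set B : ℝ := A * (1 + (5 * K) ^ 2) + 8 * n * K ^ 2
  have : 0 ≤ B := by positivity
  refine ⟨Real.toNNReal ((B / n) ^ n), fun z r hr hrv hvr => ?_⟩
  obtain ⟨a, ha⟩ : ∃ a : ℝ, a * r ^ 2 = 2 * v z := ⟨2 * v z / r ^ 2, by field_simp⟩
  set w : E → ℝ := fun y => v y + a * ‖y - z‖ ^ 2 with hw_def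
  have hw : ContDiff ℝ 2 w := contDiff_add_mul_norm_sub_sq hv a z
  set s := lowerContactSet w (ball z r) ∩ ∇ w ⁻¹' ball 0 1
  have hs : MeasurableSet s :=
    (measurableSet_lowerContactSet (hw.of_le one_le_two) measurableSet_ball).inter
      ((contDiff_gradient (k := 1) hw).continuous.measurable measurableSet_ball)
  have hsphere : ∀ y ∈ sphere z r, w z + 1 * r ≤ w y := fun y hy => by
    simp only [hw_def, mem_sphere_iff_norm.1 hy, sub_self, norm_zero]
    linarith [hpos y]
  have hbound : ∀ x ∈ s, (Δ w x / n) ^ n ≤ (B / n) ^ n * (v x)⁻¹ ^ n := fun x hx => by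
    have hlap : v x * Δ w x ≤ B := mul_laplacian_le_of_mem_lowerContactSet_add_mul_norm_sub_sq hv
      hA (hsuper x) hr hrv hvr ha hx.1 (mem_ball_zero_iff.1 hx.2).le
    have hnonneg := laplacian_nonneg_of_mem_lowerContactSet hw isOpen_ball hx.1
    rw [← mul_pow, div_mul_eq_mul_div, ← div_eq_mul_inv]
    gcongr
    rwa [le_div_iff₀' (hpos x)]
  calc μ (ball 0 1) ≤ ∫⁻ x in s, ENNReal.ofReal ((Δ w x / n) ^ n) ∂μ :=
        measure_ball_le_setLIntegral_laplacian_pow μ hr hw hsphere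
    _ ≤ ∫⁻ x in s, ENNReal.ofReal ((B / n) ^ n) * ENNReal.ofReal ((v x)⁻¹ ^ n) ∂μ :=
        setLIntegral_mono' hs fun x hx => by
          rw [← ENNReal.ofReal_mul (by positivity)]
          exact ENNReal.ofReal_le_ofReal (hbound x hx)
    _ ≤ ∫⁻ x in ball z r, ENNReal.ofReal ((B / n) ^ n) * ENNReal.ofReal ((v x)⁻¹ ^ n) ∂μ :=
        lintegral_mono_set fun x hx => hx.1.1
    _ = _ := lintegral_const_mul' _ _ ENNReal.ofReal_ne_top

theorem eventually_mul_norm_le_of_lintegral_inv_pow_ne_top (hv : ContDiff ℝ 2 v)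
    (hpos : ∀ x, 0 < v x) (hA : 0 ≤ A) (hsuper : ∀ x, v x * Δ v x ≤ A * (1 + ‖∇ v x‖ ^ 2))
    (hfin : ∫⁻ x, ENNReal.ofReal ((v x)⁻¹ ^ finrank ℝ E) ∂μ ≠ ∞) (K : ℝ) :
    ∀ᶠ x in cocompact E, K * ‖x‖ ≤ v x := by
  set ν := μ.withDensity fun x => ENNReal.ofReal ((v x)⁻¹ ^ finrank ℝ E)
  have : IsFiniteMeasure ν := isFiniteMeasure_withDensity hfin
  obtain ⟨C, hC⟩ :=
    exists_measure_ball_le_mul_setLIntegral_inv_pow μ hv hpos hA hsuper (max 1 (2 * K))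
  have htail : Tendsto (fun R : ℝ => C * ν {y | R < ‖y‖}) atTop (𝓝 0) := by
    have := tendsto_measure_norm_gt_of_isTightMeasureSet (isTightMeasureSet_singleton (μ := ν))
    simpa using ENNReal.Tendsto.const_mul this (.inr (ENNReal.coe_ne_top (r := C)))
  obtain ⟨R, hR⟩ := (htail.eventually_lt_const (measure_ball_pos μ (0 : E) one_pos)).exists
  filter_upwards [tendsto_norm_cocompact_atTop.eventually_gt_atTop (max 0 (2 * R))] with x hx
  rw [max_lt_iff] at hx
  by_contra! hlt
  -- This radius is comparable to `v x` and keeps `ball x r` away from the origin.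
  set r := min (‖x‖ / 2) (v x)
  have hr : 0 < r := lt_min (by linarith) (hpos x)
  have hvr : v x ≤ max 1 (2 * K) * r := by
    rw [mul_min_of_nonneg _ _ (by positivity)]
    refine le_min (hlt.le.trans ?_) (le_mul_of_one_le_left (hpos x).le (le_max_left _ _))
    nlinarith [le_max_right 1 (2 * K)]
  have htail_subset : ball x r ⊆ {y | R < ‖y‖} := fun y hy => by
    have hyx : ‖x - y‖ < ‖x‖ / 2 := (mem_ball_iff_norm'.1 hy).trans_le (min_le_left _ _)
    have := norm_sub_norm_le x y
    change R < ‖y‖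
    linarith
  refine (hC x r hr (min_le_right _ _) hvr).not_gt (lt_of_le_of_lt ?_ hR)
  rw [← withDensity_apply _ measurableSet_ball]
  gcongr

end Supersolution

section Stereographic

variable {E : Type*} [NormedAddCommGroup E]

/-- The conformal factor `2 / (1 + |p|²)` of the round metric of the unit sphere in stereographic
coordinates. For `n = dim E`, its `n`-th power is the density of the area of the unit `n`-sphere. -/
noncomputable def stereographicFactor (p : E) : ℝ := 2 / (1 + ‖p‖ ^ 2)

theorem stereographicFactor_pos (p : E) : 0 < stereographicFactor p := by
  unfold stereographicFactor
  positivity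

theorem continuous_stereographicFactor : Continuous (stereographicFactor : E → ℝ) :=
  continuous_const.div (by fun_prop) fun p => by positivity

variable [InnerProductSpace ℝ E] [FiniteDimensional ℝ E] [MeasurableSpace E] [BorelSpace E]

theorem integrable_stereographicFactor_pow [Nontrivial E] (μ : Measure E) [μ.IsAddHaarMeasure] :
    Integrable (fun p => stereographicFactor p ^ finrank ℝ E) μ := by
  have hn : (finrank ℝ E : ℝ) < 2 * finrank ℝ E := by
    have : 0 < finrank ℝ E := finrank_pos
    linarith [(Nat.cast_pos (α := ℝ)).2 this]
  refine ((integrable_rpow_neg_one_add_norm_sq (μ := μ) hn).const_mul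
    (2 ^ finrank ℝ E)).congr (.of_forall fun p => ?_)
  beta_reduce
  rw [show -(2 * (finrank ℝ E : ℝ)) / 2 = -finrank ℝ E by ring, rpow_neg (by positivity),
    rpow_natCast, stereographicFactor, div_pow, div_eq_mul_inv]

theorem integral_Ioi_mul_two_div_one_add_sq_sq :
    ∫ t in Ioi (0 : ℝ), t * (2 / (1 + t ^ 2)) ^ 2 = 2 := by
  have hderiv (t : ℝ) : HasDerivAt (fun t => -2 / (1 + t ^ 2)) (t * (2 / (1 + t ^ 2)) ^ 2) t := by
    have hne : 1 + t ^ 2 ≠ 0 := by positivity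
    refine ((hasDerivAt_const t (-2 : ℝ)).div (((hasDerivAt_id t).pow 2).const_add 1)
      hne).congr_deriv ?_
    simp only [Pi.pow_apply, id_eq]
    field_simp
    ring
  have hlim : Tendsto (fun t : ℝ => -2 / (1 + t ^ 2)) atTop (𝓝 0) :=
    tendsto_const_nhds.div_atTop (tendsto_atTop_add_const_left _ _ (tendsto_pow_atTop two_ne_zero))
  rw [integral_Ioi_of_hasDerivAt_of_nonneg (hderiv 0).continuousAt.continuousWithinAt
    (fun t _ => hderiv t) (fun t (ht : 0 < t) => by positivity) hlim]
  norm_num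

theorem lintegral_stereographicFactor_sq (hE : finrank ℝ E = 2) :
    ∫⁻ p : E, ENNReal.ofReal (stereographicFactor p ^ 2) = ENNReal.ofReal (4 * π) := by
  have : Nontrivial E := nontrivial_of_finrank_pos (R := ℝ) (by lia)
  have hball : volume.real (ball (0 : E) 1) = π := by
    simp [Measure.real, InnerProductSpace.volume_ball_of_dim_even (k := 1) hE, pi_pos.le]
  rw [← ofReal_integral_eq_lintegral_ofReal
    (by simpa [hE] using integrable_stereographicFactor_pow (volume : Measure E))
    (.of_forall fun p => by positivity)]
  congr 1
  calc ∫ p : E, stereographicFactor p ^ 2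
      = 2 * π * ∫ t in Ioi (0 : ℝ), t * (2 / (1 + t ^ 2)) ^ 2 := by
        have := integral_fun_norm_addHaar (volume : Measure E) fun t : ℝ => (2 / (1 + t ^ 2)) ^ 2
        simpa [hE, hball, mul_assoc, stereographicFactor] using this
    _ = 4 * π := by
        rw [integral_Ioi_mul_two_div_one_add_sq_sq]
        ring

end Stereographic

section SharpInequality

variable {E : Type*} [NormedAddCommGroup E] [InnerProductSpace ℝ E] [FiniteDimensional ℝ E]
  {v : E → ℝ}

/-- The upper bound `(Δv / n · 2 / (1 + |∇v|²)) ^ n` for the Jacobian of `∇ v`, seen as a map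
from `E` to the unit sphere in stereographic coordinates. It is valid on the contact set of `v` in
the whole space, and extended by zero. -/
noncomputable def contactDensity (v : E → ℝ) : E → ℝ≥0∞ :=
  (lowerContactSet v univ).indicator fun x =>
    ENNReal.ofReal ((Δ v x / finrank ℝ E * stereographicFactor (∇ v x)) ^ finrank ℝ E)

theorem contactDensity_le_ofReal_inv_pow (hv : ContDiff ℝ 2 v) (hpos : ∀ x, 0 < v x)
    (hsuper : ∀ x, v x * Δ v x ≤ finrank ℝ E / 2 * (1 + ‖∇ v x‖ ^ 2)) (x : E) :
    contactDensity v x ≤ ENNReal.ofReal ((v x)⁻¹ ^ finrank ℝ E) := by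
  refine indicator_apply_le' (fun hx => ?_) fun _ => zero_le
  have hlap := laplacian_nonneg_of_mem_lowerContactSet hv isOpen_univ hx
  have hfactor := stereographicFactor_pos (∇ v x)
  gcongr
  rw [stereographicFactor, div_mul_div_comm]
  refine div_le_of_le_mul₀ (by positivity) (inv_nonneg.2 (hpos x).le) ?_
  rw [inv_mul_eq_div, le_div_iff₀ (hpos x)]
  linarith [hsuper x]

theorem mul_laplacian_eq_of_contactDensity_eq [Nontrivial E] {x : E} (hv : ContDiff ℝ 2 v)
    (hpos : 0 < v x) (heq : contactDensity v x = ENNReal.ofReal ((v x)⁻¹ ^ finrank ℝ E)) :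
    v x * Δ v x = finrank ℝ E / 2 * (1 + ‖∇ v x‖ ^ 2) := by
  have hn : 0 < finrank ℝ E := finrank_pos
  have hx : x ∈ lowerContactSet v univ := by
    refine mem_of_indicator_ne_zero (heq.trans_ne (ENNReal.ofReal_pos.2 ?_).ne')
    positivity
  have hlap := laplacian_nonneg_of_mem_lowerContactSet hv isOpen_univ hx
  have hfactor := stereographicFactor_pos (∇ v x)
  rw [contactDensity, indicator_of_mem hx, ENNReal.ofReal_eq_ofReal_iff (by positivity)
    (by positivity), pow_left_inj₀ (by positivity) (by positivity) hn.ne',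
    stereographicFactor] at heq
  field_simp at heq
  linarith

variable [MeasurableSpace E] [BorelSpace E] (μ : Measure E) [μ.IsAddHaarMeasure]

theorem lintegral_stereographicFactor_pow_le_lintegral_contactDensity (hv : ContDiff ℝ 2 v)
    (hgrowth : ∀ K : ℝ, ∀ᶠ x in cocompact E, K * ‖x‖ ≤ v x) :
    ∫⁻ p, ENNReal.ofReal (stereographicFactor p ^ finrank ℝ E) ∂μ ≤
      ∫⁻ x, contactDensity v x ∂μ := by
  have hmeas : MeasurableSet (lowerContactSet v univ) :=
    measurableSet_lowerContactSet (hv.of_le one_le_two) .univ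
  have harea := setLIntegral_image_gradient_le_setLIntegral_laplacian_pow μ hv hmeas
    (fun x hx => isPositive_fderiv_gradient_of_mem_lowerContactSet hv isOpen_univ hx)
    (g := fun p => ENNReal.ofReal (stereographicFactor p ^ finrank ℝ E))
    (continuous_stereographicFactor.pow _).measurable.ennreal_ofReal
  rw [image_gradient_lowerContactSet_univ_eq_univ (hv.differentiable two_ne_zero) hgrowth,
    Measure.restrict_univ] at harea
  simp only [contactDensity]
  rw [lintegral_indicator hmeas]
  refine harea.trans_eq (setLIntegral_congr_fun hmeas fun x hx => ?_)
  have := laplacian_nonneg_of_mem_lowerContactSet hv isOpen_univ hx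
  simp only [mul_pow]
  rw [← ENNReal.ofReal_mul (by positivity)]

theorem lintegral_stereographicFactor_pow_le_lintegral_inv_pow (hv : ContDiff ℝ 2 v)
    (hpos : ∀ x, 0 < v x)
    (hsuper : ∀ x, v x * Δ v x ≤ finrank ℝ E / 2 * (1 + ‖∇ v x‖ ^ 2)) :
    ∫⁻ p, ENNReal.ofReal (stereographicFactor p ^ finrank ℝ E) ∂μ ≤
      ∫⁻ x, ENNReal.ofReal ((v x)⁻¹ ^ finrank ℝ E) ∂μ := by
  by_cases hfin : ∫⁻ x, ENNReal.ofReal ((v x)⁻¹ ^ finrank ℝ E) ∂μ = ∞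
  · exact hfin ▸ le_top
  · exact (lintegral_stereographicFactor_pow_le_lintegral_contactDensity μ hv
      (eventually_mul_norm_le_of_lintegral_inv_pow_ne_top μ hv hpos (by positivity) hsuper
        hfin)).trans (lintegral_mono (contactDensity_le_ofReal_inv_pow hv hpos hsuper))

theorem mul_laplacian_eq_of_lintegral_inv_pow_eq [Nontrivial E] (hv : ContDiff ℝ 2 v)
    (hpos : ∀ x, 0 < v x)
    (hsuper : ∀ x, v x * Δ v x ≤ finrank ℝ E / 2 * (1 + ‖∇ v x‖ ^ 2))
    (heq : ∫⁻ x, ENNReal.ofReal ((v x)⁻¹ ^ finrank ℝ E) ∂μ =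
      ∫⁻ p, ENNReal.ofReal (stereographicFactor p ^ finrank ℝ E) ∂μ) (x : E) :
    v x * Δ v x = finrank ℝ E / 2 * (1 + ‖∇ v x‖ ^ 2) := by
  have hfin : ∫⁻ x, ENNReal.ofReal ((v x)⁻¹ ^ finrank ℝ E) ∂μ ≠ ∞ :=
    heq ▸ (integrable_stereographicFactor_pow μ).lintegral_lt_top.ne
  have hle := contactDensity_le_ofReal_inv_pow hv hpos hsuper
  have hge := heq.trans_le (lintegral_stereographicFactor_pow_le_lintegral_contactDensity μ hv
    (eventually_mul_norm_le_of_lintegral_inv_pow_ne_top μ hv hpos (by positivity) hsuper hfin))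
  have hmeas : Measurable fun x => ENNReal.ofReal ((v x)⁻¹ ^ finrank ℝ E) :=
    (hv.continuous.measurable.inv.pow_const _).ennreal_ofReal
  have hdensity : contactDensity v =ᵐ[μ] fun x => ENNReal.ofReal ((v x)⁻¹ ^ finrank ℝ E) :=
    ae_eq_of_ae_le_of_lintegral_le (.of_forall hle)
      ((lintegral_mono hle).trans_lt hfin.lt_top).ne hmeas.aemeasurable hge
  have hgrad : Continuous (∇ v) := (contDiff_gradient (k := 1) hv).continuous
  have hae : (fun y => v y * Δ v y) =ᵐ[μ] fun y => finrank ℝ E / 2 * (1 + ‖∇ v y‖ ^ 2) := by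
    filter_upwards [hdensity] with y hy using mul_laplacian_eq_of_contactDensity_eq hv (hpos y) hy
  exact congrFun ((Continuous.ae_eq_iff_eq μ (hv.continuous.mul (continuous_laplacian hv))
    (by fun_prop)).1 hae) x

end SharpInequality

theorem laplacian_eq_innerProductSpace_laplacian (u : EuclideanSpace ℝ (Fin 2) → ℝ) :
    laplacian u = Δ u := by
  rw [InnerProductSpace.laplacian_eq_iteratedFDeriv_orthonormalBasis u
    (EuclideanSpace.basisFun (Fin 2) ℝ)]
  ext x
  simp [laplacian, iteratedFDeriv_two_apply]

theorem modified_ding_lemma_general {E : Type*} [NormedAddCommGroup E] [InnerProductSpace ℝ E]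
    [FiniteDimensional ℝ E] [MeasurableSpace E] [BorelSpace E] (hE : finrank ℝ E = 2)
    (u f : E → ℝ) (hu : ContDiff ℝ 2 u) (heq : ∀ x, -Δ u x = f x * exp (2 * u x))
    (hle : ∀ x, f x ≤ 1) :
    ENNReal.ofReal (4 * π) ≤ ∫⁻ x, ENNReal.ofReal (exp (2 * u x)) ∧
    ((∫⁻ x, ENNReal.ofReal (exp (2 * u x))) = ENNReal.ofReal (4 * π) → ∀ x, f x = 1) := by
  have : Nontrivial E := nontrivial_of_finrank_pos (R := ℝ) (by lia)
  set v : E → ℝ := fun x => exp (-u x) with hv_def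
  have hv : ContDiff ℝ 2 v := contDiff_exp.comp hu.neg
  have hpos (x : E) : 0 < v x := exp_pos _
  have harea (x : E) : exp (2 * u x) = (v x)⁻¹ ^ finrank ℝ E := by
    rw [hE, hv_def, ← exp_neg, ← exp_nat_mul]
    simp
  have hlap (x : E) : v x * Δ v x = f x + ‖∇ v x‖ ^ 2 := by
    rw [exp_neg_mul_laplacian_exp_neg hu, heq, mul_assoc, ← exp_add, add_neg_cancel, exp_zero,
      mul_one]
  have hsuper (x : E) : v x * Δ v x ≤ finrank ℝ E / 2 * (1 + ‖∇ v x‖ ^ 2) := by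
    simp only [hlap, hE]
    linarith [hle x]
  simp only [harea, ← lintegral_stereographicFactor_sq hE]
  simp only [← hE]
  refine ⟨lintegral_stereographicFactor_pow_le_lintegral_inv_pow volume hv hpos hsuper,
    fun hint x => ?_⟩
  have := mul_laplacian_eq_of_lintegral_inv_pow_eq volume hv hpos hsuper hint x
  rw [hlap, hE] at this
  linarith

theorem modified_ding_lemma (u f : EuclideanSpace ℝ (Fin 2) → ℝ)
    (hu : ContDiff ℝ (⊤ : ℕ∞) u) (hf : ContDiff ℝ (⊤ : ℕ∞) f)
    (heq : ∀ x, -laplacian u x = f x * Real.exp (2 * u x))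
    (hle : ∀ x, f x ≤ 1) :
    ENNReal.ofReal (4 * Real.pi) ≤ ∫⁻ x, ENNReal.ofReal (Real.exp (2 * u x)) ∧
    ((∫⁻ x, ENNReal.ofReal (Real.exp (2 * u x))) = ENNReal.ofReal (4 * Real.pi) →
      ∀ x, f x = 1) :=
  modified_ding_lemma_general finrank_euclideanSpace_fin u f (contDiff_infty.1 hu 2)
    (laplacian_eq_innerProductSpace_laplacian u ▸ heq) hle
end

section
/- Let p > 0, let n ≥ 2 be an even integer, and let u be a radially symmetric smooth function on ℝ^n such that (1+|x|^{np})·e^{nu} ∈ L¹(ℝ^n) and, for some constant C, u(x) = (2/((n−1)!·|S^n|)) ∫_{ℝ^n} log(|y|/|x−y|)·(1+|y|^{np})·e^{n u(y)} dy + C for all x. Set β := (2/((n−1)!·|S^n|)) ∫_{ℝ^n} (1+|x|^{np})·e^{n u(x)} dx. Then max{2, 2p} < β < 2 + 2p. -/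
open MeasureTheory Real Filter RealInnerProductSpace

/-!
Every average of `log ‖x - y‖` over a circle centred at the origin is explicit by Jensen's formula.
Hence the logarithmic potential `v` of a radial density of mass `m` is decreasing in `‖x‖`, and
`|v (exp t • x) - v x| ≤ m * |t|`: differentiating the dilated integral of `‖x‖ ^ q * exp (n * u x)`
at `t = 0` therefore needs no decay of `u` at infinity.

Write `V₀`, `V₁` for the integrals of `exp (n * u)` and `‖x‖ ^ (n * p) * exp (n * u)`, and `c` for
the factor in front of the potential, so that `β = c * (V₀ + V₁)`. Moving one of two masses by
dilations from the factor `exp (-t)` to `exp t` changes their mutual logarithmic energy, and the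
changes obtained by moving either one add up to `2 * t` times the product of the masses. Comparing
this with the dilation derivatives gives the Pohozaev identity
`c * (V₀ + V₁) ^ 2 = 2 * V₀ + 2 * (1 + p) * V₁`.
Moving the `V₀` mass only, the change due to the `V₁` mass is strictly positive by monotonicity of
the potential, and what remains is `c * V₀ < 2`. The bounds on `β` follow by algebra.
-/

/-- The larger root `T` of `T ^ 2 - s * T + m = 0`; a junk value when `s ^ 2 < 4 * m`. -/
noncomputable def largerRoot (s m : ℝ) : ℝ := (s + √(s ^ 2 - 4 * m)) / 2

section LargerRoot

variable {a b m r s : ℝ}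

lemma half_le_largerRoot : s / 2 ≤ largerRoot s m :=
  div_le_div_of_nonneg_right (le_add_of_nonneg_right (sqrt_nonneg _)) zero_le_two

lemma largerRoot_le (hs : 0 ≤ s) (hm : 0 ≤ m) : largerRoot s m ≤ s := by
  have h : √(s ^ 2 - 4 * m) ≤ s := (sqrt_le_left hs).2 (by linarith)
  unfold largerRoot
  linarith

lemma le_largerRoot (h : r ^ 2 - s * r + m ≤ 0) : r ≤ largerRoot s m := by
  have h' : 2 * r - s ≤ √(s ^ 2 - 4 * m) := le_sqrt_of_sq_le (by linarith)
  unfold largerRoot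
  linarith

lemma largerRoot_isRoot (h : 4 * m ≤ s ^ 2) :
    largerRoot s m ^ 2 - s * largerRoot s m + m = 0 := by
  have h' := sq_sqrt (sub_nonneg.2 h)
  unfold largerRoot
  linarith

lemma four_mul_mul_le_add_sq (ha : 0 ≤ a) (hmb : m ≤ b) : 4 * (a * m) ≤ (a + b) ^ 2 := by
  nlinarith [sq_nonneg (a - b)]

lemma le_largerRoot_add_left (ha : 0 ≤ a) (hmb : m ≤ b) : a ≤ largerRoot (a + b) (a * m) :=
  le_largerRoot (by nlinarith)

lemma le_largerRoot_add_right (ha : 0 ≤ a) (hmb : m ≤ b) : b ≤ largerRoot (a + b) (a * m) :=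
  le_largerRoot (by nlinarith)

lemma largerRoot_add_mono (hr : 0 ≤ r) (hrs : r ≤ s) (hmb : m ≤ b) :
    largerRoot (r + b) (r * m) ≤ largerRoot (s + b) (s * m) := by
  have hroot := largerRoot_isRoot (four_mul_mul_le_add_sq hr hmb)
  have hm := hmb.trans (le_largerRoot_add_right hr hmb)
  exact le_largerRoot (by nlinarith)

lemma mul_largerRoot_add_le (hr : 0 ≤ r) (hrs : r ≤ s) (hmb : m ≤ b) :
    r * largerRoot (s + b) (s * m) ≤ s * largerRoot (r + b) (r * m) := by
  rcases (hr.trans hrs).eq_or_lt with rfl | hs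
  · simp [le_antisymm hrs hr]
  have hroot := largerRoot_isRoot (four_mul_mul_le_add_sq hs.le hmb)
  have hT := le_largerRoot_add_left hs.le hmb
  set T := largerRoot (s + b) (s * m)
  rw [← div_le_iff₀' hs]
  refine le_largerRoot ?_
  calc (r * T / s) ^ 2 - (r + b) * (r * T / s) + r * m
      = r / s * (T ^ 2 - (s + b) * T + s * m) - r / s * T * (1 - r / s) * (T - s) := by
        field_simp
        ring
    _ ≤ 0 := by
        rw [hroot, mul_zero, zero_sub, neg_nonpos]
        have hrs' : r / s ≤ 1 := (div_le_one hs).2 hrs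
        have hT₀ : 0 ≤ T := hs.le.trans hT
        exact mul_nonneg (mul_nonneg (by positivity) (sub_nonneg.2 hrs')) (sub_nonneg.2 hT)

end LargerRoot

section CircleMean

variable {E : Type*} [NormedAddCommGroup E] [InnerProductSpace ℝ E] [FiniteDimensional ℝ E]

lemma nonempty_linearIsometry_of_finrank_le {𝕜 V W : Type*} [RCLike 𝕜]
    [NormedAddCommGroup V] [InnerProductSpace 𝕜 V] [FiniteDimensional 𝕜 V]
    [NormedAddCommGroup W] [InnerProductSpace 𝕜 W] [FiniteDimensional 𝕜 W]
    (h : Module.finrank 𝕜 V ≤ Module.finrank 𝕜 W) : Nonempty (V →ₗᵢ[𝕜] W) := by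
  let v := stdOrthonormalBasis 𝕜 V
  let w := stdOrthonormalBasis 𝕜 W ∘ Fin.castLE h
  have hw : Orthonormal 𝕜 w :=
    (stdOrthonormalBasis 𝕜 W).orthonormal.comp _ (Fin.castLE_injective h)
  refine ⟨(v.toBasis.constr 𝕜 w).isometryOfOrthonormal (v := v.toBasis)
    (by simp [v.orthonormal]) ?_⟩
  rwa [show v.toBasis.constr 𝕜 w ∘ v.toBasis = w from funext (v.toBasis.constr_basis 𝕜 w)]

/-- The square of the geometric mean of `‖ι z - y‖` over the circle `‖z‖ = r` of an isometrically
embedded plane `ι`. If `w` is the coordinate of the projection of `y` to the plane, then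
`‖ι z - y‖ ^ 2 = r ^ 2 + ‖y‖ ^ 2 - 2 * ⟪z, w⟫`, and the mean is the radius `√T` for which this
equals `‖(√T / r) • z - (r / √T) • w‖ ^ 2`. -/
noncomputable def circleMeanSq (ι : ℂ →ₗᵢ[ℝ] E) (r : ℝ) (y : E) : ℝ :=
  largerRoot (r ^ 2 + ‖y‖ ^ 2) (r ^ 2 * ‖ι.toContinuousLinearMap.adjoint y‖ ^ 2)

variable (ι : ℂ →ₗᵢ[ℝ] E) {r s : ℝ} {y : E}

lemma norm_adjoint_linearIsometry_sq_le (y : E) :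
    ‖ι.toContinuousLinearMap.adjoint y‖ ^ 2 ≤ ‖y‖ ^ 2 := by
  have h : ‖ι.toContinuousLinearMap.adjoint y‖ ≤ ‖y‖ := by
    refine (ContinuousLinearMap.le_of_opNorm_le _ ?_ y).trans_eq (one_mul _)
    rw [LinearIsometryEquiv.norm_map]
    exact ι.norm_toContinuousLinearMap_le
  gcongr

lemma sq_le_circleMeanSq (r : ℝ) (y : E) : r ^ 2 ≤ circleMeanSq ι r y :=
  le_largerRoot_add_left (sq_nonneg r) (norm_adjoint_linearIsometry_sq_le ι y)

lemma norm_sq_le_circleMeanSq (r : ℝ) (y : E) : ‖y‖ ^ 2 ≤ circleMeanSq ι r y :=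
  le_largerRoot_add_right (sq_nonneg r) (norm_adjoint_linearIsometry_sq_le ι y)

lemma circleMeanSq_pos (r : ℝ) (hy : y ≠ 0) : 0 < circleMeanSq ι r y :=
  (by positivity : 0 < ‖y‖ ^ 2).trans_le (norm_sq_le_circleMeanSq ι r y)

lemma norm_sub_eq_norm_circleMap_sub (r θ : ℝ) (hy : y ≠ 0) :
    ‖ι (circleMap 0 r θ) - y‖ = ‖circleMap 0 √(circleMeanSq ι r y) θ -
      (r / √(circleMeanSq ι r y)) • ι.toContinuousLinearMap.adjoint y‖ := by
  have hT := circleMeanSq_pos ι r hy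
  have hroot : circleMeanSq ι r y ^ 2 - (r ^ 2 + ‖y‖ ^ 2) * circleMeanSq ι r y +
      r ^ 2 * ‖ι.toContinuousLinearMap.adjoint y‖ ^ 2 = 0 :=
    largerRoot_isRoot
      (four_mul_mul_le_add_sq (sq_nonneg r) (norm_adjoint_linearIsometry_sq_le ι y))
  set T := circleMeanSq ι r y
  set w := ι.toContinuousLinearMap.adjoint y
  have hsmul (R : ℝ) : circleMap 0 R θ = R • circleMap 0 1 θ := by simp [circleMap]
  have hleft : ‖ι (circleMap 0 r θ) - y‖ ^ 2 =
      r ^ 2 + ‖y‖ ^ 2 - 2 * (r * ⟪circleMap 0 1 θ, w⟫) := by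
    have hinner : ⟪circleMap 0 1 θ, w⟫ = ⟪ι (circleMap 0 1 θ), y⟫ :=
      ContinuousLinearMap.adjoint_inner_right ..
    rw [norm_sub_sq_real, ι.norm_map, norm_circleMap_zero, sq_abs, hinner, hsmul r, map_smul,
      real_inner_smul_left]
    ring
  have hright : ‖circleMap 0 √T θ - (r / √T) • w‖ ^ 2 =
      T + r ^ 2 / T * ‖w‖ ^ 2 - 2 * (r * ⟪circleMap 0 1 θ, w⟫) := by
    have hsqrt₀ : √T ≠ 0 := (sqrt_pos.2 hT).ne'
    rw [norm_sub_sq_real, norm_circleMap_zero, norm_smul, norm_eq_abs, mul_pow, sq_abs, sq_abs,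
      div_pow, sq_sqrt hT.le, hsmul √T, real_inner_smul_left, real_inner_smul_right]
    field_simp
    ring
  rw [← sq_eq_sq₀ (norm_nonneg _) (norm_nonneg _), hleft, hright]
  field_simp
  linarith

lemma circleAverage_log_norm_linearIsometry_sub (r : ℝ) (hy : y ≠ 0) :
    circleAverage (fun z => log ‖ι z - y‖) 0 r = log (circleMeanSq ι r y) / 2 := by
  have hT := circleMeanSq_pos ι r hy
  have hr := sq_le_circleMeanSq ι r y
  have hw := (norm_adjoint_linearIsometry_sq_le ι y).trans (norm_sq_le_circleMeanSq ι r y)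
  have hmem : (r / √(circleMeanSq ι r y)) • ι.toContinuousLinearMap.adjoint y ∈
      Metric.closedBall (0 : ℂ) |√(circleMeanSq ι r y)| := by
    rw [mem_closedBall_zero_iff, norm_smul, norm_div, norm_eq_abs, norm_of_nonneg (sqrt_nonneg _),
      abs_of_nonneg (sqrt_nonneg _), div_mul_eq_mul_div, div_le_iff₀ (sqrt_pos.2 hT)]
    exact mul_le_mul (abs_le_sqrt hr) (le_sqrt_of_sq_le hw) (norm_nonneg _) (sqrt_nonneg _)
  rw [← log_sqrt hT.le, ← circleAverage_log_norm_sub_const_of_mem_closedBall hmem,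
    circleAverage_def, circleAverage_def]
  simp_rw [norm_sub_eq_norm_circleMap_sub ι r _ hy]

lemma circleMeanSq_mono (hr : 0 ≤ r) (hrs : r ≤ s) (y : E) :
    circleMeanSq ι r y ≤ circleMeanSq ι s y :=
  largerRoot_add_mono (sq_nonneg r) (by gcongr) (norm_adjoint_linearIsometry_sq_le ι y)

lemma sq_mul_circleMeanSq_le (hr : 0 ≤ r) (hrs : r ≤ s) (y : E) :
    r ^ 2 * circleMeanSq ι s y ≤ s ^ 2 * circleMeanSq ι r y :=
  mul_largerRoot_add_le (sq_nonneg r) (by gcongr) (norm_adjoint_linearIsometry_sq_le ι y)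

lemma log_circleMeanSq_sub_nonneg (hr : 0 ≤ r) (hrs : r ≤ s) (hy : y ≠ 0) :
    0 ≤ log (circleMeanSq ι s y) - log (circleMeanSq ι r y) :=
  sub_nonneg.2 (log_le_log (circleMeanSq_pos ι r hy) (circleMeanSq_mono ι hr hrs y))

lemma log_circleMeanSq_sub_le (hr : 0 < r) (hrs : r ≤ s) (hy : y ≠ 0) :
    log (circleMeanSq ι s y) - log (circleMeanSq ι r y) ≤ 2 * log (s / r) := by
  have hs := hr.trans_le hrs
  have hTr := circleMeanSq_pos ι r hy
  have hTs := circleMeanSq_pos ι s hy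
  have h := log_le_log (by positivity) (sq_mul_circleMeanSq_le ι hr.le hrs y)
  rw [log_mul (by positivity) hTs.ne', log_mul (by positivity) hTr.ne', log_pow, log_pow] at h
  rw [log_div hs.ne' hr.ne']
  push_cast at h
  linarith

lemma log_circleMeanSq_le (hr : 0 ≤ r) (hy : y ≠ 0) :
    log (circleMeanSq ι r y) ≤ 2 * log (r + ‖y‖) := by
  have h : circleMeanSq ι r y ≤ (r + ‖y‖) ^ 2 :=
    (largerRoot_le (by positivity) (by positivity)).trans (by nlinarith [norm_nonneg y])
  exact_mod_cast (log_le_log (circleMeanSq_pos ι r hy) h).trans_eq (log_pow _ 2)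

lemma le_log_circleMeanSq (hr : 0 ≤ r) (hy : y ≠ 0) :
    2 * (log (r + ‖y‖) - log 2) ≤ log (circleMeanSq ι r y) := by
  have hpos : 0 < r + ‖y‖ := by positivity
  have h : ((r + ‖y‖) / 2) ^ 2 ≤ circleMeanSq ι r y :=
    half_le_largerRoot.trans' (by nlinarith [sq_nonneg (r - ‖y‖)])
  rw [← log_div hpos.ne' two_ne_zero]
  exact_mod_cast (log_pow _ 2).symm.trans_le (log_le_log (by positivity) h)

end CircleMean

section LogKernel

variable {E : Type*} [NormedAddCommGroup E]

/-- The logarithmic kernel `-log ‖x - y‖` corrected by `log (‖x‖ + ‖y‖)`, which makes it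
nonnegative and invariant under dilations and linear isometries. On the diagonal it takes the junk
value `0`. -/
noncomputable def logKernel (x y : E) : ℝ := log ((‖x‖ + ‖y‖) / ‖x - y‖)

lemma logKernel_nonneg (x y : E) : 0 ≤ logKernel x y := by
  rcases eq_or_ne x y with rfl | h
  · simp [logKernel]
  · exact log_nonneg ((one_le_div (norm_sub_pos_iff.2 h)).2 (norm_sub_le x y))

lemma logKernel_of_ne {x y : E} (h : x ≠ y) :
    logKernel x y = log (‖x‖ + ‖y‖) - log ‖x - y‖ := by
  have hpos := norm_sub_pos_iff.2 h
  exact log_div (hpos.trans_le (norm_sub_le x y)).ne' hpos.ne'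

lemma measurable_logKernel_comp [MeasurableSpace E] [BorelSpace E] [SecondCountableTopology E]
    {α : Type*} [MeasurableSpace α] {f g : α → E} (hf : Measurable f) (hg : Measurable g) :
    Measurable fun a => logKernel (f a) (g a) := by
  unfold logKernel
  fun_prop

variable [NormedSpace ℝ E]

lemma logKernel_map (e : E ≃ₗᵢ[ℝ] E) (x y : E) :
    logKernel (e x) (e y) = logKernel x y := by
  simp only [logKernel, ← map_sub, e.norm_map]

variable (ι : ℂ →ₗᵢ[ℝ] E) {r : ℝ} {y : E}

lemma linearIsometry_circleMap_ne (hr : 0 ≤ r) (hyr : ‖y‖ ≠ r) (θ : ℝ) :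
    ι (circleMap 0 r θ) ≠ y := by
  rintro rfl
  simp [abs_of_nonneg hr] at hyr

lemma continuous_log_norm_linearIsometry_circleMap_sub (hr : 0 ≤ r) (hyr : ‖y‖ ≠ r) :
    Continuous fun θ => log ‖ι (circleMap 0 r θ) - y‖ :=
  ((ι.continuous.comp (continuous_circleMap 0 r)).sub continuous_const).norm.log
    fun θ => norm_ne_zero_iff.2 (sub_ne_zero.2 (linearIsometry_circleMap_ne ι hr hyr θ))

lemma logKernel_linearIsometry_circleMap (hr : 0 ≤ r) (hyr : ‖y‖ ≠ r) (θ : ℝ) :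
    logKernel (ι (circleMap 0 r θ)) y = log (r + ‖y‖) - log ‖ι (circleMap 0 r θ) - y‖ := by
  rw [logKernel_of_ne (linearIsometry_circleMap_ne ι hr hyr θ), ι.norm_map, norm_circleMap_zero,
    abs_of_nonneg hr]

lemma integrable_logKernel_circleMap (hr : 0 ≤ r) (hyr : ‖y‖ ≠ r) :
    IntegrableOn (fun θ => logKernel (ι (circleMap 0 r θ)) y) (Set.Ioc 0 (2 * π)) := by
  simp_rw [logKernel_linearIsometry_circleMap ι hr hyr]
  exact (continuous_const.sub (continuous_log_norm_linearIsometry_circleMap_sub ι hr hyr)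
    ).integrableOn_Ioc

end LogKernel

section LogKernelMean

variable {E : Type*} [NormedAddCommGroup E] [InnerProductSpace ℝ E] [FiniteDimensional ℝ E]
  (ι : ℂ →ₗᵢ[ℝ] E) {r : ℝ} {y : E}

/-- The mean of `logKernel · y` over the circle of radius `r` in the plane `ι`. -/
noncomputable def logKernelMean (r : ℝ) (y : E) : ℝ :=
  log (r + ‖y‖) - log (circleMeanSq ι r y) / 2

lemma logKernelMean_nonneg (hr : 0 ≤ r) (hy : y ≠ 0) : 0 ≤ logKernelMean ι r y := by
  have h := log_circleMeanSq_le ι hr hy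
  unfold logKernelMean
  linarith

lemma logKernelMean_le (hr : 0 ≤ r) (hy : y ≠ 0) : logKernelMean ι r y ≤ log 2 := by
  have h := le_log_circleMeanSq ι hr hy
  unfold logKernelMean
  linarith

@[fun_prop]
lemma measurable_logKernelMean [MeasurableSpace E] [BorelSpace E] :
    Measurable (logKernelMean ι r) := by
  unfold logKernelMean circleMeanSq largerRoot
  fun_prop

lemma integral_logKernel_circleMap (hr : 0 ≤ r) (hy : y ≠ 0) (hyr : ‖y‖ ≠ r) :
    ∫ θ in Set.Ioc 0 (2 * π), logKernel (ι (circleMap 0 r θ)) y =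
      2 * π * logKernelMean ι r y := by
  have hmean := circleAverage_log_norm_linearIsometry_sub ι r hy
  rw [circleAverage_def, smul_eq_mul, inv_mul_eq_iff_eq_mul₀ two_pi_pos.ne'] at hmean
  simp_rw [logKernel_linearIsometry_circleMap ι hr hyr]
  rw [← intervalIntegral.integral_of_le two_pi_pos.le, intervalIntegral.integral_sub
    intervalIntegrable_const
    ((continuous_log_norm_linearIsometry_circleMap_sub ι hr hyr).intervalIntegrable _ _), hmean,
    intervalIntegral.integral_const, smul_eq_mul, sub_zero, logKernelMean, mul_sub]

end LogKernelMean

section RadialIntegral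

variable {E : Type*} [NormedAddCommGroup E] [InnerProductSpace ℝ E] {f : E → ℝ}

lemma exists_logKernel_mul_comp_eq {x x' : E} (hfr : Function.FactorsThrough f norm)
    (h : ‖x‖ = ‖x'‖) :
    ∃ e : E ≃ₗᵢ[ℝ] E,
      (fun y => logKernel x' y * f y) ∘ e = fun y => logKernel x y * f y := by
  obtain ⟨e, rfl⟩ : ∃ e : E ≃ₗᵢ[ℝ] E, e x = x' := ⟨_, Submodule.reflection_sub h⟩
  refine ⟨e, funext fun y => ?_⟩
  rw [Function.comp_apply, logKernel_map, hfr (e.norm_map y)]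

variable [FiniteDimensional ℝ E] [MeasurableSpace E] [BorelSpace E]

lemma ae_ne_zero_and_norm_ne [Nontrivial E] (r : ℝ) : ∀ᵐ y : E, y ≠ 0 ∧ ‖y‖ ≠ r := by
  have h : ∀ᵐ y : E, y ∉ Metric.sphere 0 r :=
    measure_eq_zero_iff_ae_notMem.1 (Measure.addHaar_sphere volume 0 r)
  filter_upwards [Measure.ae_ne volume (0 : E), h] with y hy hyr
  exact ⟨hy, by simpa using hyr⟩

lemma integrable_logKernel_mul_iff {x x' : E} (hfr : Function.FactorsThrough f norm)
    (h : ‖x‖ = ‖x'‖) :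
    Integrable (fun y => logKernel x y * f y) ↔ Integrable fun y => logKernel x' y * f y := by
  obtain ⟨e, he⟩ := exists_logKernel_mul_comp_eq hfr h
  rw [← he, e.measurePreserving.integrable_comp_emb e.toHomeomorph.measurableEmbedding]

lemma integral_logKernel_mul_congr {x x' : E} (hfr : Function.FactorsThrough f norm)
    (h : ‖x‖ = ‖x'‖) :
    ∫ y, logKernel x y * f y = ∫ y, logKernel x' y * f y := by
  obtain ⟨e, he⟩ := exists_logKernel_mul_comp_eq hfr h
  rw [← he]
  exact e.measurePreserving.integral_comp e.toHomeomorph.measurableEmbedding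
    fun y => logKernel x' y * f y

variable (ι : ℂ →ₗᵢ[ℝ] E) {r : ℝ}

lemma integrable_logKernelMean_mul (hf : Integrable f) (hr : 0 ≤ r) :
    Integrable fun y => logKernelMean ι r y * f y := by
  have : Nontrivial E := ι.injective.nontrivial
  refine hf.bdd_mul (c := log 2) (by fun_prop) ?_
  filter_upwards [Measure.ae_ne volume (0 : E)] with y hy
  rw [norm_of_nonneg (logKernelMean_nonneg ι hr hy)]
  exact logKernelMean_le ι hr hy

lemma integrable_prod_logKernel_mul (hf : Integrable f) (hr : 0 ≤ r) :
    Integrable (fun z : ℝ × E => logKernel (ι (circleMap 0 r z.1)) z.2 * f z.2)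
      ((volume.restrict (Set.Ioc 0 (2 * π))).prod volume) := by
  have : Nontrivial E := ι.injective.nontrivial
  have hcircle : Measurable fun z : ℝ × E => ι (circleMap 0 r z.1) :=
    (ι.continuous.comp (continuous_circleMap 0 r)).measurable.comp measurable_fst
  have hmeas : AEStronglyMeasurable
      (fun z : ℝ × E => logKernel (ι (circleMap 0 r z.1)) z.2 * f z.2)
      ((volume.restrict (Set.Ioc 0 (2 * π))).prod volume) :=
    (measurable_logKernel_comp hcircle measurable_snd).aestronglyMeasurable.mul hf.1.comp_snd
  refine (integrable_prod_iff' hmeas).2 ⟨?_, ?_⟩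
  · filter_upwards [ae_ne_zero_and_norm_ne r] with y hy
    exact (integrable_logKernel_circleMap ι hr hy.2).mul_const _
  · refine ((integrable_logKernelMean_mul ι hf.abs hr).const_mul (2 * π)).congr ?_
    filter_upwards [ae_ne_zero_and_norm_ne r] with y hy
    simp_rw [norm_mul, norm_of_nonneg (logKernel_nonneg _ _), integral_mul_const,
      integral_logKernel_circleMap ι hr hy.1 hy.2, norm_eq_abs, mul_assoc]

lemma integrable_logKernel_mul (hE : 2 ≤ Module.finrank ℝ E) (hf : Integrable f)
    (hfr : Function.FactorsThrough f norm) (x : E) :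
    Integrable fun y => logKernel x y * f y := by
  obtain ⟨ι⟩ : Nonempty (ℂ →ₗᵢ[ℝ] E) :=
    nonempty_linearIsometry_of_finrank_le (by rwa [Complex.finrank_real_complex])
  have : NeZero (volume.restrict (Set.Ioc 0 (2 * π))) :=
    ⟨by simp [Measure.restrict_eq_zero, pi_pos]⟩
  obtain ⟨θ, hθ⟩ := (integrable_prod_logKernel_mul ι hf (norm_nonneg x)).prod_right_ae.exists
  have hnorm : ‖ι (circleMap 0 ‖x‖ θ)‖ = ‖x‖ := by simp
  exact (integrable_logKernel_mul_iff hfr hnorm).1 hθ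

lemma integral_logKernel_mul (hf : Integrable f) (hfr : Function.FactorsThrough f norm) (x : E) :
    ∫ y, logKernel x y * f y = ∫ y, logKernelMean ι ‖x‖ y * f y := by
  have : Nontrivial E := ι.injective.nontrivial
  have hswap := integral_integral_swap
    (f := fun θ y => logKernel (ι (circleMap 0 ‖x‖ θ)) y * f y)
    (integrable_prod_logKernel_mul ι hf (norm_nonneg x))
  have hleft (θ : ℝ) : ∫ y, logKernel (ι (circleMap 0 ‖x‖ θ)) y * f y =
      ∫ y, logKernel x y * f y :=
    integral_logKernel_mul_congr hfr (by simp)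
  have hright : ∀ᵐ y : E, ∫ θ in Set.Ioc 0 (2 * π), logKernel (ι (circleMap 0 ‖x‖ θ)) y * f y =
      2 * π * (logKernelMean ι ‖x‖ y * f y) := by
    filter_upwards [ae_ne_zero_and_norm_ne ‖x‖] with y hy
    rw [integral_mul_const, integral_logKernel_circleMap ι (norm_nonneg x) hy.1 hy.2, mul_assoc]
  simp only [hleft] at hswap
  rw [integral_congr_ae hright, integral_const_mul, setIntegral_const] at hswap
  simpa [pi_pos.le, pi_pos.ne'] using hswap

lemma integral_abs_logKernel_mul_le (hE : 2 ≤ Module.finrank ℝ E) (hf : Integrable f)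
    (hfr : Function.FactorsThrough f norm) (x : E) :
    ∫ y, |logKernel x y * f y| ≤ log 2 * ∫ y, |f y| := by
  obtain ⟨ι⟩ : Nonempty (ℂ →ₗᵢ[ℝ] E) :=
    nonempty_linearIsometry_of_finrank_le (by rwa [Complex.finrank_real_complex])
  have : Nontrivial E := ι.injective.nontrivial
  simp_rw [abs_mul, abs_of_nonneg (logKernel_nonneg _ _)]
  rw [integral_logKernel_mul ι hf.abs (fun _ _ h => congrArg abs (hfr h)), ← integral_const_mul]
  refine integral_mono_ae (integrable_logKernelMean_mul ι hf.abs (norm_nonneg x))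
    (hf.abs.const_mul _) ?_
  filter_upwards [Measure.ae_ne volume (0 : E)] with y hy
  exact mul_le_mul_of_nonneg_right (logKernelMean_le ι (norm_nonneg x) hy) (abs_nonneg _)

end RadialIntegral

section LogDifference

lemma abs_log_add_sub_log_add_le {a b c : ℝ} (ha : 0 < a) (hb : 0 < b) (hc : 0 ≤ c) :
    |log (a + c) - log (b + c)| ≤ |log (a / b)| := by
  wlog hba : b ≤ a generalizing a b
  · rw [abs_sub_comm, ← inv_div, log_inv, abs_neg]
    exact this hb ha (le_of_not_ge hba)
  rw [← log_div (by positivity) (by positivity),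
    abs_of_nonneg (log_nonneg ((one_le_div (by positivity)).2 (by gcongr))),
    abs_of_nonneg (log_nonneg ((one_le_div hb).2 hba))]
  refine log_le_log (by positivity) ((div_le_div_iff₀ (by positivity) hb).2 ?_)
  nlinarith

lemma log_norm_sub_sub_log_norm_sub {E : Type*} [NormedAddCommGroup E] {x x' y : E} (h : x ≠ y)
    (h' : x' ≠ y) :
    log ‖x' - y‖ - log ‖x - y‖ =
      log (‖x'‖ + ‖y‖) - log (‖x‖ + ‖y‖) + logKernel x y - logKernel x' y := by
  rw [logKernel_of_ne h, logKernel_of_ne h']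
  ring

variable {E : Type*} [NormedAddCommGroup E] [InnerProductSpace ℝ E] [FiniteDimensional ℝ E]
  [MeasurableSpace E] [BorelSpace E] {f : E → ℝ} {x x' : E}

lemma ae_ne_and_ne [Nontrivial E] (x x' : E) : ∀ᵐ y : E, x ≠ y ∧ x' ≠ y := by
  filter_upwards [Measure.ae_ne volume x, Measure.ae_ne volume x'] with y h h'
  exact ⟨h.symm, h'.symm⟩

lemma ae_log_norm_sub_sub_mul_eq [Nontrivial E] (f : E → ℝ) (x x' : E) :
    (fun y => (log ‖x' - y‖ - log ‖x - y‖) * f y) =ᵐ[volume] fun y =>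
      (log (‖x'‖ + ‖y‖) - log (‖x‖ + ‖y‖)) * f y + logKernel x y * f y - logKernel x' y * f y := by
  filter_upwards [ae_ne_and_ne x x'] with y hy
  rw [log_norm_sub_sub_log_norm_sub hy.1 hy.2]
  ring

lemma integrable_log_norm_add_sub_mul (hf : Integrable f) (hx : x ≠ 0) (hx' : x' ≠ 0) :
    Integrable fun y => (log (‖x'‖ + ‖y‖) - log (‖x‖ + ‖y‖)) * f y :=
  hf.bdd_mul (c := |log (‖x'‖ / ‖x‖)|) (by fun_prop) (ae_of_all _ fun y =>
    abs_log_add_sub_log_add_le (norm_pos_iff.2 hx') (norm_pos_iff.2 hx) (norm_nonneg y))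

lemma integrable_log_norm_sub_sub_mul (hE : 2 ≤ Module.finrank ℝ E) (hf : Integrable f)
    (hfr : Function.FactorsThrough f norm) (hx : x ≠ 0) (hx' : x' ≠ 0) :
    Integrable fun y => (log ‖x' - y‖ - log ‖x - y‖) * f y := by
  have : Nontrivial E := ⟨x, 0, hx⟩
  exact (((integrable_log_norm_add_sub_mul hf hx hx').add
    (integrable_logKernel_mul hE hf hfr x)).sub (integrable_logKernel_mul hE hf hfr x')).congr
    (ae_log_norm_sub_sub_mul_eq f x x').symm

lemma integral_abs_log_norm_sub_sub_mul_le (hE : 2 ≤ Module.finrank ℝ E) (hf : Integrable f)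
    (hfr : Function.FactorsThrough f norm) (hx : x ≠ 0) (hx' : x' ≠ 0) :
    ∫ y, |(log ‖x' - y‖ - log ‖x - y‖) * f y| ≤
      (|log (‖x'‖ / ‖x‖)| + 2 * log 2) * ∫ y, |f y| := by
  have : Nontrivial E := ⟨x, 0, hx⟩
  have hκ := integrable_logKernel_mul hE hf hfr x
  have hκ' := integrable_logKernel_mul hE hf hfr x'
  have hadd : Integrable fun y => |log (‖x'‖ / ‖x‖)| * |f y| + |logKernel x y * f y| :=
    (hf.abs.const_mul _).add hκ.abs
  calc ∫ y, |(log ‖x' - y‖ - log ‖x - y‖) * f y|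
      ≤ ∫ y, (|log (‖x'‖ / ‖x‖)| * |f y| + |logKernel x y * f y| + |logKernel x' y * f y|) := by
        refine integral_mono_ae (integrable_log_norm_sub_sub_mul hE hf hfr hx hx').abs
          (hadd.add hκ'.abs) ?_
        filter_upwards [ae_log_norm_sub_sub_mul_eq f x x'] with y hy
        have hlog := abs_log_add_sub_log_add_le (norm_pos_iff.2 hx') (norm_pos_iff.2 hx)
          (norm_nonneg y)
        rw [hy]
        refine (abs_sub _ _).trans (add_le_add_left ((abs_add_le _ _).trans ?_) _)
        rw [abs_mul]
        gcongr
    _ = |log (‖x'‖ / ‖x‖)| * (∫ y, |f y|) + (∫ y, |logKernel x y * f y|) +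
          ∫ y, |logKernel x' y * f y| := by
        rw [integral_add hadd hκ'.abs, integral_add (hf.abs.const_mul _) hκ.abs,
          integral_const_mul]
    _ ≤ |log (‖x'‖ / ‖x‖)| * (∫ y, |f y|) + log 2 * (∫ y, |f y|) + log 2 * ∫ y, |f y| := by
        gcongr <;> exact integral_abs_logKernel_mul_le hE hf hfr _
    _ = (|log (‖x'‖ / ‖x‖)| + 2 * log 2) * ∫ y, |f y| := by ring

lemma integral_log_norm_sub_sub_mul (hE : 2 ≤ Module.finrank ℝ E) (ι : ℂ →ₗᵢ[ℝ] E)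
    (hf : Integrable f) (hfr : Function.FactorsThrough f norm) (hx : x ≠ 0) (hx' : x' ≠ 0) :
    ∫ y, (log ‖x' - y‖ - log ‖x - y‖) * f y =
      ∫ y, (log (circleMeanSq ι ‖x'‖ y) - log (circleMeanSq ι ‖x‖ y)) / 2 * f y := by
  have : Nontrivial E := ⟨x, 0, hx⟩
  have hlog := integrable_log_norm_add_sub_mul hf hx hx'
  have hκ := integrable_logKernel_mul hE hf hfr
  have hM (x : E) := integrable_logKernelMean_mul ι hf (norm_nonneg x)
  have hlogκ := hlog.add (hκ x)
  have hlogM := hlog.add (hM x)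
  simp only [Pi.add_def] at hlogκ hlogM
  rw [integral_congr_ae (ae_log_norm_sub_sub_mul_eq f x x'), integral_sub hlogκ (hκ x'),
    integral_add hlog (hκ x), integral_logKernel_mul ι hf hfr, integral_logKernel_mul ι hf hfr,
    ← integral_add hlog (hM x), ← integral_sub hlogM (hM x')]
  refine integral_congr_ae (ae_of_all _ fun y => ?_)
  simp only [logKernelMean]
  ring

lemma integral_log_norm_sub_sub_mul_nonneg (hE : 2 ≤ Module.finrank ℝ E) (hf : Integrable f)
    (hf₀ : ∀ y, 0 ≤ f y) (hfr : Function.FactorsThrough f norm) (hx : x ≠ 0) (h : ‖x‖ ≤ ‖x'‖) :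
    0 ≤ ∫ y, (log ‖x' - y‖ - log ‖x - y‖) * f y := by
  obtain ⟨ι⟩ : Nonempty (ℂ →ₗᵢ[ℝ] E) :=
    nonempty_linearIsometry_of_finrank_le (by rwa [Complex.finrank_real_complex])
  have : Nontrivial E := ⟨x, 0, hx⟩
  have hx' : x' ≠ 0 := norm_pos_iff.1 ((norm_pos_iff.2 hx).trans_le h)
  rw [integral_log_norm_sub_sub_mul hE ι hf hfr hx hx']
  refine integral_nonneg_of_ae ?_
  filter_upwards [Measure.ae_ne volume (0 : E)] with y hy
  have hlog := log_circleMeanSq_sub_nonneg ι (norm_nonneg x) h hy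
  exact mul_nonneg (div_nonneg hlog zero_le_two) (hf₀ y)

lemma integral_log_norm_sub_sub_mul_le (hE : 2 ≤ Module.finrank ℝ E) (hf : Integrable f)
    (hf₀ : ∀ y, 0 ≤ f y) (hfr : Function.FactorsThrough f norm) (hx : x ≠ 0) (h : ‖x‖ ≤ ‖x'‖) :
    ∫ y, (log ‖x' - y‖ - log ‖x - y‖) * f y ≤ log (‖x'‖ / ‖x‖) * ∫ y, f y := by
  obtain ⟨ι⟩ : Nonempty (ℂ →ₗᵢ[ℝ] E) :=
    nonempty_linearIsometry_of_finrank_le (by rwa [Complex.finrank_real_complex])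
  have : Nontrivial E := ⟨x, 0, hx⟩
  have hx' : x' ≠ 0 := norm_pos_iff.1 ((norm_pos_iff.2 hx).trans_le h)
  rw [integral_log_norm_sub_sub_mul hE ι hf hfr hx hx', ← integral_const_mul]
  refine integral_mono_of_nonneg ?_ (hf.const_mul _) ?_
  all_goals filter_upwards [Measure.ae_ne volume (0 : E)] with y hy
  · have hlog := log_circleMeanSq_sub_nonneg ι (norm_nonneg x) h hy
    exact mul_nonneg (div_nonneg hlog zero_le_two) (hf₀ y)
  · have hle := log_circleMeanSq_sub_le ι (norm_pos_iff.2 hx) h hy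
    exact mul_le_mul_of_nonneg_right (by linarith) (hf₀ y)

end LogDifference

section LogPotential

lemma norm_exp_smul {E : Type*} [NormedAddCommGroup E] [NormedSpace ℝ E] (t : ℝ) (x : E) :
    ‖exp t • x‖ = exp t * ‖x‖ := by
  rw [norm_smul, norm_of_nonneg (exp_nonneg t)]

variable {E : Type*} [NormedAddCommGroup E] [InnerProductSpace ℝ E] [FiniteDimensional ℝ E]
  [MeasurableSpace E] [BorelSpace E] {f : E → ℝ}

/-- The logarithmic potential of the density `f`, with the kernel normalised so that the potential
vanishes at the origin. -/
noncomputable def logPotential (f : E → ℝ) (x : E) : ℝ := ∫ y, log (‖y‖ / ‖x - y‖) * f y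

lemma integrable_inv_norm_mul (hE : 2 ≤ Module.finrank ℝ E) (hfc : Continuous f)
    (hf : Integrable f) : Integrable fun y => ‖y‖⁻¹ * f y := by
  have hloc : LocallyIntegrable (fun y : E => ‖y‖⁻¹) := by
    refine locallyIntegrable_of_norm_le_rpow (C := 1) (α := 1) (one_le_two.trans hE)
      (by exact_mod_cast hE) (ae_of_all _ fun y => ?_) (by fun_prop)
    rw [norm_inv, norm_norm, rpow_neg_one, one_mul]
  rw [← integrableOn_univ, ← Set.union_compl_self (Metric.closedBall (0 : E) 1)]
  refine ((hloc.mul_continuous hfc).integrableOn_isCompact (isCompact_closedBall 0 1)).union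
    (hf.integrableOn.bdd_mul (c := 1) (by fun_prop) ?_)
  filter_upwards [ae_restrict_mem Metric.isClosed_closedBall.measurableSet.compl] with y hy
  have hy' : 1 < ‖y‖ := by simpa using hy
  rw [norm_inv, norm_norm]
  exact inv_le_one_of_one_le₀ hy'.le

lemma integrable_log_norm_div_norm_sub_mul (hE : 2 ≤ Module.finrank ℝ E) (hfc : Continuous f)
    (hf : Integrable f) (hfr : Function.FactorsThrough f norm) (x : E) :
    Integrable fun y => log (‖y‖ / ‖x - y‖) * f y := by
  have : Nontrivial E := Module.nontrivial_of_finrank_pos (R := ℝ) (two_pos.trans_le hE)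
  have hlog : Integrable fun y => log (1 + ‖x‖ / ‖y‖) * f y := by
    refine ((integrable_inv_norm_mul hE hfc hf).const_mul ‖x‖).mono
      (Measurable.aestronglyMeasurable (by fun_prop) |>.mul hf.1)
      (ae_of_all _ fun y => ?_)
    have hs : 0 ≤ ‖x‖ / ‖y‖ := by positivity
    rw [← mul_assoc, norm_mul, norm_mul, ← div_eq_mul_inv, norm_of_nonneg hs,
      norm_of_nonneg (log_nonneg (by linarith))]
    gcongr
    linarith [log_le_sub_one_of_pos (by linarith : 0 < 1 + ‖x‖ / ‖y‖)]
  refine ((integrable_logKernel_mul hE hf hfr x).sub hlog).congr ?_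
  filter_upwards [ae_ne_and_ne 0 x] with y hy
  have hy₀ := norm_pos_iff.2 hy.1.symm
  have hxy := norm_sub_pos_iff.2 hy.2
  rw [Pi.sub_apply, logKernel_of_ne hy.2, one_add_div hy₀.ne', add_comm ‖y‖,
    log_div (by positivity) hy₀.ne', log_div hy₀.ne' hxy.ne']
  ring

lemma logPotential_sub_logPotential (hE : 2 ≤ Module.finrank ℝ E) (hfc : Continuous f)
    (hf : Integrable f) (hfr : Function.FactorsThrough f norm) (x x' : E) :
    logPotential f x - logPotential f x' = ∫ y, (log ‖x' - y‖ - log ‖x - y‖) * f y := by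
  have : Nontrivial E := Module.nontrivial_of_finrank_pos (R := ℝ) (two_pos.trans_le hE)
  have hint := integrable_log_norm_div_norm_sub_mul hE hfc hf hfr
  rw [logPotential, logPotential, ← integral_sub (hint x) (hint x')]
  refine integral_congr_ae ?_
  filter_upwards [ae_ne_and_ne x x', Measure.ae_ne volume (0 : E)] with y hy hy₀
  rw [log_div (norm_ne_zero_iff.2 hy₀) (norm_sub_pos_iff.2 hy.1).ne',
    log_div (norm_ne_zero_iff.2 hy₀) (norm_sub_pos_iff.2 hy.2).ne']
  ring

lemma abs_logPotential_exp_smul_sub_le (hE : 2 ≤ Module.finrank ℝ E) (hfc : Continuous f)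
    (hf : Integrable f) (hf₀ : ∀ y, 0 ≤ f y) (hfr : Function.FactorsThrough f norm) (t : ℝ)
    (x : E) : |logPotential f (exp t • x) - logPotential f x| ≤ (∫ y, f y) * |t| := by
  wlog ht : 0 ≤ t generalizing t x
  · have h := this (-t) (exp t • x) (by linarith)
    rwa [smul_smul, ← exp_add, neg_add_cancel, exp_zero, one_smul, abs_neg, abs_sub_comm] at h
  rcases eq_or_ne x 0 with rfl | hx
  · simpa using mul_nonneg (integral_nonneg hf₀) (abs_nonneg t)
  have hx₀ := norm_pos_iff.2 hx
  have hle : ‖x‖ ≤ ‖exp t • x‖ := by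
    rw [norm_exp_smul]
    exact le_mul_of_one_le_left hx₀.le (one_le_exp ht)
  have hlog : log (‖exp t • x‖ / ‖x‖) = t := by
    rw [norm_exp_smul, mul_div_cancel_right₀ _ hx₀.ne', log_exp]
  rw [abs_sub_comm, logPotential_sub_logPotential hE hfc hf hfr,
    abs_of_nonneg (integral_log_norm_sub_sub_mul_nonneg hE hf hf₀ hfr hx hle), abs_of_nonneg ht,
    mul_comm, ← hlog]
  simpa only [hlog] using integral_log_norm_sub_sub_mul_le hE hf hf₀ hfr hx hle

end LogPotential

section DilationPairing

/-- The increment of `log ‖x - y‖` when `x` is moved from `exp (-t) • x` to `exp t • x`. -/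
noncomputable def dilationIncr {E : Type*} [NormedAddCommGroup E] [NormedSpace ℝ E] (t : ℝ)
    (x y : E) : ℝ :=
  log ‖exp t • x - y‖ - log ‖exp (-t) • x - y‖

lemma dilationIncr_add_swap {E : Type*} [NormedAddCommGroup E] [NormedSpace ℝ E] {t : ℝ}
    {x y : E} (h : exp t • x ≠ y) (h' : exp (-t) • x ≠ y) :
    dilationIncr t x y + dilationIncr t y x = 2 * t := by
  have hswap (s : ℝ) (hs : exp s • x ≠ y) :
      log ‖exp (-s) • y - x‖ = log ‖exp s • x - y‖ - s := by
    have hfactor : exp (-s) • y - x = exp (-s) • (y - exp s • x) := by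
      rw [smul_sub, smul_smul, ← exp_add, neg_add_cancel, exp_zero, one_smul]
    rw [hfactor, norm_exp_smul, log_mul (exp_ne_zero _) (norm_sub_pos_iff.2 hs.symm).ne', log_exp,
      norm_sub_rev]
    ring
  have hx := hswap t h
  have hy := hswap (-t) h'
  rw [neg_neg] at hy
  rw [dilationIncr, dilationIncr, hx, hy]
  ring

variable {E : Type*} [NormedAddCommGroup E] [InnerProductSpace ℝ E] [FiniteDimensional ℝ E]
  [MeasurableSpace E] [BorelSpace E] {f g h : E → ℝ} {t : ℝ}

/-- The increment of the mutual logarithmic energy `∬ log ‖x - y‖` of the mass distributions with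
densities `h` and `f`, when the first is moved by dilations from the factor `exp (-t)` to
`exp t`. -/
noncomputable def dilationPairing (t : ℝ) (h f : E → ℝ) : ℝ :=
  ∫ x, ∫ y, dilationIncr t x y * (h x * f y)

lemma integrable_dilationIncr_mul (hE : 2 ≤ Module.finrank ℝ E) (hf : Integrable f)
    (hfr : Function.FactorsThrough f norm) (t : ℝ) (x : E) :
    Integrable fun y => dilationIncr t x y * f y := by
  rcases eq_or_ne x 0 with rfl | hx
  · simp [dilationIncr]
  · exact integrable_log_norm_sub_sub_mul hE hf hfr (smul_ne_zero (exp_ne_zero _) hx)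
      (smul_ne_zero (exp_ne_zero _) hx)

lemma integral_abs_dilationIncr_mul_le (hE : 2 ≤ Module.finrank ℝ E) (hf : Integrable f)
    (hfr : Function.FactorsThrough f norm) (t : ℝ) (x : E) :
    ∫ y, |dilationIncr t x y * f y| ≤ (|2 * t| + 2 * log 2) * ∫ y, |f y| := by
  rcases eq_or_ne x 0 with rfl | hx
  · have : 0 ≤ ∫ y, |f y| := integral_nonneg fun y => abs_nonneg _
    simp only [dilationIncr, smul_zero, sub_self, zero_mul, abs_zero, integral_zero]
    positivity
  have hratio : log (‖exp t • x‖ / ‖exp (-t) • x‖) = 2 * t := by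
    rw [norm_exp_smul, norm_exp_smul, mul_div_mul_right _ _ (norm_ne_zero_iff.2 hx), ← exp_sub,
      log_exp]
    ring
  rw [← hratio]
  exact integral_abs_log_norm_sub_sub_mul_le hE hf hfr (smul_ne_zero (exp_ne_zero _) hx)
    (smul_ne_zero (exp_ne_zero _) hx)

lemma integral_dilationIncr_mul_nonneg (hE : 2 ≤ Module.finrank ℝ E) (hf : Integrable f)
    (hf₀ : ∀ y, 0 ≤ f y) (hfr : Function.FactorsThrough f norm) (ht : 0 ≤ t) (x : E) :
    0 ≤ ∫ y, dilationIncr t x y * f y := by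
  rcases eq_or_ne x 0 with rfl | hx
  · simp [dilationIncr]
  refine integral_log_norm_sub_sub_mul_nonneg hE hf hf₀ hfr (smul_ne_zero (exp_ne_zero _) hx) ?_
  rw [norm_exp_smul, norm_exp_smul]
  gcongr
  linarith

lemma measurable_dilationIncr (t : ℝ) : Measurable fun z : E × E => dilationIncr t z.1 z.2 := by
  unfold dilationIncr
  fun_prop

lemma integrable_prod_dilationIncr_mul (hE : 2 ≤ Module.finrank ℝ E) (hh : Integrable h)
    (hf : Integrable f) (hfr : Function.FactorsThrough f norm) (t : ℝ) :
    Integrable (fun z : E × E => dilationIncr t z.1 z.2 * (h z.1 * f z.2))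
      (volume.prod volume) := by
  have hmeas : AEStronglyMeasurable
      (fun z : E × E => dilationIncr t z.1 z.2 * (h z.1 * f z.2)) (volume.prod volume) :=
    (measurable_dilationIncr t).aestronglyMeasurable.mul (hh.1.comp_fst.mul hf.1.comp_snd)
  refine (integrable_prod_iff hmeas).2 ⟨ae_of_all _ fun x => ?_, ?_⟩
  · simp_rw [mul_left_comm _ (h x)]
    exact (integrable_dilationIncr_mul hE hf hfr t x).const_mul _
  · refine (hh.norm.mul_const ((|2 * t| + 2 * log 2) * ∫ y, |f y|)).mono'
      hmeas.norm.integral_prod_right' (ae_of_all _ fun x => ?_)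
    rw [norm_of_nonneg (integral_nonneg fun y => norm_nonneg _)]
    simp_rw [mul_left_comm _ (h x), norm_mul (h x), integral_const_mul]
    gcongr
    exact integral_abs_dilationIncr_mul_le hE hf hfr t x

lemma dilationPairing_eq (t : ℝ) (h f : E → ℝ) :
    dilationPairing t h f = ∫ x, h x * ∫ y, dilationIncr t x y * f y := by
  simp_rw [dilationPairing, mul_left_comm _ (h _), integral_const_mul]

lemma integrable_mul_integral_dilationIncr_mul (hE : 2 ≤ Module.finrank ℝ E) (hh : Integrable h)
    (hf : Integrable f) (hfr : Function.FactorsThrough f norm) (t : ℝ) :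
    Integrable fun x => h x * ∫ y, dilationIncr t x y * f y := by
  simpa only [mul_left_comm _ (h _), integral_const_mul] using
    (integrable_prod_dilationIncr_mul hE hh hf hfr t).integral_prod_left

lemma dilationPairing_add_right (hE : 2 ≤ Module.finrank ℝ E) (hh : Integrable h)
    (hf : Integrable f) (hg : Integrable g) (hfr : Function.FactorsThrough f norm)
    (hgr : Function.FactorsThrough g norm) (t : ℝ) :
    dilationPairing t h (fun x => f x + g x) = dilationPairing t h f + dilationPairing t h g := by
  simp_rw [dilationPairing_eq, mul_add]
  rw [← integral_add (integrable_mul_integral_dilationIncr_mul hE hh hf hfr t)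
    (integrable_mul_integral_dilationIncr_mul hE hh hg hgr t)]
  refine integral_congr_ae (ae_of_all _ fun x => ?_)
  dsimp only
  rw [integral_add (integrable_dilationIncr_mul hE hf hfr t x)
    (integrable_dilationIncr_mul hE hg hgr t x), mul_add]

lemma dilationPairing_mono (hE : 2 ≤ Module.finrank ℝ E) (ht : 0 ≤ t) {h₁ h₂ f₁ f₂ : E → ℝ}
    (hh₁ : Integrable h₁) (hh₂ : Integrable h₂) (hf₁ : Integrable f₁) (hf₂ : Integrable f₂)
    (hf₁r : Function.FactorsThrough f₁ norm) (hf₂r : Function.FactorsThrough f₂ norm)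
    (hh₁₀ : ∀ x, 0 ≤ h₁ x) (hh : ∀ x, h₁ x ≤ h₂ x) (hf₂₀ : ∀ y, 0 ≤ f₂ y)
    (hf : ∀ y, f₁ y ≤ f₂ y) : dilationPairing t h₁ f₁ ≤ dilationPairing t h₂ f₂ := by
  rw [dilationPairing_eq, dilationPairing_eq]
  refine integral_mono (integrable_mul_integral_dilationIncr_mul hE hh₁ hf₁ hf₁r t)
    (integrable_mul_integral_dilationIncr_mul hE hh₂ hf₂ hf₂r t) fun x => ?_
  have hinner : ∫ y, dilationIncr t x y * f₁ y ≤ ∫ y, dilationIncr t x y * f₂ y := by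
    have hsub := integral_dilationIncr_mul_nonneg hE (hf₂.sub hf₁)
      (fun y => sub_nonneg.2 (hf y)) (fun _ _ hxy => congrArg₂ (· - ·) (hf₂r hxy) (hf₁r hxy)) ht x
    simp only [Pi.sub_apply, mul_sub] at hsub
    rwa [integral_sub (integrable_dilationIncr_mul hE hf₂ hf₂r t x)
      (integrable_dilationIncr_mul hE hf₁ hf₁r t x), sub_nonneg] at hsub
  exact (mul_le_mul_of_nonneg_left hinner (hh₁₀ x)).trans (mul_le_mul_of_nonneg_right (hh x)
    (integral_dilationIncr_mul_nonneg hE hf₂ hf₂₀ hf₂r ht x))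

lemma ae_prod_exp_smul_ne [Nontrivial E] (t : ℝ) :
    ∀ᵐ z : E × E ∂volume.prod volume, exp t • z.1 ≠ z.2 := by
  refine (Measure.ae_prod_mem_iff_ae_ae_mem
    (isClosed_eq (by fun_prop) (by fun_prop)).measurableSet.compl).2 (ae_of_all _ fun x => ?_)
  filter_upwards [Measure.ae_ne volume (exp t • x)] with y hy
  exact hy.symm

lemma dilationPairing_add_swap (hE : 2 ≤ Module.finrank ℝ E) (hh : Integrable h)
    (hf : Integrable f) (hhr : Function.FactorsThrough h norm)
    (hfr : Function.FactorsThrough f norm) (t : ℝ) :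
    dilationPairing t h f + dilationPairing t f h = 2 * t * ((∫ x, h x) * ∫ x, f x) := by
  have : Nontrivial E := Module.nontrivial_of_finrank_pos (R := ℝ) (two_pos.trans_le hE)
  have hhf := integrable_prod_dilationIncr_mul hE hh hf hfr t
  have hfh := integrable_prod_dilationIncr_mul hE hf hh hhr t
  have hfh' : Integrable (fun z : E × E => dilationIncr t z.2 z.1 * (f z.2 * h z.1))
    (volume.prod volume) := hfh.swap
  have hpair : dilationPairing t h f =
      ∫ z : E × E, dilationIncr t z.1 z.2 * (h z.1 * f z.2) ∂volume.prod volume :=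
    (integral_prod _ hhf).symm
  have hpair' : dilationPairing t f h =
      ∫ z : E × E, dilationIncr t z.2 z.1 * (f z.2 * h z.1) ∂volume.prod volume :=
    ((integral_prod_swap _).trans (integral_prod _ hfh)).symm
  rw [hpair, hpair', ← integral_add hhf hfh', ← integral_prod_mul, ← integral_const_mul]
  refine integral_congr_ae ?_
  filter_upwards [ae_prod_exp_smul_ne t, ae_prod_exp_smul_ne (-t)] with z hz hz'
  rw [← dilationIncr_add_swap hz hz']
  ring

lemma dilationPairing_self (hE : 2 ≤ Module.finrank ℝ E) (hf : Integrable f)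
    (hfr : Function.FactorsThrough f norm) (t : ℝ) :
    dilationPairing t f f = t * (∫ x, f x) ^ 2 := by
  linarith [dilationPairing_add_swap hE hf hf hfr hfr t]

lemma dilationPairing_eq_integral_logPotential (hE : 2 ≤ Module.finrank ℝ E) (hfc : Continuous f)
    (hf : Integrable f) (hfr : Function.FactorsThrough f norm) (t : ℝ) (h : E → ℝ) :
    dilationPairing t h f =
      ∫ x, (logPotential f (exp (-t) • x) - logPotential f (exp t • x)) * h x := by
  simp_rw [dilationPairing_eq, logPotential_sub_logPotential hE hfc hf hfr, mul_comm _ (h _)]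
  rfl

end DilationPairing

section Dilation

open scoped Topology

lemma hasDerivAt_integral_exp_sub_one_sub_mul {α : Type*} [MeasurableSpace α] {μ : Measure α}
    {K : ℝ} {a : ℝ → α → ℝ} {g : α → ℝ} (hg : Integrable g μ) (ha : ∀ t x, |a t x| ≤ K * |t|) :
    HasDerivAt (fun t => ∫ x, (exp (a t x) - 1 - a t x) * g x ∂μ) 0 0 := by
  have hsmall : ∀ᶠ t : ℝ in 𝓝 0, K * |t| < 1 := by
    refine ContinuousAt.eventually_lt (by fun_prop) continuousAt_const ?_
    simp
  suffices hO : (fun t => ∫ x, (exp (a t x) - 1 - a t x) * g x ∂μ) =O[𝓝 0]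
      fun t => ‖t - 0‖ ^ 2 by
    simpa using (hO.hasFDerivAt (𝕜 := ℝ) one_lt_two).hasDerivAt
  refine .of_bound (K ^ 2 * ∫ x, |g x| ∂μ) ?_
  filter_upwards [hsmall] with t ht
  calc ‖∫ x, (exp (a t x) - 1 - a t x) * g x ∂μ‖ ≤ ∫ x, (K * |t|) ^ 2 * |g x| ∂μ := by
        refine norm_integral_le_of_norm_le (hg.abs.const_mul _) (ae_of_all _ fun x => ?_)
        rw [norm_mul, norm_eq_abs, norm_eq_abs]
        gcongr
        exact (abs_exp_sub_one_sub_id_le ((ha t x).trans ht.le)).trans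
          (sq_le_sq' (neg_le_of_abs_le (ha t x)) (le_of_abs_le (ha t x)))
    _ = K ^ 2 * (∫ x, |g x| ∂μ) * ‖‖t - 0‖ ^ 2‖ := by
        rw [integral_const_mul, sub_zero, norm_pow, norm_norm, norm_eq_abs]
        ring

variable {E : Type*} [NormedAddCommGroup E] [NormedSpace ℝ E] [FiniteDimensional ℝ E]
  [MeasurableSpace E] [BorelSpace E] {μ : Measure E} [μ.IsAddHaarMeasure] {K : ℝ}

lemma hasDerivAt_integral_mul_of_dilation {a : ℝ → E → ℝ} {g : E → ℝ} (hg : Integrable g μ)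
    (ham : ∀ t, AEStronglyMeasurable (a t) μ) (ha : ∀ t x, |a t x| ≤ K * |t|)
    (hag : ∀ t x, g (exp t • x) = exp (a t x) * g x) :
    HasDerivAt (fun t => ∫ x, a t x * g x ∂μ) (-(Module.finrank ℝ E : ℝ) * ∫ x, g x ∂μ) 0 := by
  set N : ℝ := (Module.finrank ℝ E : ℝ)
  have hag_int (t : ℝ) : Integrable (fun x => a t x * g x) μ :=
    hg.bdd_mul (ham t) (ae_of_all _ (ha t))
  have hexp_int (t : ℝ) : Integrable (fun x => exp (a t x) * g x) μ := by
    simpa only [hag] using hg.comp_smul (exp_ne_zero t)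
  have hscale (t : ℝ) : ∫ x, exp (a t x) * g x ∂μ = exp (-N * t) * ∫ x, g x ∂μ := by
    simp_rw [← hag]
    rw [Measure.integral_comp_smul_of_nonneg μ g _ (hR := exp_nonneg t), ← exp_nat_mul, ← exp_neg,
      neg_mul, smul_eq_mul]
  have hmain : HasDerivAt (fun t => (exp (-N * t) - 1) * ∫ x, g x ∂μ) (-N * ∫ x, g x ∂μ) 0 := by
    simpa using ((((hasDerivAt_id (0 : ℝ)).const_mul (-N)).exp.sub_const 1).mul_const
      (∫ x, g x ∂μ))
  have hdiff := hmain.sub (hasDerivAt_integral_exp_sub_one_sub_mul hg ha)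
  rw [sub_zero] at hdiff
  refine hdiff.congr_of_eventuallyEq (Eventually.of_forall fun t => ?_)
  have hsub_int : Integrable (fun x => exp (a t x) * g x - g x) μ := (hexp_int t).sub hg
  simp only [Pi.sub_apply, sub_mul, one_mul]
  rw [integral_sub hsub_int (hag_int t), integral_sub (hexp_int t) hg, hscale]
  ring

lemma hasDerivAt_integral_dilation_sub_mul {u : E → ℝ} {d q : ℝ} (hd : d ≠ 0)
    (hum : Measurable u) (hu : ∀ t x, |u (exp t • x) - u x| ≤ K * |t|)
    (hg : Integrable (fun x => ‖x‖ ^ q * exp (d * u x)) μ) :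
    HasDerivAt (fun t => ∫ x, (u (exp t • x) - u x) * (‖x‖ ^ q * exp (d * u x)) ∂μ)
      (-((Module.finrank ℝ E + q) / d) * ∫ x, ‖x‖ ^ q * exp (d * u x) ∂μ) 0 := by
  have hdil (t : ℝ) : AEStronglyMeasurable (fun x => u (exp t • x) - u x) μ :=
    ((hum.comp (measurable_const_smul _)).sub hum).aestronglyMeasurable
  have hint (t : ℝ) : Integrable
      (fun x => (u (exp t • x) - u x) * (‖x‖ ^ q * exp (d * u x))) μ :=
    hg.bdd_mul (hdil t) (ae_of_all _ (hu t))
  have hvirial := hasDerivAt_integral_mul_of_dilation (K := |q| + |d| * K)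
    (a := fun t x => q * t + d * (u (exp t • x) - u x)) hg
    (fun t => aestronglyMeasurable_const.add ((hdil t).const_mul d)) (fun t x => ?_) fun t x => ?_
  · have hlinear := ((hasDerivAt_id (0 : ℝ)).const_mul q).mul_const
      (∫ x, ‖x‖ ^ q * exp (d * u x) ∂μ)
    refine (((hvirial.sub hlinear).div_const d).congr_deriv ?_).congr_of_eventuallyEq
      (Eventually.of_forall fun t => ?_)
    · ring
    · simp only [Pi.sub_apply, add_mul, id]
      simp_rw [mul_assoc d]
      rw [integral_add (hg.const_mul _) ((hint t).const_mul d), integral_const_mul,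
        integral_const_mul, add_sub_cancel_left, mul_div_cancel_left₀ _ hd]
  · calc |q * t + d * (u (exp t • x) - u x)| ≤ |q| * |t| + |d| * (K * |t|) := by
          refine (abs_add_le _ _).trans ?_
          rw [abs_mul, abs_mul]
          gcongr
          exact hu t x
      _ = (|q| + |d| * K) * |t| := by ring
  · have hsplit : exp (d * u (exp t • x)) = exp (d * (u (exp t • x) - u x)) * exp (d * u x) := by
      rw [← exp_add, ← mul_add, sub_add_cancel]
    rw [norm_exp_smul, mul_rpow (exp_nonneg t) (norm_nonneg x), ← exp_mul, exp_add, mul_comm q,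
      hsplit]
    ring

end Dilation

section DilationPairingDerivative

lemma le_of_hasDerivAt_of_mul_le {F : ℝ → ℝ} {F' m : ℝ} (hF : HasDerivAt F F' 0) (hF₀ : F 0 = 0)
    (hm : ∀ t, 0 < t → t * m ≤ F t) : m ≤ F' := by
  refine ge_of_tendsto hF.tendsto_slope_zero_right ?_
  filter_upwards [self_mem_nhdsWithin] with t ht
  rw [zero_add, hF₀, sub_zero, smul_eq_mul, ← div_eq_inv_mul, le_div_iff₀' ht]
  exact hm t ht

variable {E : Type*} [NormedAddCommGroup E] [InnerProductSpace ℝ E] [FiniteDimensional ℝ E]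
  [MeasurableSpace E] [BorelSpace E] {g h : E → ℝ} {c t : ℝ}

lemma dilationPairing_add_right_add_dilationPairing_add_right (hE : 2 ≤ Module.finrank ℝ E)
    (hg : Integrable g) (hh : Integrable h) (hgr : Function.FactorsThrough g norm)
    (hhr : Function.FactorsThrough h norm) (t : ℝ) :
    dilationPairing t g (fun x => g x + h x) + dilationPairing t h (fun x => g x + h x) =
      t * ((∫ x, g x) + ∫ x, h x) ^ 2 := by
  rw [dilationPairing_add_right hE hg hg hh hgr hhr, dilationPairing_add_right hE hh hg hh hgr hhr,
    dilationPairing_self hE hg hgr, dilationPairing_self hE hh hhr]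
  linarith [dilationPairing_add_swap hE hg hh hgr hhr t]

lemma mul_sq_integral_add_sq_integral_min_le_dilationPairing (hE : 2 ≤ Module.finrank ℝ E)
    (hg : Integrable g) (hh : Integrable h) (hgr : Function.FactorsThrough g norm)
    (hhr : Function.FactorsThrough h norm) (hg₀ : ∀ x, 0 ≤ g x) (hh₀ : ∀ x, 0 ≤ h x)
    (ht : 0 ≤ t) :
    t * ((∫ x, g x) ^ 2 + (∫ x, min (g x) (h x)) ^ 2) ≤
      dilationPairing t g fun x => g x + h x := by
  have hmin : Integrable fun x => min (g x) (h x) := hg.inf hh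
  have hminr : Function.FactorsThrough (fun x => min (g x) (h x)) norm :=
    fun _ _ hxy => congrArg₂ min (hgr hxy) (hhr hxy)
  have hmono := dilationPairing_mono hE ht hmin hg hmin hh hminr hhr
    (fun x => le_min (hg₀ x) (hh₀ x)) (fun _ => min_le_left _ _) hh₀ fun _ => min_le_right _ _
  rw [dilationPairing_self hE hmin hminr] at hmono
  rw [dilationPairing_add_right hE hg hg hh hgr hhr, dilationPairing_self hE hg hgr]
  linarith

lemma mul_sq_integral_add_integral_eq_of_hasDerivAt (hE : 2 ≤ Module.finrank ℝ E)
    (hg : Integrable g) (hh : Integrable h) (hgr : Function.FactorsThrough g norm)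
    (hhr : Function.FactorsThrough h norm) {a b : ℝ}
    (hga : HasDerivAt (fun t => c * dilationPairing t g fun x => g x + h x) a 0)
    (hhb : HasDerivAt (fun t => c * dilationPairing t h fun x => g x + h x) b 0) :
    c * ((∫ x, g x) + ∫ x, h x) ^ 2 = a + b := by
  have hadd := hga.add hhb
  simp only [Pi.add_def, ← mul_add,
    dilationPairing_add_right_add_dilationPairing_add_right hE hg hh hgr hhr] at hadd
  refine HasDerivAt.unique ?_ hadd
  simpa using ((hasDerivAt_id (0 : ℝ)).mul_const (((∫ x, g x) + ∫ x, h x) ^ 2)).const_mul c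

lemma mul_sq_integral_lt_of_hasDerivAt (hE : 2 ≤ Module.finrank ℝ E) (hc : 0 < c)
    (hg : Integrable g) (hh : Integrable h) (hgr : Function.FactorsThrough g norm)
    (hhr : Function.FactorsThrough h norm) (hg₀ : ∀ x, 0 ≤ g x) (hh₀ : ∀ x, 0 ≤ h x)
    (hmin : 0 < ∫ x, min (g x) (h x)) {a : ℝ}
    (hga : HasDerivAt (fun t => c * dilationPairing t g fun x => g x + h x) a 0) :
    c * (∫ x, g x) ^ 2 < a := by
  have hle : c * ((∫ x, g x) ^ 2 + (∫ x, min (g x) (h x)) ^ 2) ≤ a := by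
    refine le_of_hasDerivAt_of_mul_le hga (by simp [dilationPairing, dilationIncr]) fun t ht => ?_
    rw [mul_left_comm]
    gcongr
    exact mul_sq_integral_add_sq_integral_min_le_dilationPairing hE hg hh hgr hhr hg₀ hh₀ ht.le
  refine lt_of_lt_of_le ?_ hle
  gcongr
  linarith [sq_pos_of_pos hmin]

end DilationPairingDerivative

section WeightedVolumeDensity

variable {E : Type*} [NormedAddCommGroup E] [NormedSpace ℝ E] {u : E → ℝ} {q r : ℝ}

/-- The volume density `exp (n * u)` of the conformal metric with factor `exp (2 * u)` in dimension
`n`, weighted by `‖x‖ ^ q`. -/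
noncomputable def weightedVolumeDensity (u : E → ℝ) (q : ℝ) (x : E) : ℝ :=
  ‖x‖ ^ q * exp (Module.finrank ℝ E * u x)

lemma weightedVolumeDensity_nonneg (u : E → ℝ) (q : ℝ) (x : E) :
    0 ≤ weightedVolumeDensity u q x := by
  unfold weightedVolumeDensity
  positivity

lemma weightedVolumeDensity_pos (u : E → ℝ) (q : ℝ) {x : E} (hx : x ≠ 0) :
    0 < weightedVolumeDensity u q x :=
  mul_pos (rpow_pos_of_pos (norm_pos_iff.2 hx) q) (exp_pos _)

lemma continuous_weightedVolumeDensity (hu : Continuous u) (hq : 0 ≤ q) :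
    Continuous (weightedVolumeDensity u q) :=
  (continuous_norm.rpow_const fun _ => .inr hq).mul (by fun_prop)

lemma factorsThrough_weightedVolumeDensity (hur : Function.FactorsThrough u norm) (q : ℝ) :
    Function.FactorsThrough (weightedVolumeDensity u q) norm := fun x y hxy => by
  rw [weightedVolumeDensity, weightedVolumeDensity, hxy, hur hxy]

variable [Nontrivial E] [MeasurableSpace E] {μ : Measure E} [μ.IsOpenPosMeasure]

lemma integral_weightedVolumeDensity_pos (hu : Continuous u) (hq : 0 ≤ q)
    (hg : Integrable (weightedVolumeDensity u q) μ) : 0 < ∫ x, weightedVolumeDensity u q x ∂μ := by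
  obtain ⟨x, hx⟩ := exists_ne (0 : E)
  exact integral_pos_of_integrable_nonneg_nonzero (continuous_weightedVolumeDensity hu hq) hg
    (weightedVolumeDensity_nonneg u q) (weightedVolumeDensity_pos u q hx).ne'

lemma integral_min_weightedVolumeDensity_pos (hu : Continuous u) (hr : 0 ≤ r)
    (hq : 0 ≤ q) (hgr : Integrable (weightedVolumeDensity u r) μ)
    (hgq : Integrable (weightedVolumeDensity u q) μ) :
    0 < ∫ x, min (weightedVolumeDensity u r x) (weightedVolumeDensity u q x) ∂μ := by
  obtain ⟨x, hx⟩ := exists_ne (0 : E)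
  exact integral_pos_of_integrable_nonneg_nonzero
    ((continuous_weightedVolumeDensity hu hr).min (continuous_weightedVolumeDensity hu hq))
    (hgr.inf hgq)
    (fun x => le_min (weightedVolumeDensity_nonneg u r x) (weightedVolumeDensity_nonneg u q x))
    (lt_min (weightedVolumeDensity_pos u r hx) (weightedVolumeDensity_pos u q hx)).ne'

end WeightedVolumeDensity

section Pohozaev

variable {E : Type*} [NormedAddCommGroup E] [InnerProductSpace ℝ E] [FiniteDimensional ℝ E]
  [MeasurableSpace E] [BorelSpace E] {f u : E → ℝ} {c C q r : ℝ}

lemma hasDerivAt_mul_dilationPairing (hE : 2 ≤ Module.finrank ℝ E) (hfc : Continuous f)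
    (hf : Integrable f) (hf₀ : ∀ y, 0 ≤ f y) (hfr : Function.FactorsThrough f norm)
    (hum : Measurable u) (hu : ∀ x, u x = c * logPotential f x + C)
    (hg : Integrable (weightedVolumeDensity u q)) :
    HasDerivAt (fun t => c * dilationPairing t (weightedVolumeDensity u q) f)
      (2 * (1 + q / Module.finrank ℝ E) * ∫ x, weightedVolumeDensity u q x) 0 := by
  have hN : (Module.finrank ℝ E : ℝ) ≠ 0 := by positivity
  have hlip (t : ℝ) (x : E) : |u (exp t • x) - u x| ≤ (|c| * ∫ y, f y) * |t| := by
    rw [hu, hu x, add_sub_add_right_eq_sub, ← mul_sub, abs_mul, mul_assoc]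
    gcongr
    exact abs_logPotential_exp_smul_sub_le hE hfc hf hf₀ hfr t x
  set φ : ℝ → ℝ := fun t => ∫ x, (u (exp t • x) - u x) * weightedVolumeDensity u q x with hφ
  have hφ_int (t : ℝ) : Integrable fun x => (u (exp t • x) - u x) * weightedVolumeDensity u q x :=
    hg.bdd_mul ((hum.comp (measurable_const_smul _)).sub hum).aestronglyMeasurable
      (ae_of_all _ (hlip t))
  have hφ' : HasDerivAt φ (-((Module.finrank ℝ E + q) / Module.finrank ℝ E) *
      ∫ x, weightedVolumeDensity u q x) 0 :=
    hasDerivAt_integral_dilation_sub_mul hN hum hlip hg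
  have hpair (t : ℝ) : c * dilationPairing t (weightedVolumeDensity u q) f =
      φ (-t) - φ t := by
    rw [dilationPairing_eq_integral_logPotential hE hfc hf hfr, ← integral_const_mul,
      hφ, ← integral_sub (hφ_int _) (hφ_int _)]
    refine integral_congr_ae (ae_of_all _ fun x => ?_)
    simp only [hu]
    ring
  simp_rw [hpair]
  refine ((hφ'.comp_of_eq 0 (hasDerivAt_neg 0) neg_zero.symm).sub hφ').congr_deriv ?_
  field_simp
  ring

lemma hasDerivAt_mul_dilationPairing_weightedVolumeDensity_add (hE : 2 ≤ Module.finrank ℝ E)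
    (hu : Continuous u) (hur : Function.FactorsThrough u norm) (hr : 0 ≤ r) (hq : 0 ≤ q)
    (hgr : Integrable (weightedVolumeDensity u r)) (hgq : Integrable (weightedVolumeDensity u q))
    (hC : ∀ x, u x =
      c * logPotential (fun y => weightedVolumeDensity u r y + weightedVolumeDensity u q y) x + C)
    {s : ℝ} (hgs : Integrable (weightedVolumeDensity u s)) :
    HasDerivAt (fun t => c * dilationPairing t (weightedVolumeDensity u s)
        fun x => weightedVolumeDensity u r x + weightedVolumeDensity u q x)
      (2 * (1 + s / Module.finrank ℝ E) * ∫ x, weightedVolumeDensity u s x) 0 :=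
  hasDerivAt_mul_dilationPairing hE
    ((continuous_weightedVolumeDensity hu hr).add (continuous_weightedVolumeDensity hu hq))
    (hgr.add hgq)
    (fun x => add_nonneg (weightedVolumeDensity_nonneg u r x) (weightedVolumeDensity_nonneg u q x))
    (fun _ _ hxy => congrArg₂ (· + ·) (factorsThrough_weightedVolumeDensity hur r hxy)
      (factorsThrough_weightedVolumeDensity hur q hxy)) hu.measurable hC hgs

lemma pohozaev_identity (hE : 2 ≤ Module.finrank ℝ E)
    (hu : Continuous u) (hur : Function.FactorsThrough u norm) (hr : 0 ≤ r) (hq : 0 ≤ q)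
    (hgr : Integrable (weightedVolumeDensity u r)) (hgq : Integrable (weightedVolumeDensity u q))
    (hC : ∀ x, u x =
      c * logPotential (fun y => weightedVolumeDensity u r y + weightedVolumeDensity u q y) x + C) :
    c * ((∫ x, weightedVolumeDensity u r x) + ∫ x, weightedVolumeDensity u q x) ^ 2 =
      2 * (1 + r / Module.finrank ℝ E) * (∫ x, weightedVolumeDensity u r x) +
        2 * (1 + q / Module.finrank ℝ E) * ∫ x, weightedVolumeDensity u q x :=
  mul_sq_integral_add_integral_eq_of_hasDerivAt hE hgr hgq
    (factorsThrough_weightedVolumeDensity hur r) (factorsThrough_weightedVolumeDensity hur q)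
    (hasDerivAt_mul_dilationPairing_weightedVolumeDensity_add hE hu hur hr hq hgr hgq hC hgr)
    (hasDerivAt_mul_dilationPairing_weightedVolumeDensity_add hE hu hur hr hq hgr hgq hC hgq)

lemma mul_integral_weightedVolumeDensity_lt (hE : 2 ≤ Module.finrank ℝ E) (hc : 0 < c)
    (hu : Continuous u) (hur : Function.FactorsThrough u norm) (hr : 0 ≤ r) (hq : 0 ≤ q)
    (hgr : Integrable (weightedVolumeDensity u r)) (hgq : Integrable (weightedVolumeDensity u q))
    (hC : ∀ x, u x =
      c * logPotential (fun y => weightedVolumeDensity u r y + weightedVolumeDensity u q y) x + C) :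
    c * (∫ x, weightedVolumeDensity u r x) < 2 * (1 + r / Module.finrank ℝ E) := by
  have : Nontrivial E := Module.nontrivial_of_finrank_pos (R := ℝ) (two_pos.trans_le hE)
  have hlt := mul_sq_integral_lt_of_hasDerivAt hE hc hgr hgq
    (factorsThrough_weightedVolumeDensity hur r) (factorsThrough_weightedVolumeDensity hur q)
    (weightedVolumeDensity_nonneg u r) (weightedVolumeDensity_nonneg u q)
    (integral_min_weightedVolumeDensity_pos hu hr hq hgr hgq)
    (hasDerivAt_mul_dilationPairing_weightedVolumeDensity_add hE hu hur hr hq hgr hgq hC hgr)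
  rw [sq, ← mul_assoc] at hlt
  exact lt_of_mul_lt_mul_right hlt (integral_weightedVolumeDensity_pos hu hr hgr).le

lemma max_lt_add_and_add_lt_of_sq_eq {a b p : ℝ} (hp : 0 < p) (ha : 0 < a) (ha₂ : a < 2)
    (hb : 0 < b) (h : (a + b) ^ 2 = 2 * a + 2 * (1 + p) * b) :
    max 2 (2 * p) < a + b ∧ a + b < 2 + 2 * p := by
  have htwo : 2 < a + b := by nlinarith [mul_pos hp hb]
  have htwo_mul : 0 < (a + b - 2) * (a + b - 2 * p) := by nlinarith [mul_pos hp (sub_pos.2 ha₂)]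
  refine ⟨max_lt htwo (sub_pos.1 (pos_of_mul_pos_right htwo_mul (sub_pos.2 htwo).le)), ?_⟩
  nlinarith [mul_pos hp ha]

end Pohozaev

lemma sphereVol_pos (n : ℕ) : 0 < sphereVol n := by
  have := Gamma_pos_of_pos (show 0 < (n + 1 : ℝ) / 2 by positivity)
  unfold sphereVol
  positivity

theorem beta_range_radial_general {E : Type*} [NormedAddCommGroup E] [InnerProductSpace ℝ E]
    [FiniteDimensional ℝ E] [MeasurableSpace E] [BorelSpace E] {n : ℕ}
    (hE : Module.finrank ℝ E = n) (hn : 2 ≤ n) {p c C : ℝ} (hp : 0 < p) (hc : 0 < c) {u : E → ℝ}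
    (hu : Continuous u) (hradial : ∀ x y, ‖x‖ = ‖y‖ → u x = u y)
    (hint : Integrable fun x => (1 + ‖x‖ ^ (n * p)) * exp (n * u x))
    (hC : ∀ x, u x =
      c * (∫ y, log (‖y‖ / ‖x - y‖) * ((1 + ‖y‖ ^ (n * p)) * exp (n * u y))) + C) :
    max 2 (2 * p) < c * (∫ x, (1 + ‖x‖ ^ (n * p)) * exp (n * u x)) ∧
      c * (∫ x, (1 + ‖x‖ ^ (n * p)) * exp (n * u x)) < 2 + 2 * p := by
  have hur : Function.FactorsThrough u norm := fun x y => hradial x y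
  have hn₀ : (n : ℝ) ≠ 0 := by positivity
  have hq : 0 ≤ n * p := by positivity
  have : Nontrivial E := Module.nontrivial_of_finrank_pos (R := ℝ) (by omega)
  have hsum (x : E) : (1 + ‖x‖ ^ (n * p)) * exp (n * u x) =
      weightedVolumeDensity u 0 x + weightedVolumeDensity u (n * p) x := by
    simp only [weightedVolumeDensity, hE, rpow_zero, add_mul]
  simp only [hsum] at hint hC ⊢
  obtain ⟨hg₀, hg⟩ := (integrable_add_iff_of_nonneg
    (continuous_weightedVolumeDensity hu le_rfl).aestronglyMeasurable
    (ae_of_all _ (weightedVolumeDensity_nonneg u 0))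
    (ae_of_all _ (weightedVolumeDensity_nonneg u (n * p)))).1 hint
  have hpohozaev := pohozaev_identity (hE ▸ hn) hu hur le_rfl hq hg₀ hg hC
  have hlt := mul_integral_weightedVolumeDensity_lt (hE ▸ hn) hc hu hur le_rfl hq hg₀ hg hC
  rw [hE, zero_div, mul_div_cancel_left₀ p hn₀] at hpohozaev
  rw [integral_add hg₀ hg, mul_add]
  exact max_lt_add_and_add_lt_of_sq_eq hp
    (mul_pos hc (integral_weightedVolumeDensity_pos hu le_rfl hg₀)) (by simpa using hlt)
    (mul_pos hc (integral_weightedVolumeDensity_pos hu hq hg))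
    (by linear_combination c * hpohozaev)

theorem beta_range_radial (p : ℝ) (hp : 0 < p) (n : ℕ) (hn : 2 ≤ n) (heven : Even n)
    (u : EuclideanSpace ℝ (Fin n) → ℝ) (hu : ContDiff ℝ (⊤ : ℕ∞) u)
    (hradial : ∀ x y : EuclideanSpace ℝ (Fin n), ‖x‖ = ‖y‖ → u x = u y)
    (hint : Integrable (fun x : EuclideanSpace ℝ (Fin n) =>
      (1 + ‖x‖ ^ ((n : ℝ) * p)) * Real.exp (n * u x)))
    (C : ℝ)
    (hC : ∀ x, u x = (2 / ((Nat.factorial (n - 1) : ℝ) * sphereVol n)) *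
      (∫ y, Real.log (‖y‖ / ‖x - y‖) *
        ((1 + ‖y‖ ^ ((n : ℝ) * p)) * Real.exp (n * u y))) + C)
    (β : ℝ)
    (hβ : β = (2 / ((Nat.factorial (n - 1) : ℝ) * sphereVol n)) *
      ∫ x, (1 + ‖x‖ ^ ((n : ℝ) * p)) * Real.exp (n * u x)) :
    max 2 (2 * p) < β ∧ β < 2 + 2 * p := by
  have hc : 0 < 2 / ((Nat.factorial (n - 1) : ℝ) * sphereVol n) := by
    have := sphereVol_pos n
    positivity
  rw [hβ]
  exact beta_range_radial_general finrank_euclideanSpace_fin hn hp hc hu.continuous hradial hint hC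
end
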